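/- arXiv:1408.0846 — 3 statements merged into one kernel-verified Lean document; each statement's English description precedes it below -/
import Mathlib

section
/- Let k ≥ 4. Every k-Ore graph G is k-critical, satisfies 2(k−1)|E(G)| = (k+1)(k−2)|V(G)| − k(k−3), and has |V(G)| ≡ 1 (mod k−1). -/
open SimpleGraph

section Defs

variable {V : Type*}

instance instDecidableInduceAdj (G : SimpleGraph V) [DecidableRel G.Adj] (s : Set V) :
    DecidableRel (G.induce s).Adj := fun a b => ‹DecidableRel G.Adj› a.1 b.1

instance instDecidableDeleteEdgeAdj [DecidableEq V] (G : SimpleGraph V) [DecidableRel G.Adj]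
    (e : Sym2 V) : DecidableRel (G.deleteEdges {e}).Adj := fun a b =>
  decidable_of_iff (G.Adj a b ∧ ¬s(a, b) = e) (by simp)

/-- The `k`-potential of a vertex subset `R` of a graph `G`:
`ρ_{k,G}(R) = (k+1)(k-2)|R| - 2(k-1)|E(G[R])|`, where `G[R]` is the induced subgraph. -/
def potential (k : ℕ) (G : SimpleGraph V) [Fintype V] [DecidableEq V] [DecidableRel G.Adj]
    (R : Finset V) : ℤ :=
  ((k : ℤ) + 1) * ((k : ℤ) - 2) * R.card
    - 2 * ((k : ℤ) - 1) * ((G.induce (R : Set V)).edgeFinset.card)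

/-- A graph is `k`-critical if its chromatic number is `k` and every proper subgraph is
`(k-1)`-colorable. -/
def IsKCritical (k : ℕ) (G : SimpleGraph V) : Prop :=
  G.chromaticNumber = k ∧ ∀ H : SimpleGraph V, H < G → H.Colorable (k - 1)

/-- The graph underlying the DHGO-composition: delete the edge `xy` from `G₁`, split the vertex
`z` of `G₂` into two vertices, identify `x` with the half of `z` joined to the neighbors of `z`
lying in `P` and identify `y` with the half joined to the remaining neighbors of `z`. -/
def dhgoGraph {V₁ V₂ : Type*} (G₁ : SimpleGraph V₁) (G₂ : SimpleGraph V₂)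
    (x y : V₁) (z : V₂) (P : Set V₂) :
    SimpleGraph (V₁ ⊕ {w : V₂ // w ≠ z}) :=
  SimpleGraph.fromRel (fun a b =>
    match a, b with
    | Sum.inl a, Sum.inl b => G₁.Adj a b ∧ s(a, b) ≠ s(x, y)
    | Sum.inl a, Sum.inr b => (a = x ∧ (b : V₂) ∈ P) ∨ (a = y ∧ (b : V₂) ∈ G₂.neighborSet z \ P)
    | Sum.inr a, Sum.inr b => G₂.Adj a b
    | _, _ => False)

/-- `G` is a DHGO-composition of `G₁` and `G₂`: some edge `xy` of `G₁` is deleted, some vertex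
`z` of `G₂` is split into two vertices of positive degree (its neighborhood is partitioned into
two nonempty parts `P` and `N(z) \ P`), and `x`, `y` are identified with the two halves of `z`. -/
def IsDHGO {V₁ V₂ U : Type*} (G : SimpleGraph U) (G₁ : SimpleGraph V₁) (G₂ : SimpleGraph V₂) :
    Prop :=
  ∃ (x y : V₁) (z : V₂) (P : Set V₂),
    G₁.Adj x y ∧ P ⊆ G₂.neighborSet z ∧ P.Nonempty ∧ (G₂.neighborSet z \ P).Nonempty ∧
    Nonempty (G ≃g dhgoGraph G₁ G₂ x y z P)

/-- `k`-Ore graphs on the canonical finite vertex types `Fin n`: graphs obtained from copies of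
`K_k` by a sequence of DHGO-compositions. -/
inductive IsOreFin (k : ℕ) : ∀ {n : ℕ}, SimpleGraph (Fin n) → Prop
  | complete {n : ℕ} {G : SimpleGraph (Fin n)}
      (h : Nonempty (G ≃g (⊤ : SimpleGraph (Fin k)))) : IsOreFin k G
  | comp {n₁ n₂ n : ℕ} {G₁ : SimpleGraph (Fin n₁)} {G₂ : SimpleGraph (Fin n₂)}
      {G : SimpleGraph (Fin n)} (h₁ : IsOreFin k G₁) (h₂ : IsOreFin k G₂)
      (h : IsDHGO G G₁ G₂) : IsOreFin k G

/-- A graph is a `k`-Ore graph if it is obtained from copies of `K_k` by a sequence of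
DHGO-compositions. -/
def IsKOre (k : ℕ) {V : Type*} (G : SimpleGraph V) : Prop :=
  ∃ (n : ℕ) (H : SimpleGraph (Fin n)), IsOreFin k H ∧ Nonempty (G ≃g H)

/-- `y_k = max {2k - 6, k² - 5k + 2}`. -/
def yk (k : ℕ) : ℤ := max (2 * (k : ℤ) - 6) ((k : ℤ) ^ 2 - 5 * (k : ℤ) + 2)

/-- A `k`-critical graph is `k`-extremal if `2(k-1)|E(G)| = (k+1)(k-2)|V(G)| - k(k-3)`. -/
def IsKExtremal (k : ℕ) {V : Type*} [Fintype V] [DecidableEq V] (G : SimpleGraph V)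
    [DecidableRel G.Adj] : Prop :=
  IsKCritical k G ∧
    2 * ((k : ℤ) - 1) * G.edgeFinset.card =
      ((k : ℤ) + 1) * ((k : ℤ) - 2) * Fintype.card V - (k : ℤ) * ((k : ℤ) - 3)

/-- A graph is 3-connected if it has more than 3 vertices and deleting any set of at most 2
vertices leaves it connected. -/
def IsThreeConnected {V : Type*} [Fintype V] (G : SimpleGraph V) : Prop :=
  3 < Fintype.card V ∧ ∀ s : Set V, s.ncard ≤ 2 → (G.induce sᶜ).Connected

/-- `Q` is a `k`-quasi-`xy`-vertex: `G[Q]` is `(k-1)`-colorable, every proper `(k-1)`-coloring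
of `G[Q]` gives `x` and `y` the same color, and for every edge `e` of `G[Q]` the graph
`G[Q] - e` has a proper `(k-1)`-coloring giving `x` and `y` different colors. -/
def IsQuasiVertex (k : ℕ) {V : Type*} [DecidableEq V] (G : SimpleGraph V) (x y : V)
    (Q : Set V) : Prop :=
  ∃ (hx : x ∈ Q) (hy : y ∈ Q),
    (G.induce Q).Colorable (k - 1) ∧
    (∀ C : (G.induce Q).Coloring (Fin (k - 1)), C ⟨x, hx⟩ = C ⟨y, hy⟩) ∧
    (∀ a b : Q, (G.induce Q).Adj a b →
      ∃ C : ((G.induce Q).deleteEdges {s(a, b)}).Coloring (Fin (k - 1)),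
        C ⟨x, hx⟩ ≠ C ⟨y, hy⟩)

/-- A set `S` of vertices is standard if `ρ_{k,G}(S) = (k+1)(k-2)`, `G` has a separating set
`{x,y} ⊆ S` such that `S - {x,y}` induces a component of `G - {x,y}`, and `S` is a
`k`-quasi-`xy`-vertex. -/
def IsStandardSet (k : ℕ) {V : Type*} [Fintype V] [DecidableEq V] (G : SimpleGraph V)
    [DecidableRel G.Adj] (S : Finset V) : Prop :=
  potential k G S = ((k : ℤ) + 1) * ((k : ℤ) - 2) ∧
  ∃ x y : V, x ≠ y ∧ x ∈ S ∧ y ∈ S ∧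
    ¬(G.induce ({x, y}ᶜ : Set V)).Connected ∧
    (G.induce ((S : Set V) \ {x, y})).Connected ∧
    (∀ a ∈ (S : Set V) \ {x, y}, ∀ b : V, G.Adj a b → b ∈ (S : Set V) ∪ {x, y}) ∧
    IsQuasiVertex k G x y (S : Set V)

end Defs

structure OreGood (m : ℕ) {V : Type*} (G : SimpleGraph V) : Prop where
  nc : ∀ φ : V → Fin m, ∃ a b, G.Adj a b ∧ φ a = φ b
  avoid : ∀ (v : V) (f : V → Fin m), (∀ c, ∃ u, G.Adj v u ∧ f u ≠ c) →
    ∃ φ : V → Fin m, (∀ a b, a ≠ v → b ≠ v → G.Adj a b → φ a ≠ φ b) ∧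
      ∀ u, G.Adj v u → φ u ≠ f u
  deg : ∀ v, ∃ w₁ w₂, w₁ ≠ w₂ ∧ G.Adj v w₁ ∧ G.Adj v w₂

theorem OreGood.iso {m : ℕ} {V W : Type*} {G : SimpleGraph V} {H : SimpleGraph W}
    (e : G ≃g H) (h : OreGood m H) : OreGood m G where
  nc φ := by
    obtain ⟨a, b, hab, hc⟩ := h.nc (φ ∘ e.symm)
    exact ⟨e.symm a, e.symm b, e.symm.map_adj_iff.2 hab, hc⟩
  avoid v f hf := by
    obtain ⟨φ, h1, h2⟩ := h.avoid (e v) (f ∘ e.symm) (by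
      intro c
      obtain ⟨u, hu, hne⟩ := hf c
      exact ⟨e u, e.map_adj_iff.2 hu, by simpa using hne⟩)
    refine ⟨φ ∘ e, fun a b ha hb hab => ?_, fun u hu => ?_⟩
    · exact h1 _ _ (by simpa using ha) (by simpa using hb) (e.map_adj_iff.2 hab)
    · simpa using h2 (e u) (e.map_adj_iff.2 hu)
  deg v := by
    obtain ⟨a, b, hab, h1, h2⟩ := h.deg (e v)
    refine ⟨e.symm a, e.symm b, by simpa using hab, ?_, ?_⟩
    · rw [← e.map_adj_iff]; simpa using h1
    · rw [← e.map_adj_iff]; simpa using h2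

theorem OreGood.edge {m : ℕ} (hm : 2 ≤ m) {V : Type*} {G : SimpleGraph V} (h : OreGood m G)
    {x y : V} (hxy : G.Adj x y) (c : Fin m) :
    ∃ φ : V → Fin m, φ x = c ∧ φ y = c ∧ ∀ a b, G.Adj a b → s(a, b) ≠ s(x, y) → φ a ≠ φ b := by
  classical
  have : Nontrivial (Fin m) := Fin.nontrivial_iff_two_le.2 hm
  obtain ⟨c', hc'⟩ := exists_ne c
  obtain ⟨w, hwy, hw⟩ : ∃ w, w ≠ y ∧ G.Adj x w := by
    obtain ⟨a, b, hab, h1, h2⟩ := h.deg x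
    by_cases ha : a = y
    · exact ⟨b, fun hb => hab (ha.trans hb.symm), h2⟩
    · exact ⟨a, ha, h1⟩
  obtain ⟨φ, h1, h2⟩ := h.avoid x (fun u => if u = y then c' else c) (by
    intro d
    by_cases hd : d = c
    · exact ⟨y, hxy, by simp [hd, hc']⟩
    · exact ⟨w, hw, by simp [hwy, Ne.symm hd]⟩)
  have key : ∀ a b, G.Adj a b → s(a, b) ≠ s(x, y) →
      Function.update φ x c a ≠ Function.update φ x c b := by
    intro a b hab hne
    by_cases ha : a = x
    · subst ha
      have hb : b ≠ a := hab.ne'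
      have hby : b ≠ y := by rintro rfl; exact hne rfl
      have := h2 b hab
      simp only [hby, if_false] at this
      simpa [hb] using this.symm
    · by_cases hb : b = x
      · subst hb
        have hay : a ≠ y := by rintro rfl; exact hne Sym2.eq_swap
        have := h2 a hab.symm
        simp only [hay, if_false] at this
        simpa [ha] using this
      · simpa [ha, hb] using h1 a b ha hb hab
  refine ⟨Function.update φ x c, by simp, ?_, key⟩
  obtain ⟨a, b, hab, hc⟩ := h.nc (Function.update φ x c)
  have : s(a, b) = s(x, y) := by
    by_contra hne
    exact key a b hab hne hc
  rw [Sym2.eq_iff] at this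
  rcases this with ⟨rfl, rfl⟩ | ⟨rfl, rfl⟩
  · rw [← hc]; simp
  · rw [hc]; simp

theorem OreGood.top {m : ℕ} (hm : 3 ≤ m) : OreGood m (⊤ : SimpleGraph (Fin (m + 1))) where
  nc φ := by
    obtain ⟨a, b, hab, h⟩ := Fintype.exists_ne_map_eq_of_card_lt φ (by simp)
    exact ⟨a, b, by simpa using hab, h⟩
  avoid v f hf := by
    classical
    have hall := (Finset.all_card_le_biUnion_card_iff_exists_injective
      (ι := {u : Fin (m+1) // u ≠ v}) (fun u => ({f u.1}ᶜ : Finset (Fin m)))).1 (by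
      intro s
      rcases s.eq_empty_or_nonempty with rfl | ⟨u, hu⟩
      · simp
      have hsub : ({f u.1}ᶜ : Finset (Fin m)) ⊆ s.biUnion (fun u => ({f u.1}ᶜ : Finset (Fin m))) :=
        Finset.subset_biUnion_of_mem (fun u => ({f u.1}ᶜ : Finset (Fin m))) hu
      have hcu : ({f u.1}ᶜ : Finset (Fin m)).card = m - 1 := by simp [Finset.card_compl]
      have hcard : Fintype.card {u : Fin (m+1) // u ≠ v} = m := by simp
      by_cases hs : s = Finset.univ
      · obtain ⟨w, hw, hne⟩ := hf (f u.1)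
        have : s.biUnion (fun u => ({f u.1}ᶜ : Finset (Fin m))) = Finset.univ := by
          apply Finset.eq_univ_of_forall
          intro c
          simp only [Finset.mem_biUnion, Finset.mem_compl, Finset.mem_singleton]
          by_cases hc : c = f u.1
          · exact ⟨⟨w, by simpa [eq_comm] using hw⟩, by simp [hs], by simpa [hc] using hne.symm⟩
          · exact ⟨u, hu, hc⟩
        rw [this, hs, Finset.card_univ, hcard]; simp
      · have := (Finset.card_lt_iff_ne_univ s).2 hs
        rw [hcard] at this
        have h2 := Finset.card_le_card hsub
        omega)
    obtain ⟨g, hg, hgm⟩ := hall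
    refine ⟨fun u => if h : u ≠ v then g ⟨u, h⟩ else ⟨0, by omega⟩, ?_, ?_⟩
    · intro a b ha hb hab h
      simp only [ha, hb, ne_eq, not_false_eq_true, dif_pos] at h
      have := hg h
      simp at this
      exact hab.ne this
    · intro u hu
      have huv : u ≠ v := hu.ne'
      have := hgm ⟨u, huv⟩
      simpa [huv] using this
  deg v := by
    have : 1 < (Finset.univ.erase v).card := by
      rw [Finset.card_erase_of_mem (Finset.mem_univ _)]; simp; omega
    obtain ⟨a, ha, b, hb, hab⟩ := Finset.one_lt_card.1 this
    exact ⟨a, b, hab, by simpa [eq_comm] using ha, by simpa [eq_comm] using hb⟩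

section DH
variable {V₁ V₂ : Type*} (G₁ : SimpleGraph V₁) (G₂ : SimpleGraph V₂)
    (x y : V₁) (z : V₂) (P : Set V₂)

theorem dh_ll (a b : V₁) : (dhgoGraph G₁ G₂ x y z P).Adj (Sum.inl a) (Sum.inl b) ↔
    G₁.Adj a b ∧ s(a, b) ≠ s(x, y) := by
  simp only [dhgoGraph, SimpleGraph.fromRel_adj, ne_eq, Sum.inl.injEq]
  rw [G₁.adj_comm b a, Sym2.eq_swap (a := b) (b := a), or_self]
  exact ⟨fun h => h.2, fun h => ⟨h.1.ne, h⟩⟩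

theorem dh_rr (a b : {w : V₂ // w ≠ z}) :
    (dhgoGraph G₁ G₂ x y z P).Adj (Sum.inr a) (Sum.inr b) ↔ G₂.Adj a b := by
  simp only [dhgoGraph, SimpleGraph.fromRel_adj, ne_eq, Sum.inr.injEq]
  rw [G₂.adj_comm b a, or_self]
  exact ⟨fun h => h.2, fun h => ⟨fun e => h.ne (congrArg _ e), h⟩⟩

theorem dh_lr (a : V₁) (b : {w : V₂ // w ≠ z}) :
    (dhgoGraph G₁ G₂ x y z P).Adj (Sum.inl a) (Sum.inr b) ↔
      (a = x ∧ (b : V₂) ∈ P) ∨ (a = y ∧ G₂.Adj z b ∧ (b : V₂) ∉ P) := by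
  simp [dhgoGraph, SimpleGraph.fromRel_adj]

theorem dh_rl (a : V₁) (b : {w : V₂ // w ≠ z}) :
    (dhgoGraph G₁ G₂ x y z P).Adj (Sum.inr b) (Sum.inl a) ↔
      (a = x ∧ (b : V₂) ∈ P) ∨ (a = y ∧ G₂.Adj z b ∧ (b : V₂) ∉ P) := by
  rw [SimpleGraph.adj_comm, dh_lr]

theorem dh_swap (hP : P ⊆ G₂.neighborSet z) :
    dhgoGraph G₁ G₂ x y z P = dhgoGraph G₁ G₂ y x z (G₂.neighborSet z \ P) := by
  have hP' : ∀ w, w ∈ P → G₂.Adj z w := fun w hw => hP hw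
  ext a b
  rcases a with a | a <;> rcases b with b | b
  · rw [dh_ll, dh_ll, Sym2.eq_swap (a := x)]
  · rw [dh_lr, dh_lr]; simp only [Set.mem_sdiff, mem_neighborSet]; have := hP' b; tauto
  · rw [dh_rl, dh_rl]; simp only [Set.mem_sdiff, mem_neighborSet]; have := hP' a; tauto
  · rw [dh_rr, dh_rr]
end DH

theorem OreGood.avoid_x {m : ℕ} (hm : 2 ≤ m) {V₁ V₂ : Type*} {G₁ : SimpleGraph V₁}
    {G₂ : SimpleGraph V₂} (h₁ : OreGood m G₁) (h₂ : OreGood m G₂) {x y : V₁} {z : V₂} {P : Set V₂}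
    (hxy : G₁.Adj x y) (hP : P ⊆ G₂.neighborSet z) (hne : P.Nonempty)
    (hne' : (G₂.neighborSet z \ P).Nonempty) (f : V₁ ⊕ {w : V₂ // w ≠ z} → Fin m)
    (hf : ∀ c, ∃ u, (dhgoGraph G₁ G₂ x y z P).Adj (Sum.inl x) u ∧ f u ≠ c) :
    ∃ φ : V₁ ⊕ {w : V₂ // w ≠ z} → Fin m,
      (∀ a b, a ≠ Sum.inl x → b ≠ Sum.inl x → (dhgoGraph G₁ G₂ x y z P).Adj a b → φ a ≠ φ b) ∧
      ∀ u, (dhgoGraph G₁ G₂ x y z P).Adj (Sum.inl x) u → φ u ≠ f u := by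
  classical
  have : Nontrivial (Fin m) := Fin.nontrivial_iff_two_le.2 hm
  obtain ⟨p, hp⟩ := hne
  obtain ⟨q, hq, hqP⟩ := hne'
  have hzP : ∀ w, w ∈ P → w ≠ z := fun w hw => (hP hw : G₂.Adj z w).ne'
  have hyx : y ≠ x := hxy.ne'
  -- it suffices to find a colouring of the first part with a suitable property
  have main : ∀ φ : V₁ → Fin m, (∀ a b, a ≠ x → b ≠ x → G₁.Adj a b → φ a ≠ φ b) →
      (∀ u, G₁.Adj x u → u ≠ y → φ u ≠ f (Sum.inl u)) →
      (∃ p : {w : V₂ // w ≠ z}, p.1 ∈ P ∧ f (Sum.inr p) ≠ φ y) →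
      ∃ φ : V₁ ⊕ {w : V₂ // w ≠ z} → Fin m,
      (∀ a b, a ≠ Sum.inl x → b ≠ Sum.inl x → (dhgoGraph G₁ G₂ x y z P).Adj a b → φ a ≠ φ b) ∧
      ∀ u, (dhgoGraph G₁ G₂ x y z P).Adj (Sum.inl x) u → φ u ≠ f u := by
    rintro φ h1 h2 ⟨⟨p, hpz⟩, hp, hpf⟩
    obtain ⟨ψ, k1, k2⟩ := h₂.avoid z
      (fun w => if h : w ∈ P then f (Sum.inr ⟨w, hzP w h⟩) else φ y) (by
        intro c
        by_cases hc : c = φ y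
        · refine ⟨p, hP hp, ?_⟩
          simpa [hp, hc] using hpf
        · exact ⟨q, hq, by simpa [hqP] using Ne.symm hc⟩)
    refine ⟨Sum.elim φ (fun w => ψ w), ?_, ?_⟩
    · rintro (a | a) (b | b) ha hb hab
      · rw [dh_ll] at hab
        exact h1 a b (by simpa using ha) (by simpa using hb) hab.1
      · rw [dh_lr] at hab
        rcases hab with ⟨rfl, -⟩ | ⟨rfl, hz, hbP⟩
        · exact absurd rfl ha
        · have := k2 b hz
          simp only [hbP, dif_neg, not_false_eq_true] at this
          exact this.symm
      · rw [dh_rl] at hab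
        rcases hab with ⟨rfl, -⟩ | ⟨rfl, hz, hbP⟩
        · exact absurd rfl hb
        · have := k2 a hz
          simp only [hbP, dif_neg, not_false_eq_true] at this
          exact this
      · rw [dh_rr] at hab
        exact k1 a b a.2 b.2 hab
    · rintro (u | u) hu
      · rw [dh_ll] at hu
        exact h2 u hu.1 (by rintro rfl; exact hu.2 rfl)
      · rw [dh_lr] at hu
        rcases hu with ⟨-, huP⟩ | ⟨h, -⟩
        · have := k2 u (hP huP)
          simpa [huP] using this
        · exact absurd h.symm hyx
  by_cases hconst : ∃ c, ∀ w : {w : V₂ // w ≠ z}, w.1 ∈ P → f (Sum.inr w) = c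
  · obtain ⟨c, hc⟩ := hconst
    obtain ⟨φ, h1, h2⟩ := h₁.avoid x (fun u => if u = y then c else f (Sum.inl u)) (by
      intro d
      by_cases hd : d = c
      · obtain ⟨u | u, hu, hfu⟩ := hf d
        · rw [dh_ll] at hu
          have : u ≠ y := by rintro rfl; exact hu.2 rfl
          exact ⟨u, hu.1, by simpa [this] using hfu⟩
        · rw [dh_lr] at hu
          rcases hu with ⟨-, huP⟩ | ⟨h, -⟩
          · exact absurd ((hc u huP).trans hd.symm) hfu
          · exact absurd h.symm hyx
      · exact ⟨y, hxy, by simpa using Ne.symm hd⟩)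
    refine main φ h1 (fun u hu huy => by simpa [huy] using h2 u hu)
      ⟨⟨p, hzP p hp⟩, hp, ?_⟩
    rw [hc _ hp]
    simpa using (h2 y hxy).symm
  · push Not at hconst
    have hφ : ∃ φ : V₁ → Fin m, (∀ a b, a ≠ x → b ≠ x → G₁.Adj a b → φ a ≠ φ b) ∧
      (∀ u, G₁.Adj x u → u ≠ y → φ u ≠ f (Sum.inl u)) := by
      by_cases hc1 : ∃ γ, ∀ u, G₁.Adj x u → u ≠ y → f (Sum.inl u) = γ
      · obtain ⟨γ, hγ⟩ := hc1
        obtain ⟨φ, e1, e2, e3⟩ := h₁.edge hm hxy γ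
        refine ⟨φ, fun a b ha hb hab => e3 a b hab ?_, fun u hu huy => ?_⟩
        · rw [Ne, Sym2.eq_iff]; tauto
        · rw [hγ u hu huy, ← e1]
          refine (e3 x u hu ?_).symm
          rw [Ne, Sym2.eq_iff]; tauto
      · push Not at hc1
        obtain ⟨φ, h1, h2⟩ := h₁.avoid x (fun u => f (Sum.inl u)) (by
          intro c
          obtain ⟨u, hu, -, hne⟩ := hc1 c
          exact ⟨u, hu, hne⟩)
        exact ⟨φ, h1, fun u hu _ => h2 u hu⟩
    obtain ⟨φ, h1, h2⟩ := hφ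
    exact main φ h1 h2 (hconst (φ y))

theorem OreGood.comp {m : ℕ} (hm : 2 ≤ m) {V₁ V₂ : Type*} {G₁ : SimpleGraph V₁}
    {G₂ : SimpleGraph V₂} (h₁ : OreGood m G₁) (h₂ : OreGood m G₂) {x y : V₁} {z : V₂} {P : Set V₂}
    (hxy : G₁.Adj x y) (hP : P ⊆ G₂.neighborSet z) (hne : P.Nonempty)
    (hne' : (G₂.neighborSet z \ P).Nonempty) : OreGood m (dhgoGraph G₁ G₂ x y z P) where
  nc φ := by
    classical
    by_cases hc : φ (Sum.inl x) = φ (Sum.inl y)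
    · obtain ⟨a, b, hab, h⟩ := h₂.nc
        (fun w => if h : w ≠ z then φ (Sum.inr ⟨w, h⟩) else φ (Sum.inl x))
      by_cases ha : a = z
      · subst ha
        have hb : b ≠ a := hab.ne'
        simp only [ne_eq, not_true_eq_false, dif_neg, not_false_eq_true, hb, dif_pos] at h
        by_cases hbP : b ∈ P
        · exact ⟨Sum.inl x, Sum.inr ⟨b, hb⟩, (dh_lr ..).2 (Or.inl ⟨rfl, hbP⟩), h⟩
        · exact ⟨Sum.inl y, Sum.inr ⟨b, hb⟩, (dh_lr ..).2 (Or.inr ⟨rfl, hab, hbP⟩), hc ▸ h⟩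
      · by_cases hb : b = z
        · subst hb
          simp only [ne_eq, not_true_eq_false, dif_neg, not_false_eq_true, ha, dif_pos] at h
          by_cases haP : a ∈ P
          · exact ⟨Sum.inl x, Sum.inr ⟨a, ha⟩, (dh_lr ..).2 (Or.inl ⟨rfl, haP⟩), h.symm⟩
          · exact ⟨Sum.inl y, Sum.inr ⟨a, ha⟩, (dh_lr ..).2 (Or.inr ⟨rfl, hab.symm, haP⟩),
              hc ▸ h.symm⟩
        · refine ⟨Sum.inr ⟨a, ha⟩, Sum.inr ⟨b, hb⟩, (dh_rr ..).2 hab, ?_⟩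
          simpa [ha, hb] using h
    · obtain ⟨a, b, hab, h⟩ := h₁.nc (fun w => φ (Sum.inl w))
      refine ⟨_, _, (dh_ll ..).2 ⟨hab, ?_⟩, h⟩
      rw [Ne, Sym2.eq_iff]
      rintro (⟨rfl, rfl⟩ | ⟨rfl, rfl⟩)
      · exact hc h
      · exact hc h.symm
  avoid v f hf := by
    classical
    rcases v with v | v
    · by_cases hvx : v = x
      · subst hvx
        exact h₁.avoid_x hm h₂ hxy hP hne hne' f hf
      by_cases hvy : v = y
      · subst hvy
        rw [dh_swap _ _ _ _ _ _ hP] at hf ⊢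
        refine h₁.avoid_x hm h₂ hxy.symm Set.sdiff_subset hne' ?_ f hf
        rw [Set.sdiff_sdiff_cancel_left hP]
        exact hne
      have hvs : ∀ u, s(v, u) ≠ s(x, y) := by
        intro u; rw [Ne, Sym2.eq_iff]; tauto
      obtain ⟨φ, h1, h2⟩ := h₁.avoid v (fun u => f (Sum.inl u)) (by
        intro c
        obtain ⟨u | u, hu, hfu⟩ := hf c
        · rw [dh_ll] at hu
          exact ⟨u, hu.1, hfu⟩
        · rw [dh_lr] at hu; tauto)
      have hφ := h1 x y (Ne.symm hvx) (Ne.symm hvy) hxy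
      obtain ⟨p, hp⟩ := hne
      obtain ⟨q, hq, hqP⟩ := hne'
      obtain ⟨ψ, k1, k2⟩ := h₂.avoid z (fun w => if w ∈ P then φ x else φ y) (by
        intro c
        by_cases hc : c = φ x
        · exact ⟨q, hq, by simpa [hqP, hc] using hφ.symm⟩
        · exact ⟨p, hP hp, by simpa [hp] using Ne.symm hc⟩)
      have cross : ∀ a (b : {w : V₂ // w ≠ z}),
          (dhgoGraph G₁ G₂ x y z P).Adj (Sum.inl a) (Sum.inr b) → φ a ≠ ψ b := by
        intro a b hab
        rw [dh_lr] at hab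
        rcases hab with ⟨rfl, hb⟩ | ⟨rfl, hz, hb⟩
        · simpa [hb] using (k2 b (hP hb)).symm
        · simpa [hb] using (k2 b hz).symm
      refine ⟨Sum.elim φ (fun w => ψ w), ?_, ?_⟩
      · rintro (a | a) (b | b) ha hb hab
        · rw [dh_ll] at hab
          exact h1 a b (by simpa using ha) (by simpa using hb) hab.1
        · exact cross a b hab
        · exact (cross b a hab.symm).symm
        · rw [dh_rr] at hab
          exact k1 a b a.2 b.2 hab
      · rintro (u | u) hu
        · rw [dh_ll] at hu
          exact h2 u hu.1
        · rw [dh_lr] at hu; tauto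
    · obtain ⟨v, hv⟩ := v
      obtain ⟨ψ, k1, k2⟩ := h₂.avoid v (fun w => if h : w ≠ z then f (Sum.inr ⟨w, h⟩) else
          if v ∈ P then f (Sum.inl x) else f (Sum.inl y)) (by
        intro c
        obtain ⟨u | u, hu, hfu⟩ := hf c
        · rw [dh_rl] at hu
          rcases hu with ⟨rfl, hb⟩ | ⟨rfl, hz, hb⟩
          · exact ⟨z, (hP hb : G₂.Adj z v).symm, by simpa [hb] using hfu⟩
          · exact ⟨z, hz.symm, by simpa [hb] using hfu⟩
        · rw [dh_rr] at hu
          exact ⟨u, hu, by simpa [u.2] using hfu⟩)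
      obtain ⟨φ, e1, e2, e3⟩ := h₁.edge hm hxy (ψ z)
      have cross : ∀ a (b : {w : V₂ // w ≠ z}), b.1 ≠ v →
          (dhgoGraph G₁ G₂ x y z P).Adj (Sum.inl a) (Sum.inr b) → φ a ≠ ψ b := by
        intro a b hbv hab
        rw [dh_lr] at hab
        rcases hab with ⟨rfl, hb⟩ | ⟨rfl, hz, hb⟩
        · rw [e1]; exact k1 z b hv.symm hbv (hP hb)
        · rw [e2]; exact k1 z b hv.symm hbv hz
      refine ⟨Sum.elim φ (fun w => ψ w), ?_, ?_⟩
      · rintro (a | a) (b | b) ha hb hab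
        · rw [dh_ll] at hab
          exact e3 a b hab.1 hab.2
        · exact cross a b (fun h => hb (by simp [← h])) hab
        · exact (cross b a (fun h => ha (by simp [← h])) hab.symm).symm
        · rw [dh_rr] at hab
          exact k1 a b (fun h => ha (by simp [← h])) (fun h => hb (by simp [← h])) hab
      · rintro (u | u) hu
        · rw [dh_rl] at hu
          rcases hu with ⟨rfl, hb⟩ | ⟨rfl, hz, hb⟩
          · have := k2 z (hP hb : G₂.Adj z v).symm
            simp only [Sum.elim_inl, e1]
            simpa [hb] using this
          · have := k2 z hz.symm
            simp only [Sum.elim_inl, e2]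
            simpa [hb] using this
        · rw [dh_rr] at hu
          have := k2 u hu
          simpa [u.2] using this
  deg v := by
    classical
    have other : ∀ a b, G₁.Adj a b → ∃ w, w ≠ b ∧ G₁.Adj a w := by
      intro a b _
      obtain ⟨w₁, w₂, hab, h1, h2⟩ := h₁.deg a
      by_cases ha : w₁ = b
      · exact ⟨w₂, fun hb => hab (ha.trans hb.symm), h2⟩
      · exact ⟨w₁, ha, h1⟩
    have hyx := hxy.ne'
    rcases v with v | v
    · by_cases hvx : v = x
      · subst hvx
        obtain ⟨w, hw, hvw⟩ := other v y hxy
        obtain ⟨p, hp⟩ := hne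
        refine ⟨Sum.inl w, Sum.inr ⟨p, (hP hp : G₂.Adj z p).ne'⟩, by simp, ?_, ?_⟩
        · rw [dh_ll, Ne, Sym2.eq_iff]; tauto
        · rw [dh_lr]; tauto
      by_cases hvy : v = y
      · subst hvy
        obtain ⟨w, hw, hvw⟩ := other v x hxy.symm
        obtain ⟨q, hq, hqP⟩ := hne'
        refine ⟨Sum.inl w, Sum.inr ⟨q, (hq : G₂.Adj z q).ne'⟩, by simp, ?_, ?_⟩
        · rw [dh_ll, Ne, Sym2.eq_iff]; tauto
        · rw [dh_lr]; exact Or.inr ⟨rfl, hq, hqP⟩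
      obtain ⟨w₁, w₂, hab, h1, h2⟩ := h₁.deg v
      refine ⟨Sum.inl w₁, Sum.inl w₂, by simpa using hab, ?_, ?_⟩
      · rw [dh_ll, Ne, Sym2.eq_iff]; tauto
      · rw [dh_ll, Ne, Sym2.eq_iff]; tauto
    · obtain ⟨v, hv⟩ := v
      obtain ⟨w₁, w₂, hab, h1, h2⟩ := h₂.deg v
      have hz : G₂.Adj v z → ∃ a, (dhgoGraph G₁ G₂ x y z P).Adj (Sum.inr ⟨v, hv⟩) (Sum.inl a) := by
        intro h
        by_cases hvP : v ∈ P
        · exact ⟨x, (dh_rl ..).2 (Or.inl ⟨rfl, hvP⟩)⟩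
        · exact ⟨y, (dh_rl ..).2 (Or.inr ⟨rfl, h.symm, hvP⟩)⟩
      by_cases c1 : w₁ = z
      · obtain ⟨a, ha⟩ := hz (c1 ▸ h1)
        have c2 : w₂ ≠ z := fun h => hab (c1.trans h.symm)
        exact ⟨Sum.inl a, Sum.inr ⟨w₂, c2⟩, by simp, ha, (dh_rr ..).2 h2⟩
      by_cases c2 : w₂ = z
      · obtain ⟨a, ha⟩ := hz (c2 ▸ h2)
        exact ⟨Sum.inl a, Sum.inr ⟨w₁, c1⟩, by simp, ha, (dh_rr ..).2 h1⟩
      exact ⟨Sum.inr ⟨w₁, c1⟩, Sum.inr ⟨w₂, c2⟩, by simpa using hab, (dh_rr ..).2 h1,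
        (dh_rr ..).2 h2⟩

theorem OreGood.critical {k : ℕ} (hk : 3 ≤ k) {V : Type*} {G : SimpleGraph V}
    (h : OreGood (k - 1) G) (hne : Nonempty V) : IsKCritical k G := by
  classical
  have hcol : ∀ H : SimpleGraph V, H < G → H.Colorable (k - 1) := by
    intro H hH
    obtain ⟨a, b, hab, hn⟩ : ∃ a b, G.Adj a b ∧ ¬ H.Adj a b := by
      by_contra hcon
      push Not at hcon
      exact hH.not_ge (fun a b hab => hcon a b hab)
    obtain ⟨φ, -, -, e⟩ := h.edge (by omega) hab ⟨0, by omega⟩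
    refine ⟨SimpleGraph.Coloring.mk φ ?_⟩
    intro c d hcd
    refine e c d (hH.le hcd) ?_
    rw [Ne, Sym2.eq_iff]
    rintro (⟨rfl, rfl⟩ | ⟨rfl, rfl⟩)
    · exact hn hcd
    · exact hn hcd.symm
  refine ⟨?_, hcol⟩
  have hk1 : k = (k - 1) + 1 := by omega
  have hnot : ¬ G.Colorable (k - 1) := by
    rintro ⟨C⟩
    obtain ⟨a, b, hab, hc⟩ := h.nc C
    exact C.valid hab hc
  have hyes : G.Colorable k := by
    obtain ⟨v⟩ := hne
    obtain ⟨u, -, -, hu, -⟩ := h.deg v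
    obtain ⟨φ, -, -, e⟩ := h.edge (by omega) hu ⟨0, by omega⟩
    have : G.Coloring (Option (Fin (k-1))) := SimpleGraph.Coloring.mk
      (fun w => if w = v then none else some (φ w)) (by
        intro c d hcd
        have hne := hcd.ne
        by_cases hc : c = v
        · subst hc
          simp [hne.symm]
        by_cases hd : d = v
        · subst hd
          simp [hc]
        have := e c d hcd (by rw [Ne, Sym2.eq_iff]; tauto)
        simpa [hc, hd] using this)
    have := this.colorable
    simp only [Fintype.card_option, Fintype.card_fin] at this
    rwa [← hk1] at this
  apply le_antisymm
  · exact hyes.chromaticNumber_le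
  · by_contra hlt
    push Not at hlt
    apply hnot
    rw [← SimpleGraph.chromaticNumber_le_iff_colorable]
    rw [hk1] at hlt
    push_cast at hlt
    exact Order.le_of_lt_add_one hlt

open Classical in
noncomputable def adjSum {V : Type*} [Fintype V] (G : SimpleGraph V) : ℤ :=
  ∑ a, ∑ b, if G.Adj a b then 1 else 0

theorem adjSum_eq {V : Type*} [Fintype V] (G : SimpleGraph V) [DecidableRel G.Adj]
    [DecidableEq V] : adjSum G = 2 * (G.edgeFinset.card : ℤ) := by
  have := G.sum_degrees_eq_twice_card_edges
  rw [show (2 : ℤ) * (G.edgeFinset.card : ℤ) = ((2 * G.edgeFinset.card : ℕ) : ℤ) by push_cast; rfl,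
    ← this, adjSum]
  push_cast
  refine Finset.sum_congr rfl fun a _ => ?_
  rw [← SimpleGraph.card_neighborFinset_eq_degree, SimpleGraph.neighborFinset_eq_filter,
    Finset.card_filter]
  push_cast
  refine Finset.sum_congr rfl fun b _ => ?_
  congr

theorem adjSum_iso {V W : Type*} [Fintype V] [Fintype W] {G : SimpleGraph V} {H : SimpleGraph W}
    (e : G ≃g H) : adjSum G = adjSum H := by
  unfold adjSum
  refine Fintype.sum_equiv e.toEquiv _ _ fun a => Fintype.sum_equiv e.toEquiv _ _ fun b => ?_
  have := e.map_adj_iff (v := a) (w := b)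
  by_cases h : G.Adj a b
  · simp [h, this]
  · simp [h, this]

theorem adjSum_dh {V₁ V₂ : Type*} [Fintype V₁] [Fintype V₂] {G₁ : SimpleGraph V₁}
    {G₂ : SimpleGraph V₂} {x y : V₁} {z : V₂} {P : Set V₂} [Fintype {w : V₂ // w ≠ z}]
    (hxy : G₁.Adj x y) (hP : P ⊆ G₂.neighborSet z) :
    adjSum (dhgoGraph G₁ G₂ x y z P) = adjSum G₁ + adjSum G₂ - 2 := by
  classical
  have hyx := hxy.ne'
  unfold adjSum
  have e2 : ∀ F : V₂ → ℤ, ∑ w, F w = F z + ∑ w : {w : V₂ // w ≠ z}, F w := fun F => by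
    rw [Fintype.sum_eq_add_sum_subtype_ne F z]
    congr 1
    exact Finset.sum_congr (by ext; simp) (fun _ _ => rfl)
  rw [Fintype.sum_sum_type]
  simp only [Fintype.sum_sum_type, dh_ll, dh_lr, dh_rl, dh_rr]
  have c1 : ∀ a b : V₁, (if G₁.Adj a b ∧ s(a, b) ≠ s(x, y) then (1:ℤ) else 0) =
      (if G₁.Adj a b then 1 else 0) - (if a = x then if b = y then 1 else 0 else 0)
        - (if a = y then if b = x then 1 else 0 else 0) := by
    intro a b
    simp only [ne_eq, Sym2.eq_iff]
    by_cases h1 : a = x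
    · subst h1
      by_cases h2 : b = y
      · subst h2; simp [hxy, hyx.symm]
      · simp [h2, hyx.symm]
    · by_cases h3 : a = y
      · subst h3
        by_cases h2 : b = x
        · subst h2; simp [hxy.symm, hyx]
        · simp [h2, h1]
      · simp [h1, h3]
  have c2 : ∀ (a : V₁) (b : {w : V₂ // w ≠ z}),
      (if (a = x ∧ (b : V₂) ∈ P) ∨ (a = y ∧ G₂.Adj z b ∧ (b : V₂) ∉ P) then (1:ℤ) else 0) =
      (if a = x then if b.1 ∈ P then 1 else 0 else 0) +
       (if a = y then if G₂.Adj z b ∧ b.1 ∉ P then 1 else 0 else 0) := by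
    intro a b
    by_cases h1 : a = x
    · subst h1; simp [hyx.symm]
    · simp [h1]; 
      by_cases h3 : a = y <;> simp [h3]
  have c3 : ∀ b : {w : V₂ // w ≠ z}, (∑ a : V₁,
      (if (a = x ∧ (b : V₂) ∈ P) ∨ (a = y ∧ G₂.Adj z b ∧ (b : V₂) ∉ P) then (1:ℤ) else 0)) =
      if G₂.Adj z b then 1 else 0 := by
    intro b
    simp only [c2, Finset.sum_add_distrib, Finset.sum_ite_eq', Finset.mem_univ, if_true]
    have : b.1 ∈ P → G₂.Adj z b := fun h => hP h
    by_cases hb : b.1 ∈ P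
    · simp [hb, this hb]
    · simp [hb]
  rw [e2 (fun a => ∑ b, if G₂.Adj a b then (1:ℤ) else 0), e2 (fun b => if G₂.Adj z b then (1:ℤ) else 0)]
  simp only [Finset.sum_add_distrib]
  rw [Finset.sum_comm (s := (Finset.univ : Finset V₁)) (t := (Finset.univ : Finset {w : V₂ // w ≠ z}))]
  simp only [c3]
  have c4 : ∀ a : {w : V₂ // w ≠ z}, (∑ b, if G₂.Adj a.1 b then (1:ℤ) else 0) =
      (if G₂.Adj z a then 1 else 0) + ∑ b : {w : V₂ // w ≠ z}, if G₂.Adj a b then (1:ℤ) else 0 := by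
    intro a
    rw [e2 (fun b => if G₂.Adj a.1 b then (1:ℤ) else 0)]
    simp only [G₂.adj_comm a.1 z]
  simp only [c4, Finset.sum_add_distrib, c1, Finset.sum_sub_distrib]
  have s1 : ∀ u v : V₁, (∑ a : V₁, ∑ b : V₁, if a = u then if b = v then (1:ℤ) else 0 else 0) = 1 := by
    intro u v
    rw [Finset.sum_eq_single u]
    · simp
    · intro b _ hb; simp [hb]
    · simp
  rw [s1, s1]
  simp only [SimpleGraph.irrefl, if_false]
  ring

theorem ore_all {k : ℕ} (hk : 4 ≤ k) {n : ℕ} {G : SimpleGraph (Fin n)} (h : IsOreFin k G) :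
    OreGood (k - 1) G ∧ 0 < n ∧ ((k : ℤ) - 1) * adjSum G =
      ((k : ℤ) + 1) * ((k : ℤ) - 2) * n - (k : ℤ) * ((k : ℤ) - 3) ∧ n ≡ 1 [MOD k - 1] := by
  induction h with
  | @complete n G h =>
    obtain ⟨e⟩ := h
    have hn : n = k := by simpa using Fintype.card_congr e.toEquiv
    subst hn
    refine ⟨?_, by omega, ?_, ?_⟩
    · obtain ⟨m, rfl⟩ : ∃ m, n = m + 1 := ⟨n - 1, by omega⟩
      exact (OreGood.top (by simp; omega)).iso e
    · rw [adjSum_iso e]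
      have : adjSum (⊤ : SimpleGraph (Fin n)) = (n : ℤ) * (n - 1) := by
        classical
        have h0 : adjSum (⊤ : SimpleGraph (Fin n)) =
            ∑ a : Fin n, ∑ b : Fin n, ((1 : ℤ) - if a = b then 1 else 0) := by
          unfold adjSum
          refine Finset.sum_congr rfl fun a _ => Finset.sum_congr rfl fun b _ => ?_
          by_cases h : a = b <;> simp [h]
        rw [h0]
        simp [Finset.sum_sub_distrib]
        ring
      rw [this]; ring
    · have := Nat.add_mod_right 1 (n - 1)
      rwa [show 1 + (n - 1) = n by omega] at this
  | @comp n₁ n₂ n G₁ G₂ G h₁ h₂ h ih₁ ih₂ =>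
    obtain ⟨x, y, z, P, hxy, hP, hne, hne', ⟨e⟩⟩ := h
    obtain ⟨g1, p1, s1, m1⟩ := ih₁
    obtain ⟨g2, p2, s2, m2⟩ := ih₂
    have hn : n = n₁ + (n₂ - 1) := by simpa using Fintype.card_congr e.toEquiv
    refine ⟨(g1.comp (by omega) g2 hxy hP hne hne').iso e, by omega, ?_, ?_⟩
    · rw [adjSum_iso e, adjSum_dh hxy hP]
      have : (n : ℤ) = n₁ + n₂ - 1 := by omega
      rw [this]
      linear_combination s1 + s2
    · have h3 : n + 1 ≡ 1 + 1 [MOD k - 1] := by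
        rw [show n + 1 = n₁ + n₂ by omega]
        exact m1.add m2
      exact Nat.ModEq.add_right_cancel' 1 h3

/-- **Theorem.** Let `k ≥ 4`. Every `k`-Ore graph `G` is `k`-critical, satisfies
`2(k-1)|E(G)| = (k+1)(k-2)|V(G)| - k(k-3)`, and has `|V(G)| ≡ 1 (mod k-1)`. -/
theorem kOre_critical_extremal_card {V : Type*} [Fintype V] [DecidableEq V] (k : ℕ)
    (hk : 4 ≤ k) (G : SimpleGraph V) [DecidableRel G.Adj] (hG : IsKOre k G) :
    IsKCritical k G ∧
      2 * ((k : ℤ) - 1) * G.edgeFinset.card =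
        ((k : ℤ) + 1) * ((k : ℤ) - 2) * Fintype.card V - (k : ℤ) * ((k : ℤ) - 3) ∧
      Fintype.card V ≡ 1 [MOD k - 1] := by
  obtain ⟨n, H, hH, ⟨e⟩⟩ := hG
  obtain ⟨g, p, s, m⟩ := ore_all hk hH
  have hc : Fintype.card V = n := by simpa using Fintype.card_congr e.toEquiv
  refine ⟨(g.iso e).critical (by omega) ⟨e.symm ⟨0, p⟩⟩, ?_, by rw [hc]; exact m⟩
  rw [← adjSum_iso e, adjSum_eq] at s
  rw [hc]
  linear_combination s
end

section
/- Let k ≥ 4, let G be a k-Ore graph, and let R be a nonempty proper subset of V(G). Then ρ_{k,G}(R) ≥ (k+1)(k−2). -/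
open SimpleGraph

section Aux
open Classical Finset

/-- ordered pair count of adjacent pairs -/
noncomputable def sAdj {V : Type*} (G : SimpleGraph V) (R : Finset V) : ℤ :=
  ∑ u ∈ R, ∑ v ∈ R, if G.Adj u v then 1 else 0

noncomputable def pot2 {V : Type*} (k : ℕ) (G : SimpleGraph V) (R : Finset V) : ℤ :=
  ((k : ℤ) + 1) * ((k : ℤ) - 2) * R.card - ((k : ℤ) - 1) * sAdj G R

def GoodPot {V : Type*} [Fintype V] (k : ℕ) (G : SimpleGraph V) : Prop :=
  pot2 k G univ = ((k : ℤ) + 1) * ((k : ℤ) - 2) - 2 * ((k : ℤ) - 1) ∧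
  ∀ R : Finset V, R.Nonempty → R ≠ univ → ((k : ℤ) + 1) * ((k : ℤ) - 2) ≤ pot2 k G R

lemma sAdj_map {V W : Type*} {G : SimpleGraph V} {H : SimpleGraph W} (e : G ≃g H)
    (R : Finset V) : sAdj H (R.map e.toEquiv.toEmbedding) = sAdj G R := by
  unfold sAdj
  simp only [Finset.sum_map]
  refine Finset.sum_congr rfl fun u _ => Finset.sum_congr rfl fun v _ => ?_
  have : H.Adj (e u) (e v) ↔ G.Adj u v := e.map_adj_iff
  simp [this]

lemma pot2_map {V W : Type*} (k : ℕ) {G : SimpleGraph V} {H : SimpleGraph W} (e : G ≃g H)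
    (R : Finset V) : pot2 k H (R.map e.toEquiv.toEmbedding) = pot2 k G R := by
  unfold pot2
  rw [sAdj_map, Finset.card_map]

lemma GoodPot.of_iso {V W : Type*} [Fintype V] [Fintype W] {k : ℕ} {G : SimpleGraph V}
    {H : SimpleGraph W} (e : G ≃g H) (h : GoodPot k H) : GoodPot k G := by
  refine ⟨?_, fun R hR hR' => ?_⟩
  · rw [← pot2_map k e, Finset.map_univ_equiv]; exact h.1
  · rw [← pot2_map k e]
    refine h.2 _ (by simpa using hR) fun hu => hR' ?_
    rw [← Finset.map_univ_equiv e.toEquiv] at hu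
    exact Finset.map_injective _ hu

lemma sAdj_top {n : ℕ} (R : Finset (Fin n)) :
    sAdj (⊤ : SimpleGraph (Fin n)) R = R.card * (R.card - 1) := by
  unfold sAdj
  have : ∀ u ∈ R, (∑ v ∈ R, if (⊤ : SimpleGraph (Fin n)).Adj u v then (1 : ℤ) else 0)
      = R.card - 1 := by
    intro u hu
    have h1 : ∀ v ∈ R, (if (⊤ : SimpleGraph (Fin n)).Adj u v then (1 : ℤ) else 0)
        = 1 - if u = v then 1 else 0 := by
      intro v _
      by_cases h : u = v <;> simp [h]
    rw [Finset.sum_congr rfl h1, Finset.sum_sub_distrib, Finset.sum_ite_eq]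
    simp [hu]
  refine Eq.trans (Finset.sum_congr rfl fun u hu => Eq.trans ?_ (this u hu)) ?_
  · refine Finset.sum_congr rfl fun v _ => ?_
    congr
  · simp
    ring

lemma good_top (k : ℕ) (hk : 4 ≤ k) : GoodPot k (⊤ : SimpleGraph (Fin k)) := by
  refine ⟨?_, fun R hR hR' => ?_⟩
  · unfold pot2
    rw [sAdj_top]
    simp only [Finset.card_univ, Fintype.card_fin]
    ring
  · unfold pot2
    rw [sAdj_top]
    have h1 : 1 ≤ R.card := hR.card_pos
    have h2 : R.card < k := by
      have := (Finset.card_lt_iff_ne_univ R).2 hR'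
      simpa using this
    have h1' : (1 : ℤ) ≤ R.card := by exact_mod_cast h1
    have h2' : (R.card : ℤ) + 1 ≤ k := by exact_mod_cast h2
    have hk' : (4 : ℤ) ≤ k := by exact_mod_cast hk
    generalize (R.card : ℤ) = r at *
    generalize (k : ℤ) = m at *
    have key : (m + 1) * (m - 2) * r - (m - 1) * (r * (r - 1)) - (m + 1) * (m - 2)
      = (r - 1) * ((m - 1) * (m - 1 - r) + (m - 3)) := by ring
    have : 0 ≤ (r - 1) * ((m - 1) * (m - 1 - r) + (m - 3)) := by
      apply mul_nonneg (by linarith)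
      have : 0 ≤ (m - 1) * (m - 1 - r) := mul_nonneg (by linarith) (by linarith)
      linarith
    linarith

lemma sAdj_insert {V : Type*} (G : SimpleGraph V) (T : Finset V) (z : V) (hz : z ∉ T) :
    sAdj G (insert z T) = sAdj G T + 2 * ∑ w ∈ T, if G.Adj z w then 1 else 0 := by
  unfold sAdj
  simp only [Finset.sum_insert hz, Finset.sum_add_distrib, G.irrefl, if_false]
  have : (∑ w ∈ T, if G.Adj w z then (1 : ℤ) else 0) = ∑ w ∈ T, if G.Adj z w then 1 else 0 :=
    Finset.sum_congr rfl fun w _ => by simp [G.adj_comm]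
  rw [this]; ring

lemma sAdj_disjSum {V W : Type*} (G : SimpleGraph (V ⊕ W)) (R₁ : Finset V) (R₂ : Finset W) :
    sAdj G (R₁.disjSum R₂) =
      (∑ u ∈ R₁, ∑ v ∈ R₁, if G.Adj (.inl u) (.inl v) then 1 else 0)
      + (∑ u ∈ R₂, ∑ v ∈ R₂, if G.Adj (.inr u) (.inr v) then 1 else 0)
      + 2 * ∑ v ∈ R₂, ∑ u ∈ R₁, if G.Adj (.inl u) (.inr v) then 1 else 0 := by
  unfold sAdj
  simp only [Finset.sum_disjSum, Finset.sum_add_distrib]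
  rw [Finset.sum_comm (s := R₁) (t := R₂)]
  have : (∑ w ∈ R₂, ∑ u ∈ R₁, if G.Adj (.inr w) (.inl u) then (1 : ℤ) else 0)
      = ∑ w ∈ R₂, ∑ u ∈ R₁, if G.Adj (.inl u) (.inr w) then (1 : ℤ) else 0 :=
    Finset.sum_congr rfl fun w _ => Finset.sum_congr rfl fun u _ => by simp [G.adj_comm]
  rw [this]; ring

variable {V₁ V₂ : Type*} (G₁ : SimpleGraph V₁) (G₂ : SimpleGraph V₂)
    (x y : V₁) (z : V₂) (P : Set V₂)

lemma dhgo_ll (a b : V₁) : (dhgoGraph G₁ G₂ x y z P).Adj (.inl a) (.inl b) ↔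
    G₁.Adj a b ∧ s(a, b) ≠ s(x, y) := by
  simp only [dhgoGraph, SimpleGraph.fromRel_adj]
  constructor
  · rintro ⟨_, h | h⟩
    · exact h
    · exact ⟨h.1.symm, by rw [Sym2.eq_swap]; exact h.2⟩
  · intro h
    exact ⟨fun e => h.1.ne (Sum.inl.inj e), Or.inl h⟩

lemma dhgo_rr (a b : {w : V₂ // w ≠ z}) :
    (dhgoGraph G₁ G₂ x y z P).Adj (.inr a) (.inr b) ↔ G₂.Adj a b := by
  simp only [dhgoGraph, SimpleGraph.fromRel_adj]
  constructor
  · rintro ⟨_, h | h⟩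
    · exact h
    · exact h.symm
  · intro h
    exact ⟨fun e => h.ne (congrArg _ (Sum.inr.inj e)), Or.inl h⟩

lemma dhgo_lr (a : V₁) (b : {w : V₂ // w ≠ z}) :
    (dhgoGraph G₁ G₂ x y z P).Adj (.inl a) (.inr b) ↔
    (a = x ∧ (b : V₂) ∈ P) ∨ (a = y ∧ (b : V₂) ∈ G₂.neighborSet z \ P) := by
  simp [dhgoGraph, SimpleGraph.fromRel_adj]

lemma sum_ll (hxy : G₁.Adj x y) (R : Finset V₁) :
    (∑ u ∈ R, ∑ v ∈ R, if (dhgoGraph G₁ G₂ x y z P).Adj (.inl u) (.inl v) then (1 : ℤ) else 0)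
      = sAdj G₁ R - if x ∈ R ∧ y ∈ R then 2 else 0 := by
  have hne := hxy.ne
  have h : ∀ u v, (if (dhgoGraph G₁ G₂ x y z P).Adj (.inl u) (.inl v) then (1 : ℤ) else 0)
      = (if G₁.Adj u v then 1 else 0) - (if x = u then (if y = v then 1 else 0) else 0)
        - (if y = u then (if x = v then 1 else 0) else 0) := by
    intro u v
    simp only [dhgo_ll]
    by_cases h1 : x = u
    · subst h1
      by_cases h2 : y = v
      · subst h2; simp [hxy, hne.symm]
      · simp [h2, Ne.symm h2, hne.symm, hne]
    · by_cases h3 : y = u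
      · subst h3
        by_cases h4 : x = v
        · subst h4; simp [hxy.symm, hne]
        · simp [h4, hne]
          grind
      · simp [h1, h3]
        grind
  simp only [h, Finset.sum_sub_distrib]
  have e1 : ∀ s t : V₁, (∑ u ∈ R, ∑ v ∈ R, if s = u then (if t = v then (1 : ℤ) else 0) else 0)
      = if s ∈ R ∧ t ∈ R then 1 else 0 := by
    intro s t
    have : ∀ u ∈ R, (∑ v ∈ R, if s = u then (if t = v then (1 : ℤ) else 0) else 0)
        = if s = u then (if t ∈ R then 1 else 0) else 0 := by
      intro u _
      by_cases hs : s = u <;> simp [hs]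
    rw [Finset.sum_congr rfl this, Finset.sum_ite_eq]
    by_cases h1 : s ∈ R <;> simp [h1]
  rw [e1, e1]
  unfold sAdj
  by_cases h1 : x ∈ R <;> by_cases h2 : y ∈ R <;> simp [h1, h2]
  ring

lemma sum_lr (hxy : x ≠ y) (R₁ : Finset V₁) (R₂ : Finset {w : V₂ // w ≠ z}) :
    (∑ v ∈ R₂, ∑ u ∈ R₁,
        if (dhgoGraph G₁ G₂ x y z P).Adj (.inl u) (.inr v) then (1 : ℤ) else 0)
      = (if x ∈ R₁ then 1 else 0) * (∑ w ∈ R₂, if (w : V₂) ∈ P then 1 else 0)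
      + (if y ∈ R₁ then 1 else 0) *
        (∑ w ∈ R₂, if (w : V₂) ∈ G₂.neighborSet z \ P then 1 else 0) := by
  rw [Finset.mul_sum, Finset.mul_sum, ← Finset.sum_add_distrib]
  refine Finset.sum_congr rfl fun w _ => ?_
  have h : ∀ u, (if (dhgoGraph G₁ G₂ x y z P).Adj (.inl u) (.inr w) then (1 : ℤ) else 0)
      = (if x = u then (if (w : V₂) ∈ P then 1 else 0) else 0)
        + (if y = u then (if (w : V₂) ∈ G₂.neighborSet z \ P then 1 else 0) else 0) := by
    intro u
    simp only [dhgo_lr]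
    by_cases h1 : x = u
    · subst h1
      simp [hxy, hxy.symm]
    · by_cases h2 : y = u
      · subst h2; simp [hxy, hxy.symm]
      · simp [h1, h2, Ne.symm h1, Ne.symm h2]
  simp only [h, Finset.sum_add_distrib, Finset.sum_ite_eq]
  by_cases h1 : x ∈ R₁ <;> by_cases h2 : y ∈ R₁ <;> simp [h1, h2]

lemma good_dhgo [Fintype V₁] [Fintype V₂] (k : ℕ) (hk : 4 ≤ k)
    (h₁ : GoodPot k G₁) (h₂ : GoodPot k G₂) (hxy : G₁.Adj x y) (hP : P ⊆ G₂.neighborSet z)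
    (hPn : P.Nonempty) (hQn : (G₂.neighborSet z \ P).Nonempty) :
    GoodPot k (dhgoGraph G₁ G₂ x y z P) := by
  have main : ∀ (R₁ : Finset V₁) (R₂ : Finset {w : V₂ // w ≠ z}), ∃ (T : Finset V₂) (p q : ℤ),
      z ∉ T ∧ T.card = R₂.card ∧ (T.Nonempty ↔ R₂.Nonempty) ∧ (insert z T = univ ↔ R₂ = univ) ∧
      0 ≤ p ∧ 0 ≤ q ∧ (R₂ = univ → 1 ≤ p ∧ 1 ≤ q) ∧
      sAdj G₂ (insert z T) = sAdj G₂ T + 2 * (p + q) ∧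
      sAdj (dhgoGraph G₁ G₂ x y z P) (R₁.disjSum R₂) =
        (sAdj G₁ R₁ - if x ∈ R₁ ∧ y ∈ R₁ then 2 else 0) + sAdj G₂ T +
        2 * ((if x ∈ R₁ then 1 else 0) * p + (if y ∈ R₁ then 1 else 0) * q) := by
    intro R₁ R₂
    have hz : z ∉ R₂.map (Function.Embedding.subtype _) := by simp
    refine ⟨R₂.map (Function.Embedding.subtype _), ∑ w ∈ R₂, if (w : V₂) ∈ P then 1 else 0,
      ∑ w ∈ R₂, if (w : V₂) ∈ G₂.neighborSet z \ P then 1 else 0, hz, by simp, by simp, ?_,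
      ?_, ?_, ?_, ?_, ?_⟩
    · constructor
      · intro h
        ext w
        have : (w : V₂) ∈ insert z (R₂.map (Function.Embedding.subtype _)) := by
          rw [h]; simp
        have hw := w.2
        simpa [hw] using this
      · rintro rfl
        ext w
        simp [Classical.em]
    · exact Finset.sum_nonneg fun w _ => by split_ifs <;> simp
    · exact Finset.sum_nonneg fun w _ => by split_ifs <;> simp
    · rintro rfl
      obtain ⟨u, hu⟩ := hPn
      obtain ⟨v, hv⟩ := hQn
      have hu' : u ≠ z := (hP hu).ne'
      have hv' : v ≠ z := (hv.1 : G₂.Adj z v).ne'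
      constructor
      · have := Finset.single_le_sum (s := univ)
          (f := fun w : {w : V₂ // w ≠ z} => if (w : V₂) ∈ P then (1 : ℤ) else 0)
          (fun w _ => by split_ifs <;> simp) (Finset.mem_univ ⟨u, hu'⟩)
        simpa only [hu, if_true] using this
      · have := Finset.single_le_sum (s := univ)
          (f := fun w : {w : V₂ // w ≠ z} =>
            if (w : V₂) ∈ G₂.neighborSet z \ P then (1 : ℤ) else 0)
          (fun w _ => by split_ifs <;> simp) (Finset.mem_univ ⟨v, hv'⟩)
        simpa only [hv, if_true] using this
    · rw [sAdj_insert _ _ _ hz, Finset.sum_map, ← Finset.sum_add_distrib]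
      congr 2
      refine Finset.sum_congr rfl fun w _ => ?_
      have := @hP w
      by_cases h1 : (w : V₂) ∈ P
      · have h2 : G₂.Adj z w := hP h1
        simp [h1, h2]
      · by_cases h2 : G₂.Adj z w <;> simp [h1, h2]
    · rw [sAdj_disjSum, sum_ll _ _ _ _ _ _ hxy, sum_lr _ _ _ _ _ _ hxy.ne]
      congr 2
      unfold sAdj
      simp only [Finset.sum_map, dhgo_rr]
      rfl
  have hk' : (4 : ℤ) ≤ k := by exact_mod_cast hk
  obtain ⟨h1u, h1⟩ := h₁
  obtain ⟨h2u, h2⟩ := h₂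
  have ha : 0 ≤ ((k : ℤ) + 1) * ((k : ℤ) - 2) := mul_nonneg (by linarith) (by linarith)
  have hc : 0 ≤ (k : ℤ) - 1 := by linarith
  unfold pot2 at h1 h2 h1u h2u
  refine ⟨?_, fun R hR hR' => ?_⟩
  · obtain ⟨T, p, q, hzT, hTc, -, hTu, hp, hq, -, hs2, hs⟩ := main univ univ
    have hT := hTu.2 rfl
    unfold pot2
    rw [← hT, hs2, Finset.card_insert_of_notMem hzT] at h2u
    rw [← Finset.univ_disjSum_univ, hs, Finset.card_disjSum, ← hTc]
    simp only [Finset.mem_univ, and_self, if_true]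
    push_cast at h2u ⊢
    linear_combination h1u + h2u
  · obtain ⟨R₁, R₂, rfl⟩ : ∃ R₁ R₂, R = Finset.disjSum R₁ R₂ :=
      ⟨R.toLeft, R.toRight, (Finset.toLeft_disjSum_toRight).symm⟩
    obtain ⟨T, p, q, hzT, hTc, hTn, hTu, hp, hq, hpq, hs2, hs⟩ := main R₁ R₂
    unfold pot2
    rw [hs, Finset.card_disjSum, ← hTc]
    have hTne : T ≠ univ := fun h => hzT (h ▸ Finset.mem_univ z)
    have hcI := Finset.card_insert_of_notMem hzT
    have k2 := h2 (insert z T) (by simp)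
    rw [hs2, hcI] at k2
    have k1 := h1 R₁
    have k3 := h2 T
    have hcp : 0 ≤ ((k : ℤ) - 1) * p := mul_nonneg hc hp
    have hcq : 0 ≤ ((k : ℤ) - 1) * q := mul_nonneg hc hq
    have hfull : R₂ = univ → ((k : ℤ) + 1) * ((k : ℤ) - 2) * ((T.card : ℤ) + 1)
        - ((k : ℤ) - 1) * (sAdj G₂ T + 2 * (p + q)) =
        ((k : ℤ) + 1) * ((k : ℤ) - 2) - 2 * ((k : ℤ) - 1) := by
      intro h
      rw [← hTu.2 h, hs2, hcI] at h2u
      exact_mod_cast h2u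
    have hR1u : x ∉ R₁ ∨ y ∉ R₁ → R₁ ≠ univ := by
      rintro h rfl; simp at h
    push_cast at k2 ⊢
    by_cases hx : x ∈ R₁ <;> by_cases hy : y ∈ R₁ <;>
      simp only [hx, hy, and_self, and_true, and_false, if_true, if_false]
    · by_cases hU : R₁ = univ
      · subst hU
        have hne : R₂ ≠ univ := by
          rintro rfl; exact hR' Finset.univ_disjSum_univ
        have := k2 (fun h => hne (hTu.1 h))
        linarith
      · have e1 := k1 ⟨x, hx⟩ hU
        by_cases hne : R₂ = univ
        · have := hfull hne
          linarith
        · have := k2 (fun h => hne (hTu.1 h))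
          linarith
    · have e1 := k1 ⟨x, hx⟩ (hR1u (Or.inr hy))
      by_cases hne : R₂ = univ
      · have := hfull hne
        have e3 : ((k : ℤ) - 1) * 1 ≤ ((k : ℤ) - 1) * q :=
          mul_le_mul_of_nonneg_left (hpq hne).2 hc
        linarith
      · have := k2 (fun h => hne (hTu.1 h))
        linarith
    · have e1 := k1 ⟨y, hy⟩ (hR1u (Or.inl hx))
      by_cases hne : R₂ = univ
      · have := hfull hne
        have e3 : ((k : ℤ) - 1) * 1 ≤ ((k : ℤ) - 1) * p :=
          mul_le_mul_of_nonneg_left (hpq hne).1 hc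
        linarith
      · have := k2 (fun h => hne (hTu.1 h))
        linarith
    · have hR1 := hR1u (Or.inl hx)
      rcases R₁.eq_empty_or_nonempty with h | h
      · subst h
        have hT : T.Nonempty := by
          rw [hTn]
          by_contra hh
          rw [Finset.not_nonempty_iff_eq_empty] at hh
          subst hh
          simp at hR
        have := k3 hT hTne
        have e0 : sAdj G₁ ∅ = 0 := by simp [sAdj]
        rw [e0]
        simp only [Finset.card_empty]
        push_cast
        linarith
      · have e1 := k1 h hR1
        rcases T.eq_empty_or_nonempty with h' | h'
        · subst h'
          have e0 : sAdj G₂ ∅ = 0 := by simp [sAdj]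
          rw [e0]
          simp only [Finset.card_empty]
          push_cast
          linarith
        · have := k3 h' hTne
          linarith

lemma good_ore (k : ℕ) (hk : 4 ≤ k) {n : ℕ} (G : SimpleGraph (Fin n)) (h : IsOreFin k G) :
    GoodPot k G := by
  induction h with
  | complete h => exact GoodPot.of_iso h.some (good_top k hk)
  | comp _ _ h ih₁ ih₂ =>
    obtain ⟨x, y, z, P, hxy, hP, hPn, hQn, ⟨e⟩⟩ := h
    refine GoodPot.of_iso e ?_
    convert good_dhgo _ _ x y z P k hk ih₁ ih₂ hxy hP hPn hQn

lemma two_mul_edges {V : Type*} [Fintype V] [DecidableEq V] (G : SimpleGraph V)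
    [DecidableRel G.Adj] (R : Finset V) :
    2 * ((G.induce (R : Set V)).edgeFinset.card : ℤ) = sAdj G R := by
  have h := (G.induce (R : Set V)).sum_degrees_eq_twice_card_edges
  have h' : (2 : ℤ) * ((G.induce (R : Set V)).edgeFinset.card : ℤ) =
      ∑ v : (R : Set V), ((G.induce (R : Set V)).degree v : ℤ) := by
    exact_mod_cast h.symm
  rw [h']
  unfold sAdj
  rw [← Finset.sum_coe_sort R]
  refine Finset.sum_congr rfl fun u _ => ?_
  rw [← Finset.sum_coe_sort R]
  trans ∑ v : R, if G.Adj u v then (1 : ℤ) else 0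
  · rw [Finset.sum_boole, ← SimpleGraph.card_neighborFinset_eq_degree]
    congr 2
    ext v
    simp
  · refine Finset.sum_congr rfl fun v _ => ?_
    congr

end Aux

/-- **Claim.** Let `k ≥ 4`, let `G` be a `k`-Ore graph, and let `R` be a nonempty proper
subset of `V(G)`. Then `ρ_{k,G}(R) ≥ (k+1)(k-2)`. -/
theorem kOre_proper_subset_potential {V : Type*} [Fintype V] [DecidableEq V] (k : ℕ)
    (hk : 4 ≤ k) (G : SimpleGraph V) [DecidableRel G.Adj] (hG : IsKOre k G)
    (R : Finset V) (hR : R.Nonempty) (hR' : R ≠ Finset.univ) :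
    ((k : ℤ) + 1) * ((k : ℤ) - 2) ≤ potential k G R := by
  obtain ⟨n, H, hH, ⟨e⟩⟩ := hG
  have h := (GoodPot.of_iso e (good_ore k hk H hH)).2 R hR hR'
  unfold pot2 at h
  rw [← two_mul_edges] at h
  unfold potential
  linarith
end

section
/- Let k ≥ 4, let G be a k-Ore graph, and let W be a proper subset of V(G) with |W| ≥ 2 and ρ_{k,G}(W) ≤ (k+1)(k−2). Then the induced subgraph G[W] is connected and W contains a standard set of G. -/
open SimpleGraph

namespace KOreAux

open Classical in
noncomputable def cc {V : Type*} [Fintype V] (W : Set V) : ℤ := ∑ a, if a ∈ W then 1 else 0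

open Classical in
noncomputable def dd {V : Type*} [Fintype V] (G : SimpleGraph V) (W : Set V) : ℤ :=
  ∑ a, ∑ b, if a ∈ W ∧ b ∈ W ∧ G.Adj a b then 1 else 0

def AA (k : ℕ) : ℤ := ((k : ℤ) + 1) * ((k : ℤ) - 2)

noncomputable def rho {V : Type*} [Fintype V] (k : ℕ) (G : SimpleGraph V) (W : Set V) : ℤ :=
  AA k * cc W - ((k : ℤ) - 1) * dd G W

def ConnOn {V : Type*} (G : SimpleGraph V) (W : Set V) : Prop :=
  ∃ p ∈ W, ∀ A : Set V, p ∈ A → (∀ a ∈ W, a ∈ A → ∀ b ∈ W, G.Adj a b → b ∈ A) → W ⊆ A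

theorem ConnOn.all {V : Type*} {G : SimpleGraph V} {W : Set V} (h : ConnOn G W) (A : Set V)
    (q : V) (hq : q ∈ W) (hqA : q ∈ A)
    (hc : ∀ a ∈ W, a ∈ A → ∀ b ∈ W, G.Adj a b → b ∈ A) : W ⊆ A := by
  obtain ⟨p, hp, hp2⟩ := h
  by_cases hpA : p ∈ A
  · exact hp2 A hpA hc
  · have := hp2 Aᶜ hpA (fun a ha haA b hb hab hbA => haA (hc b hb hbA a ha hab.symm))
    exact absurd hqA (this hq)

def PropOn {V : Type*} {C : Type*} (G : SimpleGraph V) (W : Set V) (φ : V → C) : Prop :=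
  ∀ a ∈ W, ∀ b ∈ W, G.Adj a b → φ a ≠ φ b

def QV {V : Type*} (k : ℕ) (G : SimpleGraph V) (x y : V) (S : Set V) : Prop :=
  (∃ φ : V → Fin (k - 1), PropOn G S φ) ∧ (∀ φ : V → Fin (k - 1), PropOn G S φ → φ x = φ y) ∧
  ∀ a ∈ S, ∀ b ∈ S, G.Adj a b → ∃ φ : V → Fin (k - 1), φ x ≠ φ y ∧
    ∀ c ∈ S, ∀ d ∈ S, G.Adj c d → φ c = φ d → s(c, d) = s(a, b)

def Cl {V : Type*} (G : SimpleGraph V) (S : Set V) (x y : V) : Prop :=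
  ∀ a ∈ S, a ≠ x → a ≠ y → ∀ b, G.Adj a b → b ∈ S

def Std {V : Type*} [Fintype V] (k : ℕ) (G : SimpleGraph V) (S : Set V) : Prop :=
  rho k G S = AA k ∧ ∃ x y, x ≠ y ∧ x ∈ S ∧ y ∈ S ∧ ConnOn G (S \ {x, y}) ∧ Cl G S x y ∧ QV k G x y S

structure Crit {V : Type*} (k : ℕ) (G : SimpleGraph V) : Prop where
  nc : ∀ φ : V → Fin (k - 1), ∃ a b, G.Adj a b ∧ φ a = φ b
  ds : ∀ (z : V) (f : V → Fin (k - 1)), (∃ u v, G.Adj z u ∧ G.Adj z v ∧ f u ≠ f v) →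
    ∃ φ : V → Fin (k - 1), PropOn G {z}ᶜ φ ∧ ∀ u, G.Adj z u → φ u ≠ f u
  deg : ∀ z, ∃ u v, u ≠ v ∧ G.Adj z u ∧ G.Adj z v

def LM {V : Type*} [Fintype V] (k : ℕ) (G : SimpleGraph V) (W : Set V) : Prop :=
  AA k ≤ rho k G W ∧ (rho k G W ≤ AA k → ConnOn G W ∧
    ((∃ a ∈ W, ∃ b ∈ W, a ≠ b) → ∃ S ⊆ W, Std k G S))

structure Good {V : Type*} [Fintype V] (k : ℕ) (G : SimpleGraph V) : Prop where
  crit : Crit k G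
  tot : rho k G Set.univ = AA k - 2 * ((k : ℤ) - 1)
  lm : ∀ W : Set V, W.Nonempty → W ≠ Set.univ → LM k G W

/-! ### transfer -/

theorem ext_fun {V U C : Type*} (f : V → U) (S : Set V) (hf : Set.InjOn f S) (c₀ : C)
    (φ : V → C) : ∃ ψ : U → C, ∀ a ∈ S, ψ (f a) = φ a := by
  classical
  refine ⟨fun u => if h : ∃ a ∈ S, f a = u then φ h.choose else c₀, fun a ha => ?_⟩
  have h : ∃ a' ∈ S, f a' = f a := ⟨a, ha, rfl⟩
  simp only [dif_pos h]
  rw [hf h.choose_spec.1 ha h.choose_spec.2]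

theorem cc_image {V U : Type*} [Fintype V] [Fintype U] (f : V → U) (S : Set V)
    (hf : Set.InjOn f S) : cc (f '' S) = cc S := by
  classical
  unfold cc
  rw [← Finset.sum_filter, ← Finset.sum_filter]
  symm
  refine Finset.sum_bij (fun a _ => f a) ?_ ?_ ?_ ?_
  · intro a ha; simp at ha ⊢; exact ⟨a, ha, rfl⟩
  · intro a ha b hb h; simp at ha hb; exact hf ha hb h
  · intro b hb; simp at hb ⊢; exact hb
  · intros; rfl

theorem dd_image {V U : Type*} [Fintype V] [Fintype U] (G : SimpleGraph V) (H : SimpleGraph U)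
    (f : V → U) (S : Set V)
    (hf : Set.InjOn f S) (ha : ∀ a ∈ S, ∀ b ∈ S, (H.Adj (f a) (f b) ↔ G.Adj a b)) :
    dd H (f '' S) = dd G S := by
  classical
  unfold dd
  rw [← Finset.sum_product', ← Finset.sum_product', ← Finset.sum_filter, ← Finset.sum_filter]
  symm
  refine Finset.sum_bij (fun a _ => (f a.1, f a.2)) ?_ ?_ ?_ ?_
  · rintro ⟨a, b⟩ h; simp at h ⊢
    exact ⟨⟨a, h.1, rfl⟩, ⟨b, h.2.1, rfl⟩, (ha a h.1 b h.2.1).2 h.2.2⟩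
  · rintro ⟨a, b⟩ h ⟨c, d⟩ h' e; simp at h h' e ⊢
    exact ⟨hf h.1 h'.1 e.1, hf h.2.1 h'.2.1 e.2⟩
  · rintro ⟨u, v⟩ h; simp at h
    obtain ⟨⟨a, haS, rfl⟩, ⟨b, hb, rfl⟩, h⟩ := h
    exact ⟨(a, b), by simp; exact ⟨haS, hb, (ha a haS b hb).1 h⟩, rfl⟩
  · intros; rfl

theorem rho_image {V U : Type*} [Fintype V] [Fintype U] (k : ℕ) (G : SimpleGraph V)
    (H : SimpleGraph U) (f : V → U) (S : Set V)
    (hf : Set.InjOn f S) (ha : ∀ a ∈ S, ∀ b ∈ S, (H.Adj (f a) (f b) ↔ G.Adj a b)) :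
    rho k H (f '' S) = rho k G S := by
  unfold rho; rw [cc_image f S hf, dd_image G H f S hf ha]

theorem conn_image {V U : Type*} (G : SimpleGraph V) (H : SimpleGraph U) (f : V → U) (S : Set V)
    (ha : ∀ a ∈ S, ∀ b ∈ S, (G.Adj a b → H.Adj (f a) (f b)))
    (h : ConnOn G S) : ConnOn H (f '' S) := by
  obtain ⟨p, hp, h⟩ := h
  refine ⟨f p, ⟨p, hp, rfl⟩, fun A hpA hc => ?_⟩
  rintro _ ⟨a, haS, rfl⟩
  exact h (f ⁻¹' A) hpA (fun a haS haA b hb hab =>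
    hc (f a) ⟨a, haS, rfl⟩ haA (f b) ⟨b, hb, rfl⟩ (ha a haS b hb hab)) haS

theorem qv_image {V U : Type*} (k : ℕ) (hk : 4 ≤ k) (G : SimpleGraph V) (H : SimpleGraph U)
    (f : V → U) (S : Set V) (hf : Set.InjOn f S)
    (ha : ∀ a ∈ S, ∀ b ∈ S, (H.Adj (f a) (f b) ↔ G.Adj a b)) (x y : V) (hx : x ∈ S) (hy : y ∈ S)
    (h : QV k G x y S) : QV k H (f x) (f y) (f '' S) := by
  have c₀ : Fin (k - 1) := ⟨0, by omega⟩
  obtain ⟨⟨φ, h1⟩, h2, h3⟩ := h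
  refine ⟨?_, ?_, ?_⟩
  · obtain ⟨ψ, hψ⟩ := ext_fun f S hf c₀ φ
    refine ⟨ψ, ?_⟩
    rintro _ ⟨a, haS, rfl⟩ _ ⟨b, hbS, rfl⟩ hab
    rw [hψ a haS, hψ b hbS]
    exact h1 a haS b hbS ((ha a haS b hbS).1 hab)
  · intro φ hφ
    refine h2 (fun a => φ (f a)) (fun a haS b hb hab => hφ _ ⟨a, haS, rfl⟩ _ ⟨b, hb, rfl⟩
      ((ha a haS b hb).2 hab))
  · rintro _ ⟨a, haS, rfl⟩ _ ⟨b, hbS, rfl⟩ hab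
    obtain ⟨φ, hne, hφ⟩ := h3 a haS b hbS ((ha a haS b hbS).1 hab)
    obtain ⟨ψ, hψ⟩ := ext_fun f S hf c₀ φ
    refine ⟨ψ, by rw [hψ x hx, hψ y hy]; exact hne, ?_⟩
    rintro _ ⟨c, hc, rfl⟩ _ ⟨d, hd, rfl⟩ hcd
    rw [hψ c hc, hψ d hd]
    intro e
    have := hφ c hc d hd ((ha c hc d hd).1 hcd) e
    have := congrArg (Sym2.map f) this
    simpa using this

theorem std_image {V U : Type*} [Fintype V] [Fintype U] (k : ℕ) (hk : 4 ≤ k) (G : SimpleGraph V)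
    (H : SimpleGraph U)
    (f : V → U) (S : Set V) (hf : Set.InjOn f S)
    (ha : ∀ a ∈ S, ∀ b ∈ S, (H.Adj (f a) (f b) ↔ G.Adj a b))
    (hcl : ∀ x y, x ∈ S → y ∈ S → Cl G S x y → Cl H (f '' S) (f x) (f y))
    (h : Std k G S) : Std k H (f '' S) := by
  obtain ⟨h1, x, y, hxy, hx, hy, hc, hcl', hq⟩ := h
  refine ⟨by rw [rho_image k G H f S hf ha, h1], f x, f y, fun e => hxy (hf hx hy e), ⟨x, hx, rfl⟩,
    ⟨y, hy, rfl⟩, ?_, hcl x y hx hy hcl', qv_image k hk G H f S hf ha x y hx hy hq⟩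
  have : f '' S \ {f x, f y} = f '' (S \ {x, y}) := by
    ext u
    constructor
    · rintro ⟨⟨a, haS, rfl⟩, hu⟩
      refine ⟨a, ⟨haS, ?_⟩, rfl⟩
      rintro (rfl | rfl) <;> simp at hu
    · rintro ⟨a, ⟨haS, hn⟩, rfl⟩
      refine ⟨⟨a, haS, rfl⟩, ?_⟩
      rintro (e | e)
      · exact hn (Or.inl (hf haS hx e))
      · exact hn (Or.inr (hf haS hy e))
  rw [this]
  exact conn_image G H f _ (fun a ha' b hb hab => (ha a ha'.1 b hb.1).2 hab) hc

theorem good_iso {V U : Type*} [Fintype V] [Fintype U] (k : ℕ) (hk : 4 ≤ k) (G : SimpleGraph V)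
    (H : SimpleGraph U) (e : G ≃g H) (h : Good k G) : Good k H := by
  have hadj : ∀ (S : Set V), ∀ a ∈ S, ∀ b ∈ S, (H.Adj (e a) (e b) ↔ G.Adj a b) :=
    fun S a _ b _ => e.map_adj_iff
  have hadj' : ∀ a b, (H.Adj (e a) (e b) ↔ G.Adj a b) := fun a b => e.map_adj_iff
  have hinj : ∀ S : Set V, Set.InjOn e S := fun S => e.injective.injOn
  refine ⟨⟨?_, ?_, ?_⟩, ?_, ?_⟩
  · intro φ
    obtain ⟨a, b, hab, h⟩ := h.crit.nc (fun a => φ (e a))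
    exact ⟨e a, e b, (hadj' a b).2 hab, h⟩
  · intro z f hf
    obtain ⟨z, rfl⟩ := e.surjective z
    obtain ⟨u, v, hu, hv, hne⟩ := hf
    obtain ⟨u, rfl⟩ := e.surjective u
    obtain ⟨v, rfl⟩ := e.surjective v
    obtain ⟨φ, h1, h2⟩ := h.crit.ds z (fun a => f (e a)) ⟨u, v, (hadj' _ _).1 hu, (hadj' _ _).1 hv, hne⟩
    refine ⟨fun u => φ (e.symm u), ?_, ?_⟩
    · intro a ha b hb hab
      obtain ⟨a, rfl⟩ := e.surjective a
      obtain ⟨b, rfl⟩ := e.surjective b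
      simp only [RelIso.symm_apply_apply]
      refine h1 a ?_ b ?_ ((hadj' _ _).1 hab)
      · rintro rfl; exact ha rfl
      · rintro rfl; exact hb rfl
    · intro u hu
      obtain ⟨u, rfl⟩ := e.surjective u
      simp only [RelIso.symm_apply_apply]
      exact h2 u ((hadj' _ _).1 hu)
  · intro z
    obtain ⟨z, rfl⟩ := e.surjective z
    obtain ⟨u, v, h1, h2, h3⟩ := h.crit.deg z
    exact ⟨e u, e v, fun h => h1 (e.injective h), (hadj' _ _).2 h2, (hadj' _ _).2 h3⟩
  · rw [← h.tot, ← rho_image k G H e Set.univ (hinj _) (hadj _)]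
    congr 1
    rw [Set.image_univ, e.surjective.range_eq]
  · intro W hne hW
    have hWe : W = e '' (e ⁻¹' W) := (Set.image_preimage_eq W e.surjective).symm
    set W' := e ⁻¹' W with hW'
    have hn' : W'.Nonempty := by
      rw [hWe] at hne; exact Set.image_nonempty.1 hne
    have hu' : W' ≠ Set.univ := by
      intro h'
      rw [h', Set.image_univ, e.surjective.range_eq] at hWe
      exact hW hWe
    obtain ⟨h1, h2⟩ := h.lm W' hn' hu'
    rw [hWe]
    rw [LM, rho_image k G H e W' (hinj _) (hadj _)]
    refine ⟨h1, fun h3 => ?_⟩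
    obtain ⟨h4, h5⟩ := h2 h3
    refine ⟨conn_image G H e W' (fun a _ b _ hab => (hadj' a b).2 hab) h4, ?_⟩
    rintro ⟨_, ⟨a, ha, rfl⟩, _, ⟨b, hb, rfl⟩, hab⟩
    obtain ⟨S, hS, hstd⟩ := h5 ⟨a, ha, b, hb, fun h => hab (h ▸ rfl)⟩
    refine ⟨e '' S, Set.image_mono hS, std_image k hk G H e S (hinj _) (hadj _) ?_ hstd⟩
    rintro s t hs ht hcl _ ⟨a, ha, rfl⟩ h1 h2 b hab
    obtain ⟨b, rfl⟩ := e.surjective b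
    exact ⟨b, hcl a ha (fun h => h1 (h ▸ rfl)) (fun h => h2 (h ▸ rfl)) b ((hadj' _ _).1 hab), rfl⟩

/-! ### criticality consequences -/

theorem perm_two {C : Type*} [DecidableEq C] (c₁ c₂ d₁ d₂ : C) (h : c₁ = c₂ ↔ d₁ = d₂) :
    ∃ π : Equiv.Perm C, π c₁ = d₁ ∧ π c₂ = d₂ := by
  by_cases hc : c₁ = c₂
  · have := h.1 hc
    subst hc; subst this
    exact ⟨Equiv.swap c₁ d₁, by simp, by simp⟩
  · have hd : d₁ ≠ d₂ := fun e => hc (h.2 e)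
    refine ⟨(Equiv.swap c₁ d₁).trans (Equiv.swap (Equiv.swap c₁ d₁ c₂) d₂), ?_, by simp⟩
    simp only [Equiv.trans_apply, Equiv.swap_apply_left]
    refine Equiv.swap_apply_of_ne_of_ne ?_ hd
    intro e
    have : Equiv.swap c₁ d₁ c₁ = Equiv.swap c₁ d₁ c₂ := by simpa using e
    exact hc ((Equiv.swap c₁ d₁).injective this)

theorem exists_ne_color {k : ℕ} (hk : 4 ≤ k) (c : Fin (k - 1)) : ∃ d : Fin (k - 1), d ≠ c := by
  have : Nontrivial (Fin (k - 1)) := Fin.nontrivial_iff_two_le.2 (by omega)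
  exact exists_ne c

theorem Crit.edge {V : Type*} {k : ℕ} (hk : 4 ≤ k) {G : SimpleGraph V} (h : Crit k G) (u v : V)
    (huv : G.Adj u v) (c : Fin (k - 1)) : ∃ φ : V → Fin (k - 1), φ u = c ∧ φ v = c ∧
      ∀ a b, G.Adj a b → φ a = φ b → s(a, b) = s(u, v) := by
  classical
  obtain ⟨d, hd⟩ := exists_ne_color hk c
  obtain ⟨w, hw, hwv⟩ : ∃ w, G.Adj u w ∧ w ≠ v := by
    obtain ⟨p, q, hpq, hp, hq⟩ := h.deg u
    by_cases hpv : p = v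
    · exact ⟨q, hq, fun e => hpq (hpv.trans e.symm)⟩
    · exact ⟨p, hp, hpv⟩
  obtain ⟨φ, h1, h2⟩ := h.ds u (fun a => if a = v then d else c)
    ⟨v, w, huv, hw, by simp [hwv, hd]⟩
  have key : ∀ a b, G.Adj a b → (if a = u then c else φ a) = (if b = u then c else φ b) →
      s(a, b) = s(u, v) := by
    intro a b hab e
    by_cases ha : a = u
    · subst ha
      have hb : b ≠ a := hab.ne'
      simp only [if_true, if_neg hb] at e
      have := h2 b hab
      by_cases hbv : b = v
      · rw [hbv]
      · simp only [if_neg hbv] at this; exact absurd e.symm this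
    · by_cases hb : b = u
      · subst hb
        simp only [if_true, if_neg ha] at e
        have := h2 a hab.symm
        by_cases hbv : a = v
        · rw [hbv]; exact Sym2.eq_swap
        · simp only [if_neg hbv] at this; exact absurd e this
      · simp only [if_neg ha, if_neg hb] at e
        exact absurd e (h1 a ha b hb hab)
  refine ⟨fun a => if a = u then c else φ a, by simp, ?_, key⟩
  obtain ⟨a, b, hab, e⟩ := h.nc (fun a => if a = u then c else φ a)
  have h3 := key a b hab e
  have huv' : (if u = u then c else φ u) = (if v = u then c else φ v) := by
    rcases Sym2.eq_iff.1 h3 with ⟨rfl, rfl⟩ | ⟨rfl, rfl⟩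
    · exact e
    · exact e.symm
  simpa using huv'.symm

theorem Crit.vertex {V : Type*} {k : ℕ} (hk : 4 ≤ k) {G : SimpleGraph V} (h : Crit k G) (p : V) :
    ∃ φ : V → Fin (k - 1), PropOn G {p}ᶜ φ := by
  obtain ⟨u, _, _, hu, _⟩ := h.deg p
  obtain ⟨φ, _, _, h3⟩ := h.edge hk p u hu ⟨0, by omega⟩
  refine ⟨φ, fun a ha b hb hab e => ?_⟩
  rcases Sym2.eq_iff.1 (h3 a b hab e) with ⟨rfl, rfl⟩ | ⟨rfl, rfl⟩
  · exact ha rfl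
  · exact hb rfl

theorem Crit.conn {V : Type*} {k : ℕ} (hk : 4 ≤ k) {G : SimpleGraph V} (h : Crit k G) (u v : V)
    (huv : u = v ∨ G.Adj u v) : ConnOn G {u, v}ᶜ := by
  classical
  obtain ⟨p, hpu, hpv⟩ : ∃ p, p ≠ u ∧ p ≠ v := by
    obtain ⟨p, q, hpq, hp, hq⟩ := h.deg u
    by_cases hpv : p = v
    · exact ⟨q, hq.ne', fun e => hpq (hpv.trans e.symm)⟩
    · exact ⟨p, hp.ne', hpv⟩
  refine ⟨p, by simp [hpu, hpv], fun A hpA hc q hq => ?_⟩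
  by_contra hqA
  have hqu : q ≠ u := fun e => hq (by simp [e])
  have hqv : q ≠ v := fun e => hq (by simp [e])
  obtain ⟨φ, hφ⟩ := h.vertex hk p
  obtain ⟨ψ, hψ⟩ := h.vertex hk q
  obtain ⟨π, h1, h2⟩ := perm_two (φ u) (φ v) (ψ u) (ψ v) (by
    rcases huv with rfl | huv
    · simp
    · exact ⟨fun e => absurd e (hφ u hpu.symm v hpv.symm huv),
        fun e => absurd e (hψ u hqu.symm v hqv.symm huv)⟩)
  obtain ⟨a, b, hab, e⟩ := h.nc (fun a => if a ∈ A ∨ a = u ∨ a = v then ψ a else π (φ a))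
  have e1 : ∀ a, (a ∈ A ∨ a = u ∨ a = v) → 
      (if a ∈ A ∨ a = u ∨ a = v then ψ a else π (φ a)) = ψ a := fun a ha => if_pos ha
  have e2 : ∀ a, (a ∉ A ∨ a = u ∨ a = v) → 
      (if a ∈ A ∨ a = u ∨ a = v then ψ a else π (φ a)) = π (φ a) := by
    intro a ha
    by_cases hu : a = u
    · rw [if_pos (Or.inr (Or.inl hu)), hu, h1]
    by_cases hv : a = v
    · rw [if_pos (Or.inr (Or.inr hv)), hv, h2]
    rw [if_neg]; tauto
  have key : ∀ a, ((a ∈ A ∧ a ≠ u ∧ a ≠ v) ∨ (a ∉ A ∧ a ≠ u ∧ a ≠ v) ∨ (a = u ∨ a = v)) := by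
    intro a; tauto
  have case1 : (a ∈ A ∨ a = u ∨ a = v) → (b ∈ A ∨ b = u ∨ b = v) → False := by
    intro ha hb
    simp only [e1 a ha, e1 b hb] at e
    refine hψ a ?_ b ?_ hab e
    · rintro rfl; rcases ha with h | h | h <;> contradiction
    · rintro rfl; rcases hb with h | h | h <;> contradiction
  have case2 : (a ∉ A ∨ a = u ∨ a = v) → (b ∉ A ∨ b = u ∨ b = v) → False := by
    intro ha hb
    simp only [e2 a ha, e2 b hb] at e
    refine hφ a ?_ b ?_ hab (π.injective e)
    · rintro rfl; rcases ha with h | h | h <;> contradiction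
    · rintro rfl; rcases hb with h | h | h <;> contradiction
  have m : ∀ a, a ≠ u → a ≠ v → a ∈ ({u, v}ᶜ : Set V) := by intro a h1 h2; simp [h1, h2]
  rcases key a with ha | ha | ha
  · rcases key b with hb | hb | hb
    · exact case1 (Or.inl ha.1) (Or.inl hb.1)
    · exact hb.1 (hc a (m a ha.2.1 ha.2.2) ha.1 b (m b hb.2.1 hb.2.2) hab)
    · exact case1 (Or.inl ha.1) (Or.inr hb)
  · rcases key b with hb | hb | hb
    · exact ha.1 (hc b (m b hb.2.1 hb.2.2) hb.1 a (m a ha.2.1 ha.2.2) hab.symm)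
    · exact case2 (Or.inl ha.1) (Or.inl hb.1)
    · exact case2 (Or.inl ha.1) (Or.inr hb)
  · rcases key b with hb | hb | hb
    · exact case1 (Or.inr ha) (Or.inl hb.1)
    · exact case2 (Or.inr ha) (Or.inl hb.1)
    · exact case1 (Or.inr ha) (Or.inr hb)

/-! ### complete graphs -/

theorem cc_eq_card {V : Type*} [Fintype V] (W : Set V) : cc W = (W.ncard : ℤ) := by
  classical
  unfold cc
  rw [← Finset.sum_filter, Finset.sum_const, Set.ncard_eq_toFinset_card' W]
  simp only [nsmul_eq_mul, mul_one]
  congr 2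
  ext; simp

theorem dd_top {V : Type*} [Fintype V] (W : Set V) :
    dd (⊤ : SimpleGraph V) W = cc W * (cc W - 1) := by
  classical
  have : ∀ a b : V, (if a ∈ W ∧ b ∈ W ∧ (⊤ : SimpleGraph V).Adj a b then (1 : ℤ) else 0) =
      (if a ∈ W then 1 else 0) * (if b ∈ W then 1 else 0) -
        (if a = b then (if a ∈ W then 1 else 0) else 0) := by
    intro a b
    by_cases hab : a = b
    · subst hab; by_cases ha : a ∈ W <;> simp [ha]
    · by_cases ha : a ∈ W <;> by_cases hb : b ∈ W <;> simp [ha, hb, hab]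
  have e : cc W * (cc W - 1) = (∑ a : V, ∑ b : V, (if a ∈ W then (1 : ℤ) else 0) *
      (if b ∈ W then 1 else 0)) - ∑ a : V, ∑ b : V,
        (if a = b then (if a ∈ W then (1 : ℤ) else 0) else 0) := by
    rw [← Finset.sum_mul_sum]
    simp only [Finset.sum_ite_eq, Finset.mem_univ, if_true]
    unfold cc
    ring
  rw [e, ← Finset.sum_sub_distrib]
  unfold dd
  refine Finset.sum_congr rfl fun a _ => ?_
  rw [← Finset.sum_sub_distrib]
  refine Finset.sum_congr rfl fun b _ => ?_
  rw [← this a b]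
  congr

theorem good_top (k : ℕ) (hk : 4 ≤ k) : Good k (⊤ : SimpleGraph (Fin k)) := by
  classical
  have hk' : (4 : ℤ) ≤ k := by exact_mod_cast hk
  refine ⟨⟨?_, ?_, ?_⟩, ?_, ?_⟩
  · intro φ
    obtain ⟨a, b, hab, h⟩ := Fintype.exists_ne_map_eq_of_card_lt φ (by simp; omega)
    exact ⟨a, b, hab, h⟩
  · intro z f hf
    obtain ⟨u, v, hu, hv, huv⟩ := hf
    have hall : ∀ s : Finset {w : Fin k // w ≠ z},
        s.card ≤ (s.biUnion (fun w => Finset.univ.erase (f w.1))).card := by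
      intro s
      have hle : s.card ≤ k - 1 := by
        refine (Finset.card_le_univ s).trans ?_
        simp [Fintype.card_subtype_compl]
      by_cases hs : s.card = k - 1
      · have hsu : s = Finset.univ := by
          apply Finset.eq_univ_of_card
          simp [hs, Fintype.card_subtype_compl]
        have : s.biUnion (fun w => Finset.univ.erase (f w.1)) = Finset.univ := by
          ext c
          simp only [hsu, Finset.mem_biUnion, Finset.mem_erase, Finset.mem_univ, and_true, true_and,
            iff_true]
          by_cases hc : c = f u
          · exact ⟨⟨v, hv.ne'⟩, fun e => huv (hc.symm.trans e)⟩
          · exact ⟨⟨u, hu.ne'⟩, hc⟩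
        rw [this]; simp [hs]
      · by_cases hs0 : s = ∅
        · simp [hs0]
        · obtain ⟨w, hw⟩ := Finset.nonempty_iff_ne_empty.2 hs0
          have := Finset.card_le_card (Finset.subset_biUnion_of_mem
            (fun w : {w : Fin k // w ≠ z} => Finset.univ.erase (f w.1)) hw)
          simp only [Finset.card_erase_of_mem (Finset.mem_univ _), Finset.card_univ,
            Fintype.card_fin] at this
          omega
    obtain ⟨g, hg, hg2⟩ := (Finset.all_card_le_biUnion_card_iff_exists_injective _).1 hall
    refine ⟨fun w => if h : w ≠ z then g ⟨w, h⟩ else ⟨0, by omega⟩, ?_, ?_⟩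
    · intro a ha b hb hab e
      have ha' : a ≠ z := ha
      have hb' : b ≠ z := hb
      simp only [dif_pos ha', dif_pos hb'] at e
      exact hab (Subtype.ext_iff.1 (hg e))
    · intro w hw
      have hw' : w ≠ z := hw.ne'
      simp only [dif_pos hw']
      have := hg2 ⟨w, hw'⟩
      simp at this
      exact this
  · intro z
    have h1 : 1 < (Finset.univ.erase z).card := by simp; omega
    obtain ⟨u, hu, v, hv, huv⟩ := Finset.one_lt_card.1 h1
    simp at hu hv
    exact ⟨u, v, huv, fun e => hu e.symm, fun e => hv e.symm⟩
  · rw [rho, dd_top, cc_eq_card]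
    simp [AA]; ring
  · intro W hne hW
    have h1 : 1 ≤ W.ncard := (Set.ncard_pos).2 hne
    have h2 : W.ncard < k := by
      have := Set.ncard_lt_card (s := W) hW
      simpa using this
    have h2' : (W.ncard : ℤ) + 1 ≤ k := by exact_mod_cast h2
    have h1' : (1 : ℤ) ≤ W.ncard := by exact_mod_cast h1
    have hr : rho k (⊤ : SimpleGraph (Fin k)) W = AA k +
        ((W.ncard : ℤ) - 1) * (AA k - ((k : ℤ) - 1) * W.ncard) := by
      rw [rho, dd_top, cc_eq_card]; ring
    have h3 : 1 ≤ AA k - ((k : ℤ) - 1) * W.ncard := by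
      unfold AA; nlinarith
    refine ⟨by rw [hr]; nlinarith, fun hle => ?_⟩
    have h4 : W.ncard = 1 := by
      by_contra h5
      have : (2 : ℤ) ≤ W.ncard := by exact_mod_cast (by omega : 2 ≤ W.ncard)
      rw [hr] at hle
      nlinarith
    obtain ⟨p, rfl⟩ := Set.ncard_eq_one.1 h4
    refine ⟨⟨p, rfl, fun A hA _ => by simpa using hA⟩, ?_⟩
    rintro ⟨a, rfl, b, rfl, h⟩
    exact absurd rfl h

/-! ### conversion to the official definitions -/

theorem connected_of_connOn {V : Type*} (G : SimpleGraph V) (W : Set V) (h : ConnOn G W) :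
    (G.induce W).Connected := by
  obtain ⟨p, hp, h⟩ := h
  rw [SimpleGraph.connected_iff_exists_forall_reachable]
  refine ⟨⟨p, hp⟩, ?_⟩
  have := h {a | ∃ ha : a ∈ W, (G.induce W).Reachable ⟨p, hp⟩ ⟨a, ha⟩} ⟨hp, SimpleGraph.Reachable.refl _⟩ (by
    rintro a haW ⟨_, ha⟩ b hb hab
    refine ⟨hb, ha.trans ?_⟩
    apply SimpleGraph.Adj.reachable
    exact hab)
  rintro ⟨w, hw⟩
  exact (this hw).2

theorem closed_of_connected {V : Type*} (G : SimpleGraph V) (W : Set V)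
    (h : (G.induce W).Connected) (A : Set V) (p q : V) (hp : p ∈ W) (hq : q ∈ W) (hpA : p ∈ A)
    (hc : ∀ a ∈ W, a ∈ A → ∀ b ∈ W, G.Adj a b → b ∈ A) : q ∈ A := by
  obtain ⟨w⟩ := h.preconnected ⟨p, hp⟩ ⟨q, hq⟩
  have : ∀ (a b : W) (w : (G.induce W).Walk a b), (a : V) ∈ A → (b : V) ∈ A := by
    intro a b w
    induction w with
    | nil => exact id
    | cons hab _ ih => exact fun ha => ih (hc _ (Subtype.property _) ha _ (Subtype.property _) hab)
  exact this _ _ w hpA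

open Classical in
theorem dd_card {V : Type*} [Fintype V] (G : SimpleGraph V) (W : Set V) :
    dd G W = ((Finset.univ.filter (fun p : V × V => p.1 ∈ W ∧ p.2 ∈ W ∧ G.Adj p.1 p.2)).card : ℤ) := by
  unfold dd
  rw [← Finset.sum_product', ← Finset.sum_filter, Finset.sum_const]
  simp

theorem potential_eq {V : Type*} [Fintype V] [DecidableEq V] (k : ℕ) (G : SimpleGraph V)
    [DecidableRel G.Adj] (W : Finset V) : potential k G W = rho k G (W : Set V) := by
  have h1 : cc (W : Set V) = W.card := by
    rw [cc_eq_card]; simp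
  have h2 : dd G (W : Set V) = 2 * ((G.induce (W : Set V)).edgeFinset.card : ℤ) := by
    have := SimpleGraph.two_mul_card_edgeFinset (G.induce (W : Set V))
    have e : (2 * ((G.induce (W : Set V)).edgeFinset.card : ℤ)) =
      ((2 * (G.induce (W : Set V)).edgeFinset.card : ℕ) : ℤ) := by push_cast; ring
    rw [e, this]
    rw [dd_card]
    congr 1
    symm
    refine Finset.card_bij (fun a _ => (a.1.1, a.2.1)) ?_ ?_ ?_
    · rintro ⟨⟨a, ha⟩, ⟨b, hb⟩⟩ h
      simp at h ha hb ⊢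
      exact ⟨ha, hb, h⟩
    · rintro ⟨⟨a, ha⟩, ⟨b, hb⟩⟩ h ⟨⟨c, hc⟩, ⟨d, hd⟩⟩ h' e
      simpa using e
    · rintro ⟨a, b⟩ h
      simp at h
      exact ⟨(⟨a, by simpa using h.1⟩, ⟨b, by simpa using h.2.1⟩), by simpa using h.2.2, rfl⟩
  rw [potential, rho, h1, h2, AA]; ring

theorem quasi_of_qv {V : Type*} [DecidableEq V] (k : ℕ) (hk : 4 ≤ k) (G : SimpleGraph V)
    (x y : V) (S : Set V) (hx : x ∈ S) (hy : y ∈ S) (h : QV k G x y S) :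
    IsQuasiVertex k G x y S := by
  obtain ⟨⟨φ, h1⟩, h2, h3⟩ := h
  refine ⟨hx, hy, ⟨SimpleGraph.Coloring.mk (fun a => φ a.1) ?_⟩, ?_, ?_⟩
  · intro a b hab
    exact h1 a a.2 b b.2 hab
  · intro C
    obtain ⟨ψ, hψ⟩ := ext_fun (fun a : S => (a : V)) Set.univ Subtype.val_injective.injOn
      (⟨0, by omega⟩ : Fin (k - 1)) C
    have := h2 ψ (by
      intro a ha b hb hab
      have e1 := hψ ⟨a, ha⟩ trivial
      have e2 := hψ ⟨b, hb⟩ trivial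
      simp only at e1 e2
      rw [e1, e2]
      exact C.valid hab)
    have e1 := hψ ⟨x, hx⟩ trivial
    have e2 := hψ ⟨y, hy⟩ trivial
    simp only at e1 e2
    rw [← e1, ← e2, this]
  · intro a b hab
    obtain ⟨φ, h4, h5⟩ := h3 a a.2 b b.2 hab
    refine ⟨SimpleGraph.Coloring.mk (fun a => φ a.1) ?_, h4⟩
    intro c d hcd e
    rw [SimpleGraph.deleteEdges_adj] at hcd
    have := h5 c c.2 d d.2 hcd.1 e
    apply hcd.2
    simp only [Set.mem_singleton_iff]
    exact Sym2.map.injective Subtype.val_injective (by simpa using this)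

theorem final {V : Type*} [Fintype V] [DecidableEq V] (k : ℕ)
    (hk : 4 ≤ k) (G : SimpleGraph V) [DecidableRel G.Adj] (hG : Good k G)
    (W : Finset V) (hW2 : 2 ≤ W.card) (hWp : W ≠ Finset.univ)
    (hpot : potential k G W ≤ ((k : ℤ) + 1) * ((k : ℤ) - 2)) :
    (G.induce (W : Set V)).Connected ∧ ∃ S ⊆ W, IsStandardSet k G S := by
  classical
  obtain ⟨a, ha, b, hb, hab⟩ := Finset.one_lt_card.1 hW2
  obtain ⟨h1, h2⟩ := hG.lm (W : Set V) ⟨a, ha⟩ (by simpa using hWp)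
  rw [potential_eq] at hpot
  obtain ⟨h3, h4⟩ := h2 hpot
  refine ⟨connected_of_connOn G _ h3, ?_⟩
  obtain ⟨S, hSW, h5, x, y, hxy, hx, hy, hc, hcl, hq⟩ := h4 ⟨a, ha, b, hb, hab⟩
  refine ⟨S.toFinset, by intro s hs; exact hSW (by simpa using hs), ?_, x, y, hxy, by simpa, by simpa, ?_, ?_, ?_, ?_⟩
  · rw [potential_eq]; simpa [AA] using h5
  · intro hcon
    obtain ⟨p, hp, _⟩ := hc
    obtain ⟨q, hq⟩ : ∃ q, q ∉ W := by
      by_contra hh; push Not at hh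
      exact hWp (Finset.eq_univ_of_forall hh)
    have hqS : q ∉ S := fun h => hq (hSW h)
    refine hqS (closed_of_connected G _ hcon S p q hp.2 ?_ hp.1 ?_)
    · rintro (rfl | rfl) <;> contradiction
    · intro a ha haS b hb hab
      refine hcl a haS ?_ ?_ b hab
      · rintro rfl; simp at ha
      · rintro rfl; simp at ha
  · have := connected_of_connOn G _ hc
    rwa [Set.coe_toFinset]
  · intro a ha b hab
    simp at ha
    left
    simpa using hcl a ha.1 ha.2.1 ha.2.2 b hab
  · have := quasi_of_qv k hk G x y S hx hy hq
    simpa using this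

/-! ### the composition -/

section comp

variable {V₁ V₂ : Type*} {G₁ : SimpleGraph V₁} {G₂ : SimpleGraph V₂} {x y : V₁} {z : V₂} {P : Set V₂}

theorem adj_ll (a b : V₁) : (dhgoGraph G₁ G₂ x y z P).Adj (Sum.inl a) (Sum.inl b) ↔
    G₁.Adj a b ∧ s(a, b) ≠ s(x, y) := by
  simp only [dhgoGraph, SimpleGraph.fromRel_adj]
  constructor
  · rintro ⟨_, h | h⟩
    · exact h
    · exact ⟨h.1.symm, by rw [Sym2.eq_swap]; exact h.2⟩
  · intro h
    exact ⟨fun e => h.1.ne (Sum.inl_injective e), Or.inl h⟩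

theorem adj_lr (a : V₁) (b : {w : V₂ // w ≠ z}) :
    (dhgoGraph G₁ G₂ x y z P).Adj (Sum.inl a) (Sum.inr b) ↔
    (a = x ∧ (b : V₂) ∈ P) ∨ (a = y ∧ G₂.Adj z b ∧ (b : V₂) ∉ P) := by
  simp only [dhgoGraph, SimpleGraph.fromRel_adj]
  constructor
  · rintro ⟨_, h | h⟩
    · exact h
    · exact h.elim
  · intro h
    exact ⟨by simp, Or.inl h⟩

theorem adj_rl (a : V₁) (b : {w : V₂ // w ≠ z}) :
    (dhgoGraph G₁ G₂ x y z P).Adj (Sum.inr b) (Sum.inl a) ↔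
    (a = x ∧ (b : V₂) ∈ P) ∨ (a = y ∧ G₂.Adj z b ∧ (b : V₂) ∉ P) := by
  rw [SimpleGraph.adj_comm, adj_lr]

theorem adj_rr (a b : {w : V₂ // w ≠ z}) :
    (dhgoGraph G₁ G₂ x y z P).Adj (Sum.inr a) (Sum.inr b) ↔ G₂.Adj a b := by
  simp only [dhgoGraph, SimpleGraph.fromRel_adj]
  constructor
  · rintro ⟨_, h | h⟩
    · exact h
    · exact h.symm
  · intro h
    exact ⟨fun e => h.ne (congrArg Subtype.val (Sum.inr_injective e)), Or.inl h⟩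

structure Hyp (G₁ : SimpleGraph V₁) (G₂ : SimpleGraph V₂) (x y : V₁) (z : V₂) (P : Set V₂) : Prop where
  xy : G₁.Adj x y
  sub : ∀ u ∈ P, G₂.Adj z u
  p : ∃ u, u ∈ P
  r : ∃ u, G₂.Adj z u ∧ u ∉ P

theorem Hyp.swap (h : Hyp G₁ G₂ x y z P) : Hyp G₁ G₂ y x z {u | G₂.Adj z u ∧ u ∉ P} := by
  refine ⟨h.xy.symm, fun u hu => hu.1, h.r, ?_⟩
  obtain ⟨u, hu⟩ := h.p
  exact ⟨u, h.sub u hu, fun h' => h'.2 hu⟩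

theorem swap_eq (h : Hyp G₁ G₂ x y z P) :
    dhgoGraph G₁ G₂ x y z P = dhgoGraph G₁ G₂ y x z {u | G₂.Adj z u ∧ u ∉ P} := by
  have key : ∀ (a : V₁) (b : {w : V₂ // w ≠ z}),
      ((a = x ∧ (b : V₂) ∈ P) ∨ (a = y ∧ G₂.Adj z b ∧ (b : V₂) ∉ P)) ↔
      ((a = y ∧ (b : V₂) ∈ {u | G₂.Adj z u ∧ u ∉ P}) ∨
        (a = x ∧ G₂.Adj z b ∧ (b : V₂) ∉ {u | G₂.Adj z u ∧ u ∉ P})) := by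
    intro a b
    have := h.sub b
    simp only [Set.mem_ofPred_eq]
    tauto
  ext a b
  rcases a with a | a <;> rcases b with b | b
  · rw [adj_ll, adj_ll, Sym2.eq_swap (a := x)]
  · rw [adj_lr, adj_lr, key]
  · rw [adj_rl, adj_rl, key]
  · rw [adj_rr, adj_rr]

open Classical in
noncomputable def zmap (z : V₂) (v : V₁) (w : V₂) : V₁ ⊕ {w : V₂ // w ≠ z} :=
  if h : w ≠ z then Sum.inr ⟨w, h⟩ else Sum.inl v

theorem zmap_z (v : V₁) : zmap z v z = Sum.inl v := by simp [zmap]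
theorem zmap_ne (v : V₁) (w : V₂) (h : w ≠ z) : zmap z v w = Sum.inr ⟨w, h⟩ := by simp [zmap, h]

/-! criticality -/

theorem ext_ne {k : ℕ} (h : Hyp G₁ G₂ x y z P) (h2 : Crit k G₂) (c₁ c₂ : Fin (k - 1))
    (hc : c₁ ≠ c₂) : ∃ φ : V₂ → Fin (k - 1), PropOn G₂ {z}ᶜ φ ∧ (∀ u ∈ P, φ u ≠ c₁) ∧
      ∀ u, G₂.Adj z u → u ∉ P → φ u ≠ c₂ := by
  classical
  obtain ⟨p, hp⟩ := h.p
  obtain ⟨r, hr, hrP⟩ := h.r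
  obtain ⟨φ, h3, h4⟩ := h2.ds z (fun u => if u ∈ P then c₁ else c₂)
    ⟨p, r, h.sub p hp, hr, by simp [hp, hrP, hc]⟩
  refine ⟨φ, h3, fun u hu => ?_, fun u hu huP => ?_⟩
  · have := h4 u (h.sub u hu); simpa [hu] using this
  · have := h4 u hu; simpa [huP] using this

/-- a coloring of the composition with equal colors at `x`, `y` is not proper on the second part -/
theorem eq_absurd {k : ℕ} (h2 : Crit k G₂) (φ : V₁ ⊕ {w : V₂ // w ≠ z} → Fin (k - 1))
    (hφ : ∀ a b, (a = Sum.inl x ∨ a = Sum.inl y ∨ ∃ w, a = Sum.inr w) →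
      (b = Sum.inl x ∨ b = Sum.inl y ∨ ∃ w, b = Sum.inr w) →
      (dhgoGraph G₁ G₂ x y z P).Adj a b → φ a ≠ φ b)
    (e : φ (Sum.inl x) = φ (Sum.inl y)) : False := by
  obtain ⟨a, b, hab, e2⟩ := h2.nc (fun w => φ (zmap z x w))
  have key : ∀ b (hb : b ≠ z), G₂.Adj z b → φ (Sum.inl x) ≠ φ (Sum.inr ⟨b, hb⟩) := by
    intro b hb hab
    by_cases hbP : b ∈ P
    · exact hφ _ _ (by simp) (by simp) ((adj_lr _ _).2 (Or.inl ⟨rfl, hbP⟩))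
    · rw [e]
      exact hφ _ _ (by simp) (by simp) ((adj_lr _ _).2 (Or.inr ⟨rfl, hab, hbP⟩))
  by_cases ha : a = z
  · subst ha
    have hb : b ≠ a := hab.ne'
    rw [zmap_z, zmap_ne _ _ hb] at e2
    exact key b hb hab e2
  · rw [zmap_ne _ _ ha] at e2
    by_cases hb : b = z
    · subst hb
      rw [zmap_z] at e2
      exact key a ha hab.symm e2.symm
    · rw [zmap_ne _ _ hb] at e2
      exact hφ _ _ (by simp) (by simp) ((adj_rr _ _).2 hab) e2

theorem ds_x {k : ℕ} (hk : 4 ≤ k) (h : Hyp G₁ G₂ x y z P) (h1 : Crit k G₁) (h2 : Crit k G₂)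
    (f : V₁ ⊕ {w : V₂ // w ≠ z} → Fin (k - 1))
    (hf : ∃ u v, (dhgoGraph G₁ G₂ x y z P).Adj (Sum.inl x) u ∧
      (dhgoGraph G₁ G₂ x y z P).Adj (Sum.inl x) v ∧ f u ≠ f v) :
    ∃ φ : V₁ ⊕ {w : V₂ // w ≠ z} → Fin (k - 1), PropOn (dhgoGraph G₁ G₂ x y z P) {Sum.inl x}ᶜ φ ∧
      ∀ u, (dhgoGraph G₁ G₂ x y z P).Adj (Sum.inl x) u → φ u ≠ f u := by
  classical
  have hxy : x ≠ y := h.xy.ne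
  obtain ⟨φ₁, hp1, hn1, q, hq, hqz, hqf⟩ : ∃ φ₁ : V₁ → Fin (k - 1), PropOn G₁ {x}ᶜ φ₁ ∧
      (∀ u, G₁.Adj x u → u ≠ y → φ₁ u ≠ f (Sum.inl u)) ∧
      ∃ q, ∃ _ : q ∈ P, ∃ hz : q ≠ z, f (Sum.inr ⟨q, hz⟩) ≠ φ₁ y := by
    have main : ∀ d w, G₁.Adj x w → w ≠ y → f (Sum.inl w) ≠ d →
        ∃ φ₁ : V₁ → Fin (k - 1), PropOn G₁ {x}ᶜ φ₁ ∧
        (∀ u, G₁.Adj x u → u ≠ y → φ₁ u ≠ f (Sum.inl u)) ∧ φ₁ y ≠ d := by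
      intro d w hw hwy hd
      obtain ⟨φ, h3, h4⟩ := h1.ds x (fun u => if u = y then d else f (Sum.inl u))
        ⟨w, y, hw, h.xy, by simpa [hwy] using hd⟩
      refine ⟨φ, h3, fun u hu huy => ?_, ?_⟩
      · have := h4 u hu; simpa [huy] using this
      · have := h4 y h.xy; simpa using this
    by_cases hconst : ∃ q₁, ∃ _ : q₁ ∈ P, ∃ hz₁ : q₁ ≠ z, ∃ q₂, ∃ _ : q₂ ∈ P, ∃ hz₂ : q₂ ≠ z,
        f (Sum.inr ⟨q₁, hz₁⟩) ≠ f (Sum.inr ⟨q₂, hz₂⟩)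
    · obtain ⟨q₁, hq₁, hz₁, q₂, hq₂, hz₂, hne⟩ := hconst
      obtain ⟨w, hw, hwv⟩ : ∃ w, G₁.Adj x w ∧ w ≠ y := by
        obtain ⟨p, q, hpq, hp, hq⟩ := h1.deg x
        by_cases hpv : p = y
        · exact ⟨q, hq, fun e => hpq (hpv.trans e.symm)⟩
        · exact ⟨p, hp, hpv⟩
      obtain ⟨d, hd⟩ := exists_ne_color hk (f (Sum.inl w))
      obtain ⟨φ₁, a1, a2, a3⟩ := main d w hw hwv hd.symm
      refine ⟨φ₁, a1, a2, ?_⟩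
      by_cases e : f (Sum.inr ⟨q₁, hz₁⟩) = φ₁ y
      · exact ⟨q₂, hq₂, hz₂, fun e' => hne (e.trans e'.symm)⟩
      · exact ⟨q₁, hq₁, hz₁, e⟩
    · push Not at hconst
      obtain ⟨q, hq⟩ := h.p
      have hqz : q ≠ z := (h.sub q hq).ne'
      have : ∃ u, (dhgoGraph G₁ G₂ x y z P).Adj (Sum.inl x) u ∧ f u ≠ f (Sum.inr ⟨q, hqz⟩) := by
        obtain ⟨u, v, hu, hv, huv⟩ := hf
        by_cases e : f u = f (Sum.inr ⟨q, hqz⟩)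
        · exact ⟨v, hv, fun e' => huv (e.trans e'.symm)⟩
        · exact ⟨u, hu, e⟩
      obtain ⟨u, hu, hne⟩ := this
      rcases u with w | w
      · rw [adj_ll] at hu
        obtain ⟨φ₁, a1, a2, a3⟩ := main _ w hu.1 (fun e => hu.2 (by rw [e])) hne
        exact ⟨φ₁, a1, a2, q, hq, hqz, a3.symm⟩
      · rw [adj_lr] at hu
        rcases hu with hu | hu
        · exact absurd (hconst w hu.2 w.2 q hq hqz) hne
        · exact absurd hu.1 hxy
  obtain ⟨r, hr, hrP⟩ := h.r
  obtain ⟨φ₂, hp2, hn2⟩ := h2.ds z (fun w => if w ∈ P then f (zmap z x w) else φ₁ y)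
    ⟨q, r, h.sub q hq, hr, by simpa [hq, hrP, zmap_ne x q hqz] using hqf⟩
  refine ⟨Sum.elim φ₁ (fun w => φ₂ w), ?_, ?_⟩
  · have lr : ∀ a b, Sum.inl a ∈ ({Sum.inl x}ᶜ : Set (V₁ ⊕ {w : V₂ // w ≠ z})) →
        (dhgoGraph G₁ G₂ x y z P).Adj (Sum.inl a) (Sum.inr b) → φ₁ a ≠ φ₂ b := by
      intro a b ha hab
      rw [adj_lr] at hab
      rcases hab with hab | ⟨rfl, hb, hbP⟩
      · exact absurd (by rw [hab.1]; rfl) ha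
      · have := hn2 b hb
        simpa [hbP] using this.symm
    rintro (a | a) ha (b | b) hb hab
    · rw [adj_ll] at hab
      exact hp1 a (fun e => ha (congrArg Sum.inl e)) b (fun e => hb (congrArg Sum.inl e)) hab.1
    · exact lr a b ha hab
    · exact (lr b a hb hab.symm).symm
    · rw [adj_rr] at hab
      exact hp2 a a.2 b b.2 hab
  · rintro (u | u) hu
    · rw [adj_ll] at hu
      exact hn1 u hu.1 (fun e => hu.2 (by rw [e]))
    · rw [adj_lr] at hu
      rcases hu with hu | hu
      · have := hn2 u (h.sub u hu.2)
        simpa [hu.2, zmap_ne x u.1 u.2] using this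
      · exact absurd hu.1 hxy

theorem crit_comp {k : ℕ} (hk : 4 ≤ k) (h : Hyp G₁ G₂ x y z P) (h1 : Crit k G₁) (h2 : Crit k G₂) :
    Crit k (dhgoGraph G₁ G₂ x y z P) := by
  classical
  have hxy : x ≠ y := h.xy.ne
  refine ⟨?_, ?_, ?_⟩
  · intro φ
    by_contra hcon
    push Not at hcon
    by_cases e : φ (Sum.inl x) = φ (Sum.inl y)
    · exact eq_absurd h2 φ (fun a b _ _ => hcon a b) e
    · obtain ⟨a, b, hab, e2⟩ := h1.nc (fun a => φ (Sum.inl a))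
      refine hcon _ _ ((adj_ll a b).2 ⟨hab, fun e3 => ?_⟩) e2
      rcases Sym2.eq_iff.1 e3 with ⟨rfl, rfl⟩ | ⟨rfl, rfl⟩
      · exact e e2
      · exact e e2.symm
  · rintro (v | v) f hf
    · by_cases hvx : v = x
      · subst hvx; exact ds_x hk h h1 h2 f hf
      by_cases hvy : v = y
      · subst hvy
        rw [swap_eq h] at hf ⊢
        exact ds_x hk h.swap h1 h2 f hf
      have nb : ∀ u, (dhgoGraph G₁ G₂ x y z P).Adj (Sum.inl v) u →
          ∃ u', u = Sum.inl u' ∧ G₁.Adj v u' := by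
        rintro (u | u) hu
        · rw [adj_ll] at hu; exact ⟨u, rfl, hu.1⟩
        · rw [adj_lr] at hu; tauto
      obtain ⟨a, b, ha, hb, hne⟩ := hf
      obtain ⟨a, rfl, ha'⟩ := nb a ha
      obtain ⟨b, rfl, hb'⟩ := nb b hb
      obtain ⟨φ₁, hp1, hn1⟩ := h1.ds v (fun a => f (Sum.inl a)) ⟨a, b, ha', hb', hne⟩
      obtain ⟨φ₂, hp2, hP2, hR2⟩ := ext_ne h h2 (φ₁ x) (φ₁ y)
        (hp1 x (Ne.symm hvx) y (Ne.symm hvy) h.xy)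
      refine ⟨Sum.elim φ₁ (fun w => φ₂ w), ?_, ?_⟩
      · have lr : ∀ a b,
          (dhgoGraph G₁ G₂ x y z P).Adj (Sum.inl a) (Sum.inr b) → φ₁ a ≠ φ₂ b := by
          intro a b hab
          rw [adj_lr] at hab
          rcases hab with ⟨rfl, hbb⟩ | ⟨rfl, hbb, hbP⟩
          · exact (hP2 b hbb).symm
          · exact (hR2 b hbb hbP).symm
        rintro (a | a) ha (b | b) hb hab
        · rw [adj_ll] at hab
          exact hp1 a (fun e => ha (congrArg Sum.inl e)) b (fun e => hb (congrArg Sum.inl e)) hab.1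
        · exact lr a b hab
        · exact (lr b a hab.symm).symm
        · rw [adj_rr] at hab
          exact hp2 a a.2 b b.2 hab
      · intro u hu
        obtain ⟨u, rfl, hu'⟩ := nb u hu
        exact hn1 u hu'
    · let pr : V₁ ⊕ {w : V₂ // w ≠ z} → V₂ := Sum.elim (fun _ => z) Subtype.val
      let f' : V₂ → Fin (k - 1) := fun w =>
        if (v : V₂) ∈ P then f (zmap z x w) else f (zmap z y w)
      have nb : ∀ u, (dhgoGraph G₁ G₂ x y z P).Adj (Sum.inr v) u →
          G₂.Adj v (pr u) ∧ f' (pr u) = f u := by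
        rintro (u | u) hu
        · rw [adj_rl] at hu
          rcases hu with ⟨rfl, hu⟩ | ⟨rfl, hu, hP⟩
          · exact ⟨(h.sub _ hu).symm, by simp [f', pr, hu, zmap_z]⟩
          · exact ⟨hu.symm, by simp [f', pr, hP, zmap_z]⟩
        · rw [adj_rr] at hu
          exact ⟨hu, by simp [f', pr, zmap_ne _ _ u.2]⟩
      obtain ⟨a, b, ha, hb, hne⟩ := hf
      obtain ⟨φ₂, hp2, hn2⟩ := h2.ds v f' ⟨pr a, pr b, (nb a ha).1, (nb b hb).1, by
        rw [(nb a ha).2, (nb b hb).2]; exact hne⟩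
      obtain ⟨φ₁, hx1, hy1, hp1⟩ := h1.edge hk x y h.xy (φ₂ z)
      have zv : z ≠ v := v.2.symm
      refine ⟨Sum.elim φ₁ (fun w => φ₂ w), ?_, ?_⟩
      · have lr : ∀ a b, Sum.inr b ∈ ({Sum.inr v}ᶜ : Set (V₁ ⊕ {w : V₂ // w ≠ z})) →
          (dhgoGraph G₁ G₂ x y z P).Adj (Sum.inl a) (Sum.inr b) → φ₁ a ≠ φ₂ b := by
          intro a b hbv hab
          have hbv' : (b : V₂) ≠ v := fun e => hbv (by rw [Subtype.ext e]; rfl)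
          rw [adj_lr] at hab
          rcases hab with ⟨rfl, hbb⟩ | ⟨rfl, hbb, hbP⟩
          · rw [hx1]; exact hp2 z zv b hbv' (h.sub b hbb)
          · rw [hy1]; exact hp2 z zv b hbv' hbb
        rintro (a | a) ha (b | b) hb hab
        · rw [adj_ll] at hab
          exact fun e => hab.2 (hp1 a b hab.1 e)
        · exact lr a b hb hab
        · exact (lr b a ha hab.symm).symm
        · rw [adj_rr] at hab
          exact hp2 a (fun e => ha (by rw [Subtype.ext e]; rfl)) b
            (fun e => hb (by rw [Subtype.ext e]; rfl)) hab
      · intro u hu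
        obtain ⟨h3, h4⟩ := nb u hu
        have := hn2 _ h3
        rw [h4] at this
        rcases u with u | u
        · rw [adj_rl] at hu
          rcases hu with ⟨rfl, hu⟩ | ⟨rfl, hu, hP⟩
          · simpa [hx1, pr] using this
          · simpa [hy1, pr] using this
        · exact this
  · rintro (v | v)
    · obtain ⟨a, b, hab, ha, hb⟩ := h1.deg v
      by_cases hvx : v = x
      · subst hvx
        obtain ⟨q, hq⟩ := h.p
        have : ∃ w, G₁.Adj v w ∧ w ≠ y := by
          by_cases hpv : a = y
          · exact ⟨b, hb, fun e => hab (hpv.trans e.symm)⟩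
          · exact ⟨a, ha, hpv⟩
        obtain ⟨w, hw, hwy⟩ := this
        exact ⟨Sum.inl w, Sum.inr ⟨q, (h.sub q hq).ne'⟩, by simp,
          (adj_ll _ _).2 ⟨hw, by simp [hwy, hxy]⟩, (adj_lr _ _).2 (Or.inl ⟨rfl, hq⟩)⟩
      by_cases hvy : v = y
      · subst hvy
        obtain ⟨q, hq, hqP⟩ := h.r
        have : ∃ w, G₁.Adj v w ∧ w ≠ x := by
          by_cases hpv : a = x
          · exact ⟨b, hb, fun e => hab (hpv.trans e.symm)⟩
          · exact ⟨a, ha, hpv⟩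
        obtain ⟨w, hw, hwy⟩ := this
        exact ⟨Sum.inl w, Sum.inr ⟨q, hq.ne'⟩, by simp,
          (adj_ll _ _).2 ⟨hw, by simp [hwy, hvx]⟩, (adj_lr _ _).2 (Or.inr ⟨rfl, hq, hqP⟩)⟩
      refine ⟨Sum.inl a, Sum.inl b, by simpa using hab, (adj_ll _ _).2 ⟨ha, ?_⟩,
        (adj_ll _ _).2 ⟨hb, ?_⟩⟩ <;> simp [hvx, hvy]
    · obtain ⟨a, b, hab, ha, hb⟩ := h2.deg v
      have key : ∀ a, G₂.Adj v a → ∃ c, (dhgoGraph G₁ G₂ x y z P).Adj (Sum.inr v) c ∧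
          Sum.elim (fun _ => z) Subtype.val c = a := by
        intro a ha
        by_cases haz : a = z
        · subst haz
          by_cases hv : (v : V₂) ∈ P
          · exact ⟨Sum.inl x, (adj_rl _ _).2 (Or.inl ⟨rfl, hv⟩), rfl⟩
          · exact ⟨Sum.inl y, (adj_rl _ _).2 (Or.inr ⟨rfl, ha.symm, hv⟩), rfl⟩
        · exact ⟨Sum.inr ⟨a, haz⟩, (adj_rr _ _).2 ha, rfl⟩
      obtain ⟨c, hc, rfl⟩ := key a ha
      obtain ⟨d, hd, rfl⟩ := key b hb
      exact ⟨c, d, fun e => hab (by rw [e]), hc, hd⟩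

/-! potentials -/

theorem cc_def {V : Type*} [Fintype V] (W : Set V) [DecidablePred (· ∈ W)] :
    (∑ a, if a ∈ W then (1 : ℤ) else 0) = cc W := by
  unfold cc
  refine Finset.sum_congr rfl fun a _ => ?_
  congr

theorem cc_nonneg {V : Type*} [Fintype V] (W : Set V) : 0 ≤ cc W := by
  rw [cc_eq_card]; positivity

theorem cc_pos {V : Type*} [Fintype V] (W : Set V) (h : W.Nonempty) : 1 ≤ cc W := by
  rw [cc_eq_card]; exact_mod_cast (Set.ncard_pos).2 h

theorem rho_empty {V : Type*} [Fintype V] (k : ℕ) (G : SimpleGraph V) : rho k G ∅ = 0 := by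
  simp [rho, cc, dd]

def w2 (W : Set (V₁ ⊕ {w : V₂ // w ≠ z})) : Set V₂ := {w | ∃ h : w ≠ z, Sum.inr ⟨w, h⟩ ∈ W}

theorem w2_eq (W : Set (V₁ ⊕ {w : V₂ // w ≠ z})) : w2 W = Subtype.val '' (Sum.inr ⁻¹' W) := by
  ext w
  constructor
  · rintro ⟨h, hw⟩; exact ⟨⟨w, h⟩, hw, rfl⟩
  · rintro ⟨⟨w, h⟩, hw, rfl⟩; exact ⟨h, hw⟩

theorem z_notMem (W : Set (V₁ ⊕ {w : V₂ // w ≠ z})) : z ∉ w2 W := fun h => h.1 rfl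

theorem dd_insert [Fintype V₂] (hsub : ∀ u ∈ P, G₂.Adj z u) (T : Set V₂) (hz : z ∉ T) :
    dd G₂ (insert z T) = dd G₂ T + 2 * (cc (T ∩ P) + cc (T ∩ {u | G₂.Adj z u ∧ u ∉ P})) := by
  classical
  have pw : ∀ a b : V₂, (if a ∈ insert z T ∧ b ∈ insert z T ∧ G₂.Adj a b then (1 : ℤ) else 0) =
      (if a ∈ T ∧ b ∈ T ∧ G₂.Adj a b then (1 : ℤ) else 0) +
      ((if a = z then ((if b ∈ T ∩ P then 1 else 0) +
        (if b ∈ T ∩ {u | G₂.Adj z u ∧ u ∉ P} then 1 else 0)) else 0) +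
      (if b = z then ((if a ∈ T ∩ P then 1 else 0) +
        (if a ∈ T ∩ {u | G₂.Adj z u ∧ u ∉ P} then 1 else 0)) else 0)) := by
    have half : ∀ b, (if b ∈ T ∧ G₂.Adj z b then (1 : ℤ) else 0) = (if b ∈ T ∩ P then 1 else 0) +
        (if b ∈ T ∩ {u | G₂.Adj z u ∧ u ∉ P} then 1 else 0) := by
      intro b
      have := hsub b
      by_cases h1 : b ∈ T <;> by_cases h2 : b ∈ P <;> by_cases h3 : G₂.Adj z b <;>
        simp_all
    intro a b
    rw [← half a, ← half b]
    by_cases ha : a = z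
    · by_cases hb : b = z
      · simp [ha, hb, hz]
      · subst ha
        simp [hb, hz]
    · by_cases hb : b = z
      · subst hb
        simp [ha, hz, SimpleGraph.adj_comm]
      · simp [ha, hb]
  have e0 : dd G₂ (insert z T) = ∑ a : V₂, ∑ b : V₂,
      (if a ∈ insert z T ∧ b ∈ insert z T ∧ G₂.Adj a b then (1 : ℤ) else 0) := by
    unfold dd
    refine Finset.sum_congr rfl fun a _ => Finset.sum_congr rfl fun b _ => ?_
    congr
  rw [Finset.sum_congr rfl (fun a _ => Finset.sum_congr rfl (fun b _ => pw a b))] at e0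
  have e3 : dd G₂ T = ∑ a : V₂, ∑ b : V₂, if a ∈ T ∧ b ∈ T ∧ G₂.Adj a b then (1 : ℤ) else 0 := by
    unfold dd
    refine Finset.sum_congr rfl fun a _ => Finset.sum_congr rfl fun b _ => ?_
    congr
  rw [e0, e3]
  simp only [Finset.sum_add_distrib]
  have e1 : ∀ g : V₂ → ℤ, ∑ a : V₂, ∑ b : V₂, (if a = z then g b else 0) = ∑ b, g b := by
    intro g
    rw [Finset.sum_comm]
    simp
  have e2 : ∀ g : V₂ → ℤ, ∑ a : V₂, ∑ b : V₂, (if b = z then g a else 0) = ∑ b, g b := by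
    intro g
    simp
  rw [e1, e2]
  simp only [Finset.sum_add_distrib, cc_def]
  ring

theorem cc_insert [Fintype V₂] (T : Set V₂) (hz : z ∉ T) : cc (insert z T) = cc T + 1 := by
  rw [cc_eq_card, cc_eq_card, Set.ncard_insert_of_notMem hz]; push_cast; rfl

theorem cc_comp [Fintype V₁] [Fintype V₂] [Fintype {w : V₂ // w ≠ z}]
    (W : Set (V₁ ⊕ {w : V₂ // w ≠ z})) :
    cc W = cc (Sum.inl ⁻¹' W) + cc (w2 W) := by
  rw [w2_eq, cc_image _ _ Subtype.val_injective.injOn]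
  unfold cc
  rw [Fintype.sum_sum_type]
  rfl

open Classical in
theorem dd_comp [Fintype V₁] [Fintype V₂] [Fintype {w : V₂ // w ≠ z}] (h : Hyp G₁ G₂ x y z P)
    (W : Set (V₁ ⊕ {w : V₂ // w ≠ z})) :
    dd (dhgoGraph G₁ G₂ x y z P) W = dd G₁ (Sum.inl ⁻¹' W) + dd G₂ (w2 W) -
      (if Sum.inl x ∈ W ∧ Sum.inl y ∈ W then 2 else 0) +
      2 * ((if Sum.inl x ∈ W then cc (w2 W ∩ P) else 0) +
        (if Sum.inl y ∈ W then cc (w2 W ∩ {u | G₂.Adj z u ∧ u ∉ P}) else 0)) := by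
  have hxy : x ≠ y := h.xy.ne
  have ll : (∑ a : V₁, ∑ b : V₁, if Sum.inl a ∈ W ∧ Sum.inl b ∈ W ∧
      (dhgoGraph G₁ G₂ x y z P).Adj (Sum.inl a) (Sum.inl b) then (1 : ℤ) else 0) =
      dd G₁ (Sum.inl ⁻¹' W) - (if Sum.inl x ∈ W ∧ Sum.inl y ∈ W then 2 else 0) := by
    have pw : ∀ a b : V₁, (if Sum.inl a ∈ W ∧ Sum.inl b ∈ W ∧
      (dhgoGraph G₁ G₂ x y z P).Adj (Sum.inl a) (Sum.inl b) then (1 : ℤ) else 0) =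
      (if a ∈ (Sum.inl ⁻¹' W : Set V₁) ∧ b ∈ (Sum.inl ⁻¹' W : Set V₁) ∧ G₁.Adj a b then 1 else 0) -
      ((if a = x then (if b = y then (if Sum.inl x ∈ W ∧ Sum.inl y ∈ W then 1 else 0) else 0) else 0)
      + (if a = y then (if b = x then (if Sum.inl x ∈ W ∧ Sum.inl y ∈ W then 1 else 0) else 0) else 0)) := by
      intro a b
      simp only [adj_ll, Set.mem_preimage, ne_eq, Sym2.eq_iff]
      have hxy' := h.xy
      have hyx' := h.xy.symm
      by_cases ha : a = x
      · subst ha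
        by_cases hb : b = y
        · subst hb; simp [hxy, hxy']; 
        · simp [hb, hxy]
      · by_cases ha' : a = y
        · subst ha'
          by_cases hb : b = x
          · subst hb; simp [hyx', hxy.symm, and_comm]
          · simp [hb, hxy.symm]
        · simp [ha, ha']
    rw [Finset.sum_congr rfl (fun a _ => Finset.sum_congr rfl (fun b _ => pw a b))]
    simp only [Finset.sum_sub_distrib, Finset.sum_add_distrib]
    have e1 : ∀ (p q : V₁) (c : ℤ), ∑ a : V₁, ∑ b : V₁, (if a = p then (if b = q then c else 0) else 0) = c := by
      intro p q c
      rw [Finset.sum_comm]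
      simp
    rw [e1, e1]
    unfold dd
    split_ifs <;> ring
  have hcc : ∀ Q : Set V₂, (∑ b : {w : V₂ // w ≠ z}, if Sum.inr b ∈ W ∧ (b : V₂) ∈ Q then (1 : ℤ) else 0) =
      cc (w2 W ∩ Q) := by
    intro Q
    rw [w2_eq, ← Set.image_inter_preimage, cc_image _ _ Subtype.val_injective.injOn]
    unfold cc
    refine Finset.sum_congr rfl fun b _ => ?_
    congr
  have lr : (∑ a : V₁, ∑ b : {w : V₂ // w ≠ z}, if Sum.inl a ∈ W ∧ Sum.inr b ∈ W ∧
      (dhgoGraph G₁ G₂ x y z P).Adj (Sum.inl a) (Sum.inr b) then (1 : ℤ) else 0) =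
      ((if Sum.inl x ∈ W then cc (w2 W ∩ P) else 0) +
        (if Sum.inl y ∈ W then cc (w2 W ∩ {u | G₂.Adj z u ∧ u ∉ P}) else 0)) := by
    have pw : ∀ (a : V₁) (b : {w : V₂ // w ≠ z}), (if Sum.inl a ∈ W ∧ Sum.inr b ∈ W ∧
      (dhgoGraph G₁ G₂ x y z P).Adj (Sum.inl a) (Sum.inr b) then (1 : ℤ) else 0) =
      (if a = x then (if Sum.inl x ∈ W then (if Sum.inr b ∈ W ∧ (b : V₂) ∈ P then (1 : ℤ) else 0) else 0) else 0) +
      (if a = y then (if Sum.inl y ∈ W then (if Sum.inr b ∈ W ∧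
        (b : V₂) ∈ {u | G₂.Adj z u ∧ u ∉ P} then (1 : ℤ) else 0) else 0) else 0) := by
      intro a b
      simp only [adj_lr, Set.mem_ofPred_eq]
      by_cases ha : a = x
      · subst ha
        by_cases hw : Sum.inl a ∈ W <;> simp [hxy, hw]
      · by_cases ha' : a = y
        · subst ha'
          by_cases hw : Sum.inl a ∈ W <;> simp [hxy.symm, hw]
        · simp [ha, ha']
    rw [Finset.sum_congr rfl (fun a _ => Finset.sum_congr rfl (fun b _ => pw a b))]
    simp only [Finset.sum_add_distrib]
    have e1 : ∀ (p : V₁) (g : {w : V₂ // w ≠ z} → ℤ), ∑ a : V₁, ∑ b : {w : V₂ // w ≠ z}, (if a = p then g b else 0) = ∑ b, g b := by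
      intro p g
      rw [Finset.sum_comm]
      simp
    rw [e1, e1, ← hcc, ← hcc]
    congr 1
    · split_ifs
      · rfl
      · exact Finset.sum_const_zero
    · split_ifs
      · refine Finset.sum_congr rfl fun b _ => ?_
        congr
      · exact Finset.sum_const_zero
  have rr : (∑ a : {w : V₂ // w ≠ z}, ∑ b : {w : V₂ // w ≠ z}, if Sum.inr a ∈ W ∧ Sum.inr b ∈ W ∧
      (dhgoGraph G₁ G₂ x y z P).Adj (Sum.inr a) (Sum.inr b) then (1 : ℤ) else 0) = dd G₂ (w2 W) := by
    rw [w2_eq, dd_image (G₂.comap Subtype.val) G₂ Subtype.val _ Subtype.val_injective.injOn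
      (fun a _ b _ => by simp)]
    unfold dd
    simp only [adj_rr, SimpleGraph.comap_adj, Set.mem_preimage]
  have rl : (∑ a : {w : V₂ // w ≠ z}, ∑ b : V₁, if Sum.inr a ∈ W ∧ Sum.inl b ∈ W ∧
      (dhgoGraph G₁ G₂ x y z P).Adj (Sum.inr a) (Sum.inl b) then (1 : ℤ) else 0) =
      ((if Sum.inl x ∈ W then cc (w2 W ∩ P) else 0) +
        (if Sum.inl y ∈ W then cc (w2 W ∩ {u | G₂.Adj z u ∧ u ∉ P}) else 0)) := by
    rw [← lr, Finset.sum_comm]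
    refine Finset.sum_congr rfl fun a _ => Finset.sum_congr rfl fun b _ => ?_
    simp only [adj_rl, adj_lr]
    congr 1
    apply propext
    tauto
  conv_lhs => rw [dd]
  simp only [Fintype.sum_sum_type, Finset.sum_add_distrib]
  rw [ll, lr, rl, rr]
  ring

theorem rho0 [Fintype V₁] [Fintype V₂] [Fintype {w : V₂ // w ≠ z}] (k : ℕ)
    (h : Hyp G₁ G₂ x y z P) (W : Set (V₁ ⊕ {w : V₂ // w ≠ z}))
    (hx : Sum.inl x ∉ W) (hy : Sum.inl y ∉ W) :
    rho k (dhgoGraph G₁ G₂ x y z P) W = rho k G₁ (Sum.inl ⁻¹' W) + rho k G₂ (w2 W) := by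
  simp only [rho, cc_comp, dd_comp h, hx, hy]
  simp; ring

theorem rho1 [Fintype V₁] [Fintype V₂] [Fintype {w : V₂ // w ≠ z}] (k : ℕ)
    (h : Hyp G₁ G₂ x y z P) (W : Set (V₁ ⊕ {w : V₂ // w ≠ z}))
    (hx : Sum.inl x ∈ W) (hy : Sum.inl y ∉ W) :
    rho k (dhgoGraph G₁ G₂ x y z P) W = rho k G₁ (Sum.inl ⁻¹' W) + rho k G₂ (insert z (w2 W)) -
      AA k + 2 * ((k : ℤ) - 1) * cc (w2 W ∩ {u | G₂.Adj z u ∧ u ∉ P}) := by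
  simp only [rho, cc_comp, dd_comp h, hx, hy, dd_insert h.sub _ (z_notMem W), cc_insert _ (z_notMem W)]
  simp; ring

theorem rho2 [Fintype V₁] [Fintype V₂] [Fintype {w : V₂ // w ≠ z}] (k : ℕ)
    (h : Hyp G₁ G₂ x y z P) (W : Set (V₁ ⊕ {w : V₂ // w ≠ z}))
    (hx : Sum.inl x ∈ W) (hy : Sum.inl y ∈ W) :
    rho k (dhgoGraph G₁ G₂ x y z P) W = rho k G₁ (Sum.inl ⁻¹' W) + rho k G₂ (insert z (w2 W)) -
      AA k + 2 * ((k : ℤ) - 1) := by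
  simp only [rho, cc_comp, dd_comp h, hx, hy, dd_insert h.sub _ (z_notMem W), cc_insert _ (z_notMem W)]
  simp; ring


/-! standard sets of the composition -/

theorem rho_single {V : Type*} [Fintype V] (k : ℕ) (G : SimpleGraph V) (v : V) :
    rho k G {v} = AA k := by
  have h1 : cc ({v} : Set V) = 1 := by rw [cc_eq_card]; simp
  have h2 : dd G ({v} : Set V) = 0 := by
    unfold dd
    refine Finset.sum_eq_zero fun a _ => Finset.sum_eq_zero fun b _ => if_neg ?_
    rintro ⟨ha, hb, hab⟩
    exact hab.ne (ha.trans hb.symm)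
  rw [rho, h1, h2]; ring

theorem inl_adj (S : Set V₁) (hn : ¬(x ∈ S ∧ y ∈ S)) (a : V₁) (ha : a ∈ S) (b : V₁) (hb : b ∈ S) :
    (dhgoGraph G₁ G₂ x y z P).Adj (Sum.inl a) (Sum.inl b) ↔ G₁.Adj a b := by
  rw [adj_ll, and_iff_left]
  intro e
  rcases Sym2.eq_iff.1 e with ⟨rfl, rfl⟩ | ⟨rfl, rfl⟩
  · exact hn ⟨ha, hb⟩
  · exact hn ⟨hb, ha⟩

theorem t1 [Fintype V₁] [Fintype V₂] [Fintype {w : V₂ // w ≠ z}] {k : ℕ} (hk : 4 ≤ k)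
    (h : Hyp G₁ G₂ x y z P) (S : Set V₁) (hS : Std k G₁ S) (hn : ¬(x ∈ S ∧ y ∈ S)) :
    Std k (dhgoGraph G₁ G₂ x y z P) (Sum.inl '' S) := by
  refine std_image k hk G₁ _ Sum.inl S Sum.inl_injective.injOn (inl_adj S hn) ?_ hS
  intro s t hs ht hcl
  rintro _ ⟨a, haS, rfl⟩ has hat b hab
  have has' : a ≠ s := fun e => has (by rw [e])
  have hat' : a ≠ t := fun e => hat (by rw [e])
  rcases b with b | b
  · exact ⟨b, hcl a haS has' hat' b ((adj_ll _ _).1 hab).1, rfl⟩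
  · exfalso
    rcases (adj_lr _ _).1 hab with ⟨rfl, _⟩ | ⟨rfl, _⟩
    · exact hn ⟨haS, hcl a haS has' hat' _ h.xy⟩
    · exact hn ⟨hcl a haS has' hat' _ h.xy.symm, haS⟩

theorem zmap_inj (v : V₁) : Function.Injective (zmap z v) := by
  intro a b e
  by_cases ha : a = z <;> by_cases hb : b = z
  · rw [ha, hb]
  · rw [ha, zmap_z, zmap_ne _ _ hb] at e; simp at e
  · rw [hb, zmap_z, zmap_ne _ _ ha] at e; simp at e
  · rw [zmap_ne _ _ ha, zmap_ne _ _ hb] at e; simpa using e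

theorem zmap_adj (h : Hyp G₁ G₂ x y z P) (S : Set V₂)
    (hn : z ∈ S → ∀ r, G₂.Adj z r → r ∉ P → r ∉ S) (a : V₂) (ha : a ∈ S) (b : V₂) (hb : b ∈ S) :
    (dhgoGraph G₁ G₂ x y z P).Adj (zmap z x a) (zmap z x b) ↔ G₂.Adj a b := by
  have hxy := h.xy.ne
  by_cases haz : a = z <;> by_cases hbz : b = z
  · subst haz; subst hbz; simp
  · subst haz
    rw [zmap_z, zmap_ne _ _ hbz, adj_lr]
    constructor
    · rintro (h1 | h1)
      · exact h.sub _ h1.2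
      · exact absurd h1.1 hxy
    · intro h1
      by_contra h2
      exact hn ha b h1 (fun h3 => h2 (Or.inl ⟨rfl, h3⟩)) hb
  · subst hbz
    rw [zmap_z, zmap_ne _ _ haz, adj_rl]
    constructor
    · rintro (h1 | h1)
      · exact (h.sub _ h1.2).symm
      · exact absurd h1.1 hxy
    · intro h1
      by_contra h2
      exact hn hb a h1.symm (fun h3 => h2 (Or.inl ⟨rfl, h3⟩)) ha
  · rw [zmap_ne _ _ haz, zmap_ne _ _ hbz, adj_rr]

theorem t2 [Fintype V₁] [Fintype V₂] [Fintype {w : V₂ // w ≠ z}] {k : ℕ} (hk : 4 ≤ k)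
    (h : Hyp G₁ G₂ x y z P) (S : Set V₂) (hS : Std k G₂ S)
    (hn : z ∈ S → ∀ r, G₂.Adj z r → r ∉ P → r ∉ S) :
    Std k (dhgoGraph G₁ G₂ x y z P) (zmap z x '' S) := by
  refine std_image k hk G₂ _ (zmap z x) S (zmap_inj x).injOn (zmap_adj h S hn) ?_ hS
  intro s t hs ht hcl
  rintro _ ⟨a, haS, rfl⟩ has hat b hab
  have has' : a ≠ s := fun e => has (by rw [e])
  have hat' : a ≠ t := fun e => hat (by rw [e])
  by_cases haz : a = z
  · subst haz
    obtain ⟨r, hr, hrP⟩ := h.r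
    exact absurd (hcl a haS has' hat' r hr) (hn haS r hr hrP)
  · rw [zmap_ne _ _ haz] at hab
    rcases b with b | b
    · rcases (adj_rl _ _).1 hab with ⟨rfl, hP⟩ | ⟨rfl, hz, hP⟩
      · exact ⟨z, hcl a haS has' hat' z (h.sub _ hP).symm, zmap_z _⟩
      · exact absurd haS (hn (hcl a haS has' hat' z hz.symm) a hz hP)
    · exact ⟨b, hcl a haS has' hat' b ((adj_rr _ _).1 hab), zmap_ne _ _ b.2⟩

theorem w2_range : w2 (Set.range (Sum.inl : V₁ → V₁ ⊕ {w : V₂ // w ≠ z})) = ∅ := by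
  ext w; simp [w2]

theorem ins_w2 (W : Set (V₁ ⊕ {w : V₂ // w ≠ z})) (hW : ∀ w, Sum.inr w ∈ W) :
    insert z (w2 W) = Set.univ := by
  ext w
  simp only [Set.mem_insert_iff, Set.mem_univ, iff_true]
  by_cases hw : w = z
  · exact Or.inl hw
  · exact Or.inr ⟨hw, hW _⟩

theorem t3 [Fintype V₁] [Fintype V₂] [Fintype {w : V₂ // w ≠ z}] {k : ℕ} (hk : 4 ≤ k)
    (h : Hyp G₁ G₂ x y z P) (g1 : Good k G₁) :
    Std k (dhgoGraph G₁ G₂ x y z P) (Set.range Sum.inl) := by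
  refine ⟨?_, Sum.inl x, Sum.inl y, fun e => h.xy.ne (Sum.inl_injective e), ⟨x, rfl⟩, ⟨y, rfl⟩,
    ?_, ?_, ?_, ?_, ?_⟩
  · rw [rho2 k h _ (Set.mem_range_self x) (Set.mem_range_self y), w2_range]
    have e1 : (Sum.inl ⁻¹' (Set.range (Sum.inl : V₁ → V₁ ⊕ {w : V₂ // w ≠ z}))) = Set.univ := by
      ext; simp
    have e2 : insert z (∅ : Set V₂) = {z} := by simp
    rw [e1, e2, g1.tot, rho_single]; ring
  · have : (Set.range (Sum.inl : V₁ → V₁ ⊕ {w : V₂ // w ≠ z})) \ {Sum.inl x, Sum.inl y} =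
        Sum.inl '' ({x, y}ᶜ : Set V₁) := by
      ext u; rcases u with u | u <;> simp
    rw [this]
    refine conn_image G₁ _ Sum.inl _ ?_ (g1.crit.conn hk x y (Or.inr h.xy))
    intro a ha b hb hab
    exact (inl_adj {x, y}ᶜ (by simp) a ha b hb).2 hab
  · rintro _ ⟨a, rfl⟩ hax hay b hab
    rcases b with b | b
    · exact ⟨b, rfl⟩
    · exfalso
      rcases (adj_lr _ _).1 hab with ⟨rfl, _⟩ | ⟨rfl, _⟩
      · exact hax rfl
      · exact hay rfl
  · obtain ⟨φ, _, _, hφ⟩ := g1.crit.edge hk x y h.xy ⟨0, by omega⟩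
    refine ⟨Sum.elim φ (fun _ => ⟨0, by omega⟩), ?_⟩
    rintro _ ⟨a, rfl⟩ _ ⟨b, rfl⟩ hab e
    rw [adj_ll] at hab
    exact hab.2 (hφ a b hab.1 e)
  · intro φ hφ
    obtain ⟨a, b, hab, e⟩ := g1.crit.nc (fun a => φ (Sum.inl a))
    by_contra hne
    refine hφ _ ⟨a, rfl⟩ _ ⟨b, rfl⟩ ((adj_ll a b).2 ⟨hab, fun e3 => ?_⟩) e
    rcases Sym2.eq_iff.1 e3 with ⟨rfl, rfl⟩ | ⟨rfl, rfl⟩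
    · exact hne e
    · exact hne e.symm
  · rintro _ ⟨a, rfl⟩ _ ⟨b, rfl⟩ hab
    rw [adj_ll] at hab
    obtain ⟨φ, _, _, hφ⟩ := g1.crit.edge hk a b hab.1 ⟨0, by omega⟩
    refine ⟨Sum.elim φ (fun _ => ⟨0, by omega⟩), fun e => hab.2 (hφ x y h.xy e).symm, ?_⟩
    rintro _ ⟨c, rfl⟩ _ ⟨d, rfl⟩ hcd e
    have := hφ c d ((adj_ll _ _).1 hcd).1 e
    have := congrArg (Sym2.map (Sum.inl : V₁ → V₁ ⊕ {w : V₂ // w ≠ z})) this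
    simpa using this

theorem inr_conn {k : ℕ} (hk : 4 ≤ k) (h2 : Crit k G₂) (A : Set (V₁ ⊕ {w : V₂ // w ≠ z}))
    (hc : ∀ a b : {w : V₂ // w ≠ z}, Sum.inr a ∈ A → G₂.Adj a b → Sum.inr b ∈ A)
    (p : {w : V₂ // w ≠ z}) (hp : Sum.inr p ∈ A) (q : {w : V₂ // w ≠ z}) : Sum.inr q ∈ A := by
  have := (h2.conn hk z z (Or.inl rfl)).all (w2 A) p (by simpa using p.2) ⟨p.2, hp⟩ (by
    intro a ha haA b hb hab
    obtain ⟨h3, h4⟩ := haA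
    have hb' : b ≠ z := by simpa using hb
    exact ⟨hb', hc _ ⟨b, hb'⟩ h4 hab⟩)
  obtain ⟨_, h4⟩ := this (show (q : V₂) ∈ _ by simpa using q.2)
  exact h4

def pr (c : V₁ ⊕ {w : V₂ // w ≠ z}) : V₂ := Sum.elim (fun _ => z) Subtype.val c

theorem pr_adj (h : Hyp G₁ G₂ x y z P) (c d : V₁ ⊕ {w : V₂ // w ≠ z})
    (hcd : (dhgoGraph G₁ G₂ x y z P).Adj c d) (hn : ¬(pr c = z ∧ pr d = z)) :
    G₂.Adj (pr c) (pr d) := by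
  rcases c with c | c <;> rcases d with d | d
  · exact absurd ⟨rfl, rfl⟩ hn
  · rcases (adj_lr _ _).1 hcd with h1 | h1
    · exact h.sub _ h1.2
    · exact h1.2.1
  · rcases (adj_rl _ _).1 hcd with h1 | h1
    · exact (h.sub _ h1.2).symm
    · exact h1.2.1.symm
  · exact (adj_rr _ _).1 hcd

theorem pr_inj (c d c' d' : V₁ ⊕ {w : V₂ // w ≠ z})
    (h1 : (dhgoGraph G₁ G₂ x y z P).Adj c d) (h2 : (dhgoGraph G₁ G₂ x y z P).Adj c' d')
    (hn : ¬(pr c = z ∧ pr d = z)) (e1 : pr c = pr c') (e2 : pr d = pr d') : c = c' ∧ d = d' := by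
  rcases c with c | c <;> rcases d with d | d <;> rcases c' with c' | c' <;> rcases d' with d' | d' <;>
    try first
      | exact absurd ⟨rfl, rfl⟩ hn
      | exact absurd e1 c.2
      | exact absurd e2 d.2
      | exact absurd e1.symm c'.2
      | exact absurd e2.symm d'.2
  · have e2 := Subtype.ext e2
    subst e2
    rw [adj_lr] at h1 h2
    refine ⟨congrArg _ ?_, rfl⟩
    rcases h1 with h1 | h1 <;> rcases h2 with h2 | h2
    · rw [h1.1, h2.1]
    · exact absurd h1.2 h2.2.2
    · exact absurd h2.2 h1.2.2
    · rw [h1.1, h2.1]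
  · have e1 := Subtype.ext e1
    subst e1
    rw [adj_rl] at h1 h2
    refine ⟨rfl, congrArg _ ?_⟩
    rcases h1 with h1 | h1 <;> rcases h2 with h2 | h2
    · rw [h1.1, h2.1]
    · exact absurd h1.2 h2.2.2
    · exact absurd h2.2 h1.2.2
    · rw [h1.1, h2.1]
  · exact ⟨congrArg _ (Subtype.ext e1), congrArg _ (Subtype.ext e2)⟩

theorem pr_sym (c d c' d' : V₁ ⊕ {w : V₂ // w ≠ z})
    (h1 : (dhgoGraph G₁ G₂ x y z P).Adj c d) (h2 : (dhgoGraph G₁ G₂ x y z P).Adj c' d')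
    (hn : ¬(pr c = z ∧ pr d = z)) (e : s(pr c, pr d) = s(pr c', pr d')) : s(c, d) = s(c', d') := by
  rcases Sym2.eq_iff.1 e with ⟨e1, e2⟩ | ⟨e1, e2⟩
  · obtain ⟨e1, e2⟩ := pr_inj c d c' d' h1 h2 hn e1 e2
    rw [e1, e2]
  · obtain ⟨e1, e2⟩ := pr_inj c d d' c' h1 h2.symm hn e1 e2
    rw [e1, e2, Sym2.eq_swap]

theorem t5 [Fintype V₁] [Fintype V₂] [Fintype {w : V₂ // w ≠ z}] {k : ℕ} (hk : 4 ≤ k)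
    (h : Hyp G₁ G₂ x y z P) (g2 : Good k G₂) (r : V₂) (hr : G₂.Adj z r) (hrP : r ∉ P)
    (hu : ∀ u, G₂.Adj z u → u ∉ P → u = r) :
    Std k (dhgoGraph G₁ G₂ x y z P) (insert (Sum.inl x) (Set.range Sum.inr)) := by
  have hxy := h.xy.ne
  have hrz : r ≠ z := hr.ne'
  have nn : ∀ c ∈ insert (Sum.inl x) (Set.range Sum.inr), ∀ d ∈ insert (Sum.inl x) (Set.range Sum.inr),
      (dhgoGraph G₁ G₂ x y z P).Adj c d → ¬(pr c = z ∧ pr d = z) := by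
    rintro c (rfl | ⟨c, rfl⟩) d (rfl | ⟨d, rfl⟩) hcd ⟨e1, e2⟩
    · exact hcd.ne rfl
    · exact d.2 e2
    · exact c.2 e1
    · exact c.2 e1
  have nr' : ∀ c ∈ insert (Sum.inl x) (Set.range Sum.inr),
      ∀ d ∈ insert (Sum.inl x) (Set.range Sum.inr),
      (dhgoGraph G₁ G₂ x y z P).Adj c d → pr c = z → pr d ≠ r := by
    rintro c (rfl | ⟨c, rfl⟩) d (rfl | ⟨d, rfl⟩) hcd e1 e2
    · exact hcd.ne rfl
    · have e2' : (d : V₂) = r := e2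
      rw [adj_lr, e2'] at hcd
      rcases hcd with h3 | h3
      · exact hrP h3.2
      · exact hxy h3.1
    · exact c.2 e1
    · exact c.2 e1
  have nr : ∀ c ∈ insert (Sum.inl x) (Set.range Sum.inr),
      ∀ d ∈ insert (Sum.inl x) (Set.range Sum.inr),
      (dhgoGraph G₁ G₂ x y z P).Adj c d → s(pr c, pr d) ≠ s(z, r) := by
    intro c hc d hd hcd e
    rcases Sym2.eq_iff.1 e with ⟨e1, e2⟩ | ⟨e1, e2⟩
    · exact nr' c hc d hd hcd e1 e2
    · exact nr' d hd c hc hcd.symm e2 e1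
  refine ⟨?_, Sum.inl x, Sum.inr ⟨r, hrz⟩, by simp, by simp, by simp, ?_, ?_, ?_, ?_, ?_⟩
  · rw [rho1 k h _ (by simp) (by simp [hxy.symm]), ins_w2 _ (by simp), g2.tot]
    have e1 : (Sum.inl ⁻¹' (insert (Sum.inl x) (Set.range Sum.inr) :
        Set (V₁ ⊕ {w : V₂ // w ≠ z}))) = {x} := by
      ext; simp
    have e2 : w2 (insert (Sum.inl x) (Set.range Sum.inr) :
        Set (V₁ ⊕ {w : V₂ // w ≠ z})) ∩ {u | G₂.Adj z u ∧ u ∉ P} = {r} := by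
      ext u
      simp only [Set.mem_inter_iff, Set.mem_ofPred_eq, Set.mem_singleton_iff]
      constructor
      · rintro ⟨_, h3, h4⟩; exact hu u h3 h4
      · rintro rfl; exact ⟨⟨hrz, by simp⟩, hr, hrP⟩
    have e3 : cc ({r} : Set V₂) = 1 := by rw [cc_eq_card]; simp
    rw [e1, e2, e3, rho_single]; ring
  · have : (insert (Sum.inl x) (Set.range Sum.inr) :
        Set (V₁ ⊕ {w : V₂ // w ≠ z})) \ {Sum.inl x, Sum.inr ⟨r, hrz⟩} =
        zmap z x '' ({z, r}ᶜ : Set V₂) := by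
      ext u
      constructor
      · rintro ⟨h3 | ⟨u, rfl⟩, h4⟩
        · exact absurd (Or.inl h3) h4
        · refine ⟨u, ?_, zmap_ne _ _ u.2⟩
          rintro (h5 | h5)
          · exact u.2 h5
          · exact h4 (Or.inr (congrArg Sum.inr (Subtype.ext h5)))
      · rintro ⟨u, hu, rfl⟩
        have hu' : u ≠ z ∧ u ≠ r := by simpa using hu
        rw [zmap_ne _ _ hu'.1]
        simp [hu'.2]
    rw [this]
    refine conn_image G₂ _ (zmap z x) _ ?_ (g2.crit.conn hk z r (Or.inr hr))
    intro a ha b hb hab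
    exact (zmap_adj h {z, r}ᶜ (by simp) a ha b hb).2 hab
  · rintro a (rfl | ⟨a, rfl⟩) hax har b hab
    · exact absurd rfl hax
    · rcases b with b | b
      · rcases (adj_rl _ _).1 hab with ⟨rfl, _⟩ | ⟨rfl, h3, h4⟩
        · exact Or.inl rfl
        · exact absurd (congrArg Sum.inr (Subtype.ext (hu a h3 h4))) har
      · exact Or.inr ⟨b, rfl⟩
  · obtain ⟨φ, _, _, hφ⟩ := g2.crit.edge hk z r hr ⟨0, by omega⟩
    exact ⟨fun c => φ (pr c), fun c hc d hd hcd e =>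
      nr c hc d hd hcd (hφ _ _ (pr_adj h c d hcd (nn c hc d hd hcd)) e)⟩
  · intro φ hφ
    obtain ⟨a, b, hab, e⟩ := g2.crit.nc (fun a => φ (zmap z x a))
    by_contra hne
    have zm : ∀ a, zmap z x a ∈ (insert (Sum.inl x) (Set.range Sum.inr) :
        Set (V₁ ⊕ {w : V₂ // w ≠ z})) := by
      intro a
      by_cases ha : a = z
      · rw [ha, zmap_z]; simp
      · rw [zmap_ne _ _ ha]; simp
    have hz : ∀ b, G₂.Adj z b → φ (zmap z x z) = φ (zmap z x b) → False := by
      intro b hb e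
      by_cases hbP : b ∈ P
      · refine hφ _ (zm z) _ (zm b) ?_ e
        rw [zmap_z, zmap_ne _ _ hb.ne', adj_lr]
        exact Or.inl ⟨rfl, hbP⟩
      · have := hu b hb hbP
        subst this
        rw [zmap_z, zmap_ne _ _ hrz] at e
        exact hne e
    by_cases haz : a = z
    · subst haz; exact hz b hab e
    by_cases hbz : b = z
    · subst hbz; exact hz a hab.symm e.symm
    refine hφ _ (zm a) _ (zm b) ?_ e
    rw [zmap_ne _ _ haz, zmap_ne _ _ hbz, adj_rr]
    exact hab
  · intro c hc d hd hcd
    obtain ⟨φ, _, _, hφ⟩ := g2.crit.edge hk (pr c) (pr d) (pr_adj h c d hcd (nn c hc d hd hcd))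
      ⟨0, by omega⟩
    refine ⟨fun c => φ (pr c), fun e => nr c hc d hd hcd (hφ z r hr e).symm, ?_⟩
    intro c' hc' d' hd' hcd' e
    exact pr_sym _ _ _ _ hcd' hcd (nn c' hc' d' hd' hcd')
      (hφ _ _ (pr_adj h c' d' hcd' (nn c' hc' d' hd' hcd')) e)

theorem lr_ne {k : ℕ} (φ₁ : V₁ → Fin (k - 1)) (φ₂ : V₂ → Fin (k - 1))
    (hP : ∀ u ∈ P, φ₂ u ≠ φ₁ x) (hR : ∀ u, G₂.Adj z u → u ∉ P → φ₂ u ≠ φ₁ y) (a : V₁)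
    (b : {w : V₂ // w ≠ z}) (hab : (dhgoGraph G₁ G₂ x y z P).Adj (Sum.inl a) (Sum.inr b)) :
    φ₁ a ≠ φ₂ b := by
  rw [adj_lr] at hab
  rcases hab with ⟨rfl, hbb⟩ | ⟨rfl, hbb, hbP⟩
  · exact (hP b hbb).symm
  · exact (hR b hbb hbP).symm

theorem t4 [Fintype V₁] [Fintype V₂] [Fintype {w : V₂ // w ≠ z}] {k : ℕ} (hk : 4 ≤ k)
    (h : Hyp G₁ G₂ x y z P) (g2 : Good k G₂) (S : Set V₁) (hS : Std k G₁ S)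
    (hxS : x ∈ S) (hyS : y ∈ S) :
    Std k (dhgoGraph G₁ G₂ x y z P) (Sum.inl '' S ∪ Set.range Sum.inr) := by
  have hxy := h.xy.ne
  have h2 := g2.crit
  obtain ⟨h1, s, t, hst, hs, ht, hc, hcl, hq1, hq2, hq3⟩ := hS
  have memS : ∀ a, Sum.inl a ∈ (Sum.inl '' S ∪ Set.range Sum.inr : Set (V₁ ⊕ {w : V₂ // w ≠ z})) ↔
      a ∈ S := by intro a; simp
  have memr : ∀ a, Sum.inr a ∈ (Sum.inl '' S ∪ Set.range Sum.inr :
      Set (V₁ ⊕ {w : V₂ // w ≠ z})) := by intro a; simp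
  refine ⟨?_, Sum.inl s, Sum.inl t, by simpa using hst, (memS s).2 hs, (memS t).2 ht,
    ?_, ?_, ?_, ?_, ?_⟩
  · rw [rho2 k h _ ((memS x).2 hxS) ((memS y).2 hyS), ins_w2 _ memr, g2.tot]
    have e1 : (Sum.inl ⁻¹' (Sum.inl '' S ∪ Set.range Sum.inr :
        Set (V₁ ⊕ {w : V₂ // w ≠ z}))) = S := by
      ext a; exact memS a
    rw [e1, h1]; ring
  · obtain ⟨p, hp⟩ := h.p
    obtain ⟨r, hr, hrP⟩ := h.r
    have hpz := (h.sub p hp).ne'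
    have hrz := hr.ne'
    refine ⟨Sum.inr ⟨p, hpz⟩, ⟨memr _, by simp⟩, fun A hpA hA => ?_⟩
    have allr : ∀ w, Sum.inr w ∈ A := inr_conn hk h2 A (fun a b ha hab =>
      hA _ ⟨memr _, by simp⟩ ha _ ⟨memr _, by simp⟩ ((adj_rr _ _).2 hab)) _ hpA
    have ax : x ∈ S \ {s, t} → Sum.inl x ∈ A := fun hx =>
      hA _ ⟨memr ⟨p, hpz⟩, by simp⟩ (allr _) _ ⟨(memS x).2 hxS, by simpa using hx.2⟩
        ((adj_rl _ _).2 (Or.inl ⟨rfl, hp⟩))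
    have ay : y ∈ S \ {s, t} → Sum.inl y ∈ A := fun hy =>
      hA _ ⟨memr ⟨r, hrz⟩, by simp⟩ (allr _) _ ⟨(memS y).2 hyS, by simpa using hy.2⟩
        ((adj_rl _ _).2 (Or.inr ⟨rfl, hr, hrP⟩))
    have hq : ∃ q ∈ S \ {s, t}, Sum.inl q ∈ A := by
      by_cases hx : x ∈ S \ {s, t}
      · exact ⟨x, hx, ax hx⟩
      by_cases hy : y ∈ S \ {s, t}
      · exact ⟨y, hy, ay hy⟩
      exfalso
      have hx' : x = s ∨ x = t := by
        by_contra h3; exact hx ⟨hxS, by simpa using h3⟩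
      have hy' : y = s ∨ y = t := by
        by_contra h3; exact hy ⟨hyS, by simpa using h3⟩
      obtain ⟨φ, hφ⟩ := hq1
      have e1 := hq2 φ hφ
      have e2 := hφ x hxS y hyS h.xy
      rcases hx' with rfl | rfl <;> rcases hy' with rfl | rfl
      · exact hxy rfl
      · exact e2 e1
      · exact e2 e1.symm
      · exact hxy rfl
    obtain ⟨q, hqS, hqA⟩ := hq
    have alll := hc.all (Sum.inl ⁻¹' A) q hqS hqA (by
      intro a ha haA b hb hab
      by_cases e : s(a, b) = s(x, y)
      · rcases Sym2.eq_iff.1 e with ⟨rfl, rfl⟩ | ⟨rfl, rfl⟩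
        · exact ay hb
        · exact ax hb
      · exact hA _ ⟨(memS a).2 ha.1, by simpa using ha.2⟩ haA _
          ⟨(memS b).2 hb.1, by simpa using hb.2⟩ ((adj_ll _ _).2 ⟨hab, e⟩))
    rintro (u | u) ⟨hu, hu2⟩
    · exact alll ⟨(memS u).1 hu, by simpa using hu2⟩
    · exact allr u
  · rintro (a | a) ha has hat (b | b) hab
    · exact (memS b).2 (hcl a ((memS a).1 ha) (fun e => has (by rw [e])) (fun e => hat (by rw [e])) b
        ((adj_ll _ _).1 hab).1)
    · exact memr _
    · rcases (adj_rl _ _).1 hab with ⟨rfl, _⟩ | ⟨rfl, _⟩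
      · exact (memS _).2 hxS
      · exact (memS _).2 hyS
    · exact memr _
  · obtain ⟨φ₁, hφ₁⟩ := hq1
    obtain ⟨φ₂, hp2, hP2, hR2⟩ := ext_ne h h2 (φ₁ x) (φ₁ y) (hφ₁ x hxS y hyS h.xy)
    refine ⟨Sum.elim φ₁ (fun w => φ₂ w), ?_⟩
    rintro (a | a) ha (b | b) hb hab
    · exact hφ₁ a ((memS a).1 ha) b ((memS b).1 hb) ((adj_ll _ _).1 hab).1
    · exact lr_ne φ₁ φ₂ hP2 hR2 a b hab
    · exact (lr_ne φ₁ φ₂ hP2 hR2 b a hab.symm).symm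
    · exact hp2 a a.2 b b.2 ((adj_rr _ _).1 hab)
  · intro φ hφ
    refine hq2 (fun a => φ (Sum.inl a)) ?_
    have hne : φ (Sum.inl x) ≠ φ (Sum.inl y) := by
      intro e
      have mm : ∀ a : V₁ ⊕ {w : V₂ // w ≠ z}, (a = Sum.inl x ∨ a = Sum.inl y ∨ ∃ w, a = Sum.inr w) →
          a ∈ (Sum.inl '' S ∪ Set.range Sum.inr : Set (V₁ ⊕ {w : V₂ // w ≠ z})) := by
        rintro a (rfl | rfl | ⟨w, rfl⟩)
        · exact (memS _).2 hxS
        · exact (memS _).2 hyS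
        · exact memr w
      exact eq_absurd h2 φ (fun a b ha hb => hφ a (mm a ha) b (mm b hb)) e
    intro a ha b hb hab
    by_cases e : s(a, b) = s(x, y)
    · rcases Sym2.eq_iff.1 e with ⟨rfl, rfl⟩ | ⟨rfl, rfl⟩
      · exact hne
      · exact hne.symm
    · exact hφ _ ((memS a).2 ha) _ ((memS b).2 hb) ((adj_ll _ _).2 ⟨hab, e⟩)
  · intro c hc' d hd hcd
    by_cases hn : pr c = z ∧ pr d = z
    · rcases c with a | a
      swap
      · exact absurd hn.1 a.2
      rcases d with b | b
      swap
      · exact absurd hn.2 b.2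
      rw [adj_ll] at hcd
      obtain ⟨φ₁, hne, hφ₁⟩ := hq3 a ((memS a).1 hc') b ((memS b).1 hd) hcd.1
      obtain ⟨φ₂, hp2, hP2, hR2⟩ := ext_ne h h2 (φ₁ x) (φ₁ y)
        (fun e => hcd.2 (hφ₁ x hxS y hyS h.xy e).symm)
      refine ⟨Sum.elim φ₁ (fun w => φ₂ w), hne, ?_⟩
      rintro (a' | a') ha (b' | b') hb hab e
      · have := hφ₁ a' ((memS a').1 ha) b' ((memS b').1 hb) ((adj_ll _ _).1 hab).1 e
        have := congrArg (Sym2.map (Sum.inl : V₁ → V₁ ⊕ {w : V₂ // w ≠ z})) this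
        simpa using this
      · exact absurd e (lr_ne φ₁ φ₂ hP2 hR2 a' b' hab)
      · exact absurd e.symm (lr_ne φ₁ φ₂ hP2 hR2 b' a' hab.symm)
      · exact absurd e (hp2 a' a'.2 b' b'.2 ((adj_rr _ _).1 hab))
    · obtain ⟨φ₁, hne, hφ₁⟩ := hq3 x hxS y hyS h.xy
      by_cases e0 : φ₁ x = φ₁ y
      · obtain ⟨φ₂', _, _, hφ₂'⟩ := h2.edge hk (pr c) (pr d) (pr_adj h c d hcd hn) ⟨0, by omega⟩
        obtain ⟨π, hπ, _⟩ := perm_two (φ₂' z) (φ₂' z) (φ₁ x) (φ₁ x) (by simp)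
        refine ⟨Sum.elim φ₁ (fun w => π (φ₂' w)), hne, ?_⟩
        have key : ∀ c' d', (dhgoGraph G₁ G₂ x y z P).Adj c' d' → ¬(pr c' = z ∧ pr d' = z) →
            π (φ₂' (pr c')) = π (φ₂' (pr d')) → s(c', d') = s(c, d) := by
          intro c' d' hcd' hn' e
          exact pr_sym _ _ _ _ hcd' hcd hn' (hφ₂' _ _ (pr_adj h c' d' hcd' hn') (π.injective e))
        have hz : ∀ a b, (dhgoGraph G₁ G₂ x y z P).Adj (Sum.inl a) (Sum.inr b) →
            φ₁ a = π (φ₂' z) := by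
          intro a b hab
          rw [hπ]
          rcases (adj_lr _ _).1 hab with ⟨rfl, _⟩ | ⟨rfl, _⟩
          · rfl
          · exact e0.symm
        rintro (a' | a') ha (b' | b') hb hab e
        · exact absurd (hφ₁ a' ((memS a').1 ha) b' ((memS b').1 hb) ((adj_ll _ _).1 hab).1 e)
            ((adj_ll _ _).1 hab).2
        · exact key _ _ hab (fun h3 => b'.2 h3.2) ((hz a' b' hab).symm.trans e)
        · exact key _ _ hab (fun h3 => a'.2 h3.1) (e.trans (hz b' a' hab.symm))
        · exact key _ _ hab (fun h3 => a'.2 h3.1) e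
      · obtain ⟨φ₂, hp2, hP2, hR2⟩ := ext_ne h h2 (φ₁ x) (φ₁ y) e0
        refine ⟨Sum.elim φ₁ (fun w => φ₂ w), hne, ?_⟩
        rintro (a' | a') ha (b' | b') hb hab e
        · exact absurd (hφ₁ a' ((memS a').1 ha) b' ((memS b').1 hb) ((adj_ll _ _).1 hab).1 e)
            ((adj_ll _ _).1 hab).2
        · exact absurd e (lr_ne φ₁ φ₂ hP2 hR2 a' b' hab)
        · exact absurd e.symm (lr_ne φ₁ φ₂ hP2 hR2 b' a' hab.symm)
        · exact absurd e (hp2 a' a'.2 b' b'.2 ((adj_rr _ _).1 hab))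

/-! the main induction step -/

theorem AA_pos {k : ℕ} (hk : 4 ≤ k) : 0 < AA k := by
  have hk' : (4 : ℤ) ≤ k := by exact_mod_cast hk
  unfold AA; nlinarith

theorem bb_pos {k : ℕ} (hk : 4 ≤ k) : 0 < 2 * ((k : ℤ) - 1) := by
  have hk' : (4 : ℤ) ≤ k := by exact_mod_cast hk
  linarith

theorem lm0 [Fintype V₁] [Fintype V₂] [Fintype {w : V₂ // w ≠ z}] {k : ℕ} (hk : 4 ≤ k)
    (h : Hyp G₁ G₂ x y z P) (g1 : Good k G₁) (g2 : Good k G₂)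
    (W : Set (V₁ ⊕ {w : V₂ // w ≠ z})) (hW : W.Nonempty) (hx : Sum.inl x ∉ W) (hy : Sum.inl y ∉ W) :
    LM k (dhgoGraph G₁ G₂ x y z P) W := by
  have hA := AA_pos hk
  have e := rho0 k h W hx hy
  have n1 : (Sum.inl ⁻¹' W : Set V₁) ≠ Set.univ := fun e => hx (by
    have : x ∈ (Sum.inl ⁻¹' W : Set V₁) := by rw [e]; trivial
    exact this)
  have n2 : w2 W ≠ Set.univ := fun e => z_notMem W (by rw [e]; trivial)
  by_cases h1 : (Sum.inl ⁻¹' W : Set V₁).Nonempty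
  · obtain ⟨a1, b1⟩ := g1.lm _ h1 n1
    by_cases h2 : (w2 W).Nonempty
    · obtain ⟨a2, b2⟩ := g2.lm _ h2 n2
      exact ⟨by linarith, fun hle => by linarith⟩
    · rw [Set.not_nonempty_iff_eq_empty] at h2
      rw [h2, rho_empty, add_zero] at e
      have eW : W = Sum.inl '' (Sum.inl ⁻¹' W : Set V₁) := by
        ext u
        constructor
        · intro hu
          rcases u with u | u
          · exact ⟨u, hu, rfl⟩
          · have : (u : V₂) ∈ w2 W := ⟨u.2, hu⟩
            rw [h2] at this; exact this.elim
        · rintro ⟨u, hu, rfl⟩; exact hu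
      refine ⟨by rw [e]; exact a1, fun hle => ?_⟩
      rw [e] at hle
      obtain ⟨b1, b3⟩ := b1 hle
      constructor
      · rw [eW]
        exact conn_image G₁ _ Sum.inl (Sum.inl ⁻¹' W)
          (fun a ha b hb hab => (inl_adj (Sum.inl ⁻¹' W) (fun h3 => hx h3.1) a ha b hb).2 hab) b1
      · rintro ⟨a, ha, b, hb, hab⟩
        rw [eW] at ha hb
        obtain ⟨a, ha, rfl⟩ := ha
        obtain ⟨b, hb, rfl⟩ := hb
        obtain ⟨S, hS, hstd⟩ := b3 ⟨a, ha, b, hb, fun e => hab (by rw [e])⟩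
        refine ⟨Sum.inl '' S, ?_, t1 hk h S hstd (fun h3 => hx (hS h3.1))⟩
        rintro _ ⟨a, ha, rfl⟩; exact hS ha
  · rw [Set.not_nonempty_iff_eq_empty] at h1
    rw [h1, rho_empty, zero_add] at e
    have eW : W = zmap z x '' w2 W := by
      ext u
      constructor
      · intro hu
        rcases u with u | u
        · have : u ∈ (Sum.inl ⁻¹' W : Set V₁) := hu
          rw [h1] at this; exact this.elim
        · exact ⟨u, ⟨u.2, hu⟩, zmap_ne _ _ u.2⟩
      · rintro ⟨u, ⟨hz, hu⟩, rfl⟩; rw [zmap_ne _ _ hz]; exact hu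
    have h2 : (w2 W).Nonempty := by
      rw [eW] at hW; exact hW.of_image
    obtain ⟨a1, b1⟩ := g2.lm _ h2 n2
    refine ⟨by rw [e]; exact a1, fun hle => ?_⟩
    rw [e] at hle
    obtain ⟨b1, b3⟩ := b1 hle
    constructor
    · rw [eW]
      exact conn_image G₂ _ (zmap z x) _
        (fun a ha b hb hab => (zmap_adj h _ (fun h3 => absurd h3 (z_notMem W)) a ha b hb).2 hab) b1
    · rintro ⟨a, ha, b, hb, hab⟩
      rw [eW] at ha hb
      obtain ⟨a, ha, rfl⟩ := ha
      obtain ⟨b, hb, rfl⟩ := hb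
      obtain ⟨S, hS, hstd⟩ := b3 ⟨a, ha, b, hb, fun e => hab (by rw [e])⟩
      refine ⟨zmap z x '' S, ?_, t2 hk h S hstd (fun h3 => absurd (hS h3) (z_notMem W))⟩
      conv_rhs => rw [eW]
      exact Set.image_mono hS

theorem lm2 [Fintype V₁] [Fintype V₂] [Fintype {w : V₂ // w ≠ z}] {k : ℕ} (hk : 4 ≤ k)
    (h : Hyp G₁ G₂ x y z P) (g1 : Good k G₁) (g2 : Good k G₂)
    (W : Set (V₁ ⊕ {w : V₂ // w ≠ z})) (hWu : W ≠ Set.univ)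
    (hx : Sum.inl x ∈ W) (hy : Sum.inl y ∈ W) :
    LM k (dhgoGraph G₁ G₂ x y z P) W := by
  have hA := AA_pos hk
  have hB := bb_pos hk
  have hxy := h.xy.ne
  have e := rho2 k h W hx hy
  by_cases h1 : (Sum.inl ⁻¹' W : Set V₁) = Set.univ
  · have allW : ∀ a, Sum.inl a ∈ W := fun a => by
      have : a ∈ (Sum.inl ⁻¹' W : Set V₁) := by rw [h1]; trivial
      exact this
    have h2 : insert z (w2 W) ≠ Set.univ := by
      intro h2
      apply hWu
      ext u
      simp only [Set.mem_univ, iff_true]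
      rcases u with u | u
      · exact allW u
      · have : (u : V₂) ∈ insert z (w2 W) := by rw [h2]; trivial
        rcases this with h3 | ⟨_, h3⟩
        · exact absurd h3 u.2
        · exact h3
    rw [h1, g1.tot] at e
    obtain ⟨a2, b2⟩ := g2.lm _ ⟨z, Or.inl rfl⟩ h2
    refine ⟨by linarith, fun hle => ?_⟩
    obtain ⟨b2, _⟩ := b2 (by linarith)
    refine ⟨?_, fun _ => ⟨Set.range Sum.inl, ?_, t3 hk h g1⟩⟩
    · refine ⟨Sum.inl x, hx, fun A hxA hcA => ?_⟩
      obtain ⟨x', hx', hxy'⟩ : ∃ w, G₁.Adj x w ∧ w ≠ y := by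
        obtain ⟨p, q, hpq, hp, hq⟩ := g1.crit.deg x
        by_cases hpv : p = y
        · exact ⟨q, hq, fun e => hpq (hpv.trans e.symm)⟩
        · exact ⟨p, hp, hpv⟩
      obtain ⟨y', hy', hyx'⟩ : ∃ w, G₁.Adj y w ∧ w ≠ x := by
        obtain ⟨p, q, hpq, hp, hq⟩ := g1.crit.deg y
        by_cases hpv : p = x
        · exact ⟨q, hq, fun e => hpq (hpv.trans e.symm)⟩
        · exact ⟨p, hp, hpv⟩
      have hx'A : Sum.inl x' ∈ A := hcA _ hx hxA _ (allW x') ((adj_ll _ _).2 ⟨hx', by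
        simp [hxy', hxy]⟩)
      have rest := (g1.crit.conn hk x y (Or.inr h.xy)).all (Sum.inl ⁻¹' A) x'
        (by simp [hxy', hx'.ne']) hx'A (by
          intro a ha haA b hb hab
          exact hcA _ (allW a) haA _ (allW b)
            ((inl_adj {x, y}ᶜ (by simp) a ha b hb).2 hab))
      have hyA : Sum.inl y ∈ A := by
        have : y' ∈ ({x, y}ᶜ : Set V₁) := by simp [hyx', hy'.ne']
        exact hcA _ (allW y') (rest this) _ hy ((adj_ll _ _).2 ⟨hy'.symm, by
          simp [hyx', hxy.symm]⟩)
      have alll : ∀ a, Sum.inl a ∈ A := by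
        intro a
        by_cases hax : a = x
        · rw [hax]; exact hxA
        by_cases hay : a = y
        · rw [hay]; exact hyA
        exact rest (show a ∈ _ by simp [hax, hay])
      have all2 := b2.all (zmap z x ⁻¹' A) z (Or.inl rfl)
        (by rw [Set.mem_preimage, zmap_z]; exact hxA) (by
        intro a ha haA b hb hab
        rw [Set.mem_preimage] at haA ⊢
        by_cases hbz : b = z
        · rw [hbz, zmap_z]; exact hxA
        obtain ⟨_, hbW⟩ := hb.resolve_left hbz
        rw [zmap_ne _ _ hbz]
        by_cases haz : a = z
        · subst haz
          by_cases hbP : b ∈ P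
          · exact hcA _ hx hxA _ hbW ((adj_lr _ _).2 (Or.inl ⟨rfl, hbP⟩))
          · exact hcA _ hy hyA _ hbW ((adj_lr _ _).2 (Or.inr ⟨rfl, hab, hbP⟩))
        · obtain ⟨_, haW⟩ := ha.resolve_left haz
          rw [zmap_ne _ _ haz] at haA
          exact hcA _ haW haA _ hbW ((adj_rr _ _).2 hab))
      rintro (u | u) hu
      · exact alll u
      · have : zmap z x u ∈ A := all2 (Or.inr ⟨u.2, hu⟩)
        rwa [zmap_ne _ _ u.2] at this
    · rintro _ ⟨a, rfl⟩; exact allW a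
  · obtain ⟨a1, b1⟩ := g1.lm _ ⟨x, hx⟩ h1
    by_cases h2 : insert z (w2 W) = Set.univ
    · have allr : ∀ u, Sum.inr u ∈ W := fun u => by
        have : (u : V₂) ∈ insert z (w2 W) := by rw [h2]; trivial
        rcases this with h3 | ⟨_, h3⟩
        · exact absurd h3 u.2
        · exact h3
      rw [h2, g2.tot] at e
      refine ⟨by linarith, fun hle => ?_⟩
      obtain ⟨b1, b3⟩ := b1 (by linarith)
      constructor
      · refine ⟨Sum.inl x, hx, fun A hxA hcA => ?_⟩
        obtain ⟨p, hp⟩ := h.p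
        obtain ⟨r, hr, hrP⟩ := h.r
        have hpz := (h.sub p hp).ne'
        have hrz := hr.ne'
        have hpA : Sum.inr ⟨p, hpz⟩ ∈ A :=
          hcA _ hx hxA _ (allr _) ((adj_lr _ _).2 (Or.inl ⟨rfl, hp⟩))
        have allA : ∀ w, Sum.inr w ∈ A := inr_conn hk g2.crit A (fun a b ha hab =>
          hcA _ (allr _) ha _ (allr _) ((adj_rr _ _).2 hab)) _ hpA
        have hyA : Sum.inl y ∈ A :=
          hcA _ (allr ⟨r, hrz⟩) (allA _) _ hy ((adj_rl _ _).2 (Or.inr ⟨rfl, hr, hrP⟩))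
        have alll := b1.all (Sum.inl ⁻¹' A) x hx hxA (by
          intro a ha haA b hb hab
          by_cases e : s(a, b) = s(x, y)
          · rcases Sym2.eq_iff.1 e with ⟨rfl, rfl⟩ | ⟨rfl, rfl⟩
            · exact hyA
            · exact hxA
          · exact hcA _ ha haA _ hb ((adj_ll _ _).2 ⟨hab, e⟩))
        rintro (u | u) hu
        · exact alll hu
        · exact allA u
      · intro _
        obtain ⟨S, hS, hstd⟩ := b3 ⟨x, hx, y, hy, hxy⟩
        have hS' : Sum.inl '' S ⊆ W := by rintro _ ⟨a, ha, rfl⟩; exact hS ha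
        by_cases hn : x ∈ S ∧ y ∈ S
        · refine ⟨_, Set.union_subset hS' ?_, t4 hk h g2 S hstd hn.1 hn.2⟩
          rintro _ ⟨a, rfl⟩; exact allr a
        · exact ⟨_, hS', t1 hk h S hstd hn⟩
    · obtain ⟨a2, b2⟩ := g2.lm _ ⟨z, Or.inl rfl⟩ h2
      exact ⟨by linarith, fun hle => by linarith⟩

theorem lm1 [Fintype V₁] [Fintype V₂] [Fintype {w : V₂ // w ≠ z}] {k : ℕ} (hk : 4 ≤ k)
    (h : Hyp G₁ G₂ x y z P) (g1 : Good k G₁) (g2 : Good k G₂)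
    (W : Set (V₁ ⊕ {w : V₂ // w ≠ z}))
    (hx : Sum.inl x ∈ W) (hy : Sum.inl y ∉ W) :
    LM k (dhgoGraph G₁ G₂ x y z P) W := by
  have hA := AA_pos hk
  have hB := bb_pos hk
  have hxy := h.xy.ne
  have e := rho1 k h W hx hy
  have n1 : (Sum.inl ⁻¹' W : Set V₁) ≠ Set.univ := fun e => hy (by
    have : y ∈ (Sum.inl ⁻¹' W : Set V₁) := by rw [e]; trivial
    exact this)
  have hn : ¬(x ∈ (Sum.inl ⁻¹' W : Set V₁) ∧ y ∈ (Sum.inl ⁻¹' W : Set V₁)) := fun h3 => hy h3.2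
  obtain ⟨a1, b1⟩ := g1.lm _ ⟨x, hx⟩ n1
  have closeL : ∀ A : Set (V₁ ⊕ {w : V₂ // w ≠ z}), Sum.inl x ∈ A →
      (∀ a ∈ W, a ∈ A → ∀ b ∈ W, (dhgoGraph G₁ G₂ x y z P).Adj a b → b ∈ A) →
      ConnOn G₁ (Sum.inl ⁻¹' W) → ∀ u, Sum.inl u ∈ W → Sum.inl u ∈ A := by
    intro A hxA hcA hco u hu
    exact hco.all (Sum.inl ⁻¹' A) x hx hxA (fun a ha haA b hb hab =>
      hcA _ ha haA _ hb ((inl_adj _ hn a ha b hb).2 hab)) hu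
  have stdL : ∀ S ⊆ (Sum.inl ⁻¹' W : Set V₁), Std k G₁ S →
      ∃ S' ⊆ W, Std k (dhgoGraph G₁ G₂ x y z P) S' := by
    intro S hS hstd
    refine ⟨Sum.inl '' S, ?_, t1 hk h S hstd (fun h3 => hy (hS h3.2))⟩
    rintro _ ⟨a, ha, rfl⟩; exact hS ha
  by_cases h2 : insert z (w2 W) = Set.univ
  · have allr : ∀ u, Sum.inr u ∈ W := fun u => by
      have : (u : V₂) ∈ insert z (w2 W) := by rw [h2]; trivial
      rcases this with h3 | ⟨_, h3⟩
      · exact absurd h3 u.2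
      · exact h3
    obtain ⟨r, hr, hrP⟩ := h.r
    have hc1 := cc_pos (w2 W ∩ {u | G₂.Adj z u ∧ u ∉ P}) ⟨r, ⟨hr.ne', allr _⟩, hr, hrP⟩
    rw [h2, g2.tot] at e
    refine ⟨by nlinarith, fun hle => ?_⟩
    have hc2 : cc (w2 W ∩ {u | G₂.Adj z u ∧ u ∉ P}) = 1 := by
      by_contra h3
      have : 2 ≤ cc (w2 W ∩ {u | G₂.Adj z u ∧ u ∉ P}) := by omega
      nlinarith
    rw [hc2] at e
    obtain ⟨b1, b3⟩ := b1 (by linarith)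
    constructor
    · refine ⟨Sum.inl x, hx, fun A hxA hcA => ?_⟩
      obtain ⟨p, hp⟩ := h.p
      have hpA : Sum.inr ⟨p, (h.sub p hp).ne'⟩ ∈ A :=
        hcA _ hx hxA _ (allr _) ((adj_lr _ _).2 (Or.inl ⟨rfl, hp⟩))
      have allA : ∀ w, Sum.inr w ∈ A := inr_conn hk g2.crit A (fun a b ha hab =>
        hcA _ (allr _) ha _ (allr _) ((adj_rr _ _).2 hab)) _ hpA
      rintro (u | u) hu
      · exact closeL A hxA hcA b1 u hu
      · exact allA u
    · intro _
      by_cases h3 : ∃ a ∈ (Sum.inl ⁻¹' W : Set V₁), ∃ b ∈ (Sum.inl ⁻¹' W : Set V₁), a ≠ b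
      · obtain ⟨S, hS, hstd⟩ := b3 h3
        exact stdL S hS hstd
      · refine ⟨_, ?_, t5 hk h g2 r hr hrP ?_⟩
        · rintro _ (rfl | ⟨a, rfl⟩)
          · exact hx
          · exact allr a
        · intro u hu huP
          rw [cc_eq_card] at hc2
          obtain ⟨v, hv⟩ := Set.ncard_eq_one.1 (show (w2 W ∩ {u | G₂.Adj z u ∧ u ∉ P}).ncard = 1 by
            exact_mod_cast hc2)
          have m1 : u ∈ w2 W ∩ {u | G₂.Adj z u ∧ u ∉ P} := ⟨⟨hu.ne', allr _⟩, hu, huP⟩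
          have m2 : r ∈ w2 W ∩ {u | G₂.Adj z u ∧ u ∉ P} := ⟨⟨hr.ne', allr _⟩, hr, hrP⟩
          rw [hv] at m1 m2
          exact m1.trans m2.symm
  · obtain ⟨a2, b2⟩ := g2.lm _ ⟨z, Or.inl rfl⟩ h2
    have hc0 := cc_nonneg (w2 W ∩ {u | G₂.Adj z u ∧ u ∉ P})
    refine ⟨by nlinarith, fun hle => ?_⟩
    have hc2 : cc (w2 W ∩ {u | G₂.Adj z u ∧ u ∉ P}) = 0 := by
      by_contra h3
      have : 1 ≤ cc (w2 W ∩ {u | G₂.Adj z u ∧ u ∉ P}) := by omega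
      nlinarith
    rw [hc2] at e
    obtain ⟨b1, b3⟩ := b1 (by linarith)
    obtain ⟨b2, b4⟩ := b2 (by linarith)
    have hnz : z ∈ insert z (w2 W) → ∀ r, G₂.Adj z r → r ∉ P → r ∉ insert z (w2 W) := by
      intro _ r hr hrP hrW
      have := cc_pos (w2 W ∩ {u | G₂.Adj z u ∧ u ∉ P}) ⟨r, hrW.resolve_left hr.ne', hr, hrP⟩
      omega
    have zW : ∀ u ∈ insert z (w2 W), zmap z x u ∈ W := by
      rintro u (rfl | ⟨hu, huW⟩)
      · rw [zmap_z]; exact hx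
      · rw [zmap_ne _ _ hu]; exact huW
    constructor
    · refine ⟨Sum.inl x, hx, fun A hxA hcA => ?_⟩
      have all2 := b2.all (zmap z x ⁻¹' A) z (Or.inl rfl)
        (by rw [Set.mem_preimage, zmap_z]; exact hxA)
        (fun a ha haA b hb hab => hcA _ (zW a ha) haA _ (zW b hb)
          ((zmap_adj h _ hnz a ha b hb).2 hab))
      rintro (u | u) hu
      · exact closeL A hxA hcA b1 u hu
      · have : zmap z x u ∈ A := all2 (Or.inr ⟨u.2, hu⟩)
        rwa [zmap_ne _ _ u.2] at this
    · rintro ⟨c, hc, d, hd, hcd⟩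
      by_cases h3 : ∃ a ∈ (Sum.inl ⁻¹' W : Set V₁), ∃ b ∈ (Sum.inl ⁻¹' W : Set V₁), a ≠ b
      · obtain ⟨S, hS, hstd⟩ := b3 h3
        exact stdL S hS hstd
      · push Not at h3
        have hex : ∃ u : {w : V₂ // w ≠ z}, Sum.inr u ∈ W := by
          rcases c with c | c
          · rcases d with d | d
            · exact absurd (congrArg Sum.inl (h3 c hc d hd)) hcd
            · exact ⟨d, hd⟩
          · exact ⟨c, hc⟩
        obtain ⟨u, hu⟩ := hex
        obtain ⟨S, hS, hstd⟩ := b4 ⟨z, Or.inl rfl, u, Or.inr ⟨u.2, hu⟩, u.2.symm⟩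
        refine ⟨zmap z x '' S, ?_, t2 hk h S hstd
          (fun hz r hr hrP hrS => hnz (hS hz) r hr hrP (hS hrS))⟩
        rintro _ ⟨a, ha, rfl⟩; exact zW a (hS ha)

theorem good_comp [Fintype V₁] [Fintype V₂] [Fintype {w : V₂ // w ≠ z}] {k : ℕ} (hk : 4 ≤ k)
    (h : Hyp G₁ G₂ x y z P) (g1 : Good k G₁) (g2 : Good k G₂) :
    Good k (dhgoGraph G₁ G₂ x y z P) := by
  refine ⟨crit_comp hk h g1.crit g2.crit, ?_, ?_⟩
  · rw [rho2 k h Set.univ trivial trivial, ins_w2 Set.univ (fun _ => trivial), Set.preimage_univ, g1.tot, g2.tot]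
    ring
  · intro W hW hWu
    by_cases hx : Sum.inl x ∈ W <;> by_cases hy : Sum.inl y ∈ W
    · exact lm2 hk h g1 g2 W hWu hx hy
    · exact lm1 hk h g1 g2 W hx hy
    · rw [swap_eq h]
      exact lm1 hk h.swap g1 g2 W hy hx
    · exact lm0 hk h g1 g2 W hW hx hy

end comp

theorem good_ore {k : ℕ} (hk : 4 ≤ k) {n : ℕ} {G : SimpleGraph (Fin n)} (h : IsOreFin k G) :
    Good k G := by
  classical
  induction h with
  | complete h =>
    obtain ⟨e⟩ := h
    exact good_iso k hk _ _ e.symm (good_top k hk)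
  | comp h₁ h₂ h g1 g2 =>
    obtain ⟨x, y, z, P, hxy, hP, hPn, hRn, ⟨e⟩⟩ := h
    obtain ⟨p, hp⟩ := hPn
    obtain ⟨r, hr, hrP⟩ := hRn
    exact good_iso k hk _ _ e.symm
      (good_comp hk ⟨hxy, fun u hu => hP hu, ⟨p, hp⟩, ⟨r, hr, hrP⟩⟩ g1 g2)

end KOreAux

/-- **Lemma.** Let `k ≥ 4`, let `G` be a `k`-Ore graph, and let `W` be a proper subset of
`V(G)` with `|W| ≥ 2` and `ρ_{k,G}(W) ≤ (k+1)(k-2)`. Then `G[W]` is connected and `W` contains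
a standard set. -/
theorem kOre_low_potential_contains_standard {V : Type*} [Fintype V] [DecidableEq V] (k : ℕ)
    (hk : 4 ≤ k) (G : SimpleGraph V) [DecidableRel G.Adj] (hG : IsKOre k G)
    (W : Finset V) (hW2 : 2 ≤ W.card) (hWp : W ≠ Finset.univ)
    (hpot : potential k G W ≤ ((k : ℤ) + 1) * ((k : ℤ) - 2)) :
    (G.induce (W : Set V)).Connected ∧ ∃ S ⊆ W, IsStandardSet k G S := by
  obtain ⟨n, H, hH, ⟨e⟩⟩ := hG
  exact KOreAux.final k hk G (KOreAux.good_iso k hk _ _ e.symm (KOreAux.good_ore hk hH)) W hW2 hWp hpot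
end
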